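/- Maximum principle: let u ∈ W satisfy ∫_Ω A∇u·∇φ dx ≥ 0 for every nonnegative φ ∈ C_c^∞(Ω) (i.e., u is a supersolution of Lu = 0 in Ω), and suppose Tu ≥ 0 σ-almost everywhere on Γ. Then u ≥ 0 almost everywhere in Ω. -/

import Mathlib

open MeasureTheory Metric Set Filter
open scoped ENNReal NNReal Topology

noncomputable section

/-- Euclidean space `ℝⁿ`. -/
abbrev Euc (n : ℕ) := EuclideanSpace ℝ (Fin n)

/-- `Γ ⊆ ℝⁿ` is `d`-Ahlfors regular with constant `C₀`. -/
def AhlforsRegular (n : ℕ) (d C₀ : ℝ) (Γ : Set (Euc n)) : Prop :=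
  ∀ x ∈ Γ, ∀ r : ℝ, 0 < r →
    ENNReal.ofReal (C₀⁻¹ * r ^ d) ≤ μH[d] (Γ ∩ ball x r) ∧
      μH[d] (Γ ∩ ball x r) ≤ ENNReal.ofReal (C₀ * r ^ d)

/-- The weight `w(x) = dist(x, Γ) ^ (d + 1 - n)`. -/
def weightW (n : ℕ) (d : ℝ) (Γ : Set (Euc n)) (x : Euc n) : ℝ :=
  infDist x Γ ^ (d + 1 - (n : ℝ))

/-- The measure `m` with density `w` with respect to Lebesgue measure. -/
def measW (n : ℕ) (d : ℝ) (Γ : Set (Euc n)) : Measure (Euc n) :=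
  volume.withDensity fun x => ENNReal.ofReal (weightW n d Γ x)

/-- `v` is a distributional gradient of `u` on the open set `E`: for every smooth
compactly supported test function `φ` with support in `E`, `∫_E u ∇φ = -∫_E φ v`. -/
def IsDistribGradOn {n : ℕ} (u : Euc n → ℝ) (v : Euc n → Euc n) (E : Set (Euc n)) : Prop :=
  ∀ φ : Euc n → ℝ, ContDiff ℝ (⊤ : ℕ∞) φ → HasCompactSupport φ → tsupport φ ⊆ E →
    ∫ x in E, u x • gradient φ x = -∫ x in E, φ x • v x

/-- The averages of `u` over small balls centered at `x` converge to `t`. -/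
def HasTraceAt {n : ℕ} (u : Euc n → ℝ) (x : Euc n) (t : ℝ) : Prop :=
  Tendsto (fun ρ : ℝ => ⨍ y in ball x ρ, u y) (𝓝[>] (0 : ℝ)) (𝓝 t)

/-- `u` belongs to the weighted Sobolev space `W = Ẇ^{1,2}_w(Ω)`, `Ω = Γᶜ`, with
distributional gradient `v` on `Ω` lying in `L²(Ω, m)`. -/
structure MemW (n : ℕ) (d : ℝ) (Γ : Set (Euc n)) (u : Euc n → ℝ) (v : Euc n → Euc n) :
    Prop where
  locInt : LocallyIntegrableOn u Γᶜ volume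
  gradLocInt : LocallyIntegrableOn v Γᶜ volume
  isGrad : IsDistribGradOn u v Γᶜ
  l2 : ∫⁻ x in Γᶜ, ENNReal.ofReal (‖v x‖ ^ 2) ∂(measW n d Γ) < ⊤

/-- `u` belongs to the local space `W_r(E)`: `u ∈ L¹_loc(E)` and `φ u` (extended by `0`)
belongs to `W` for every smooth compactly supported `φ` with support in `E`. -/
def MemWrOn (n : ℕ) (d : ℝ) (Γ : Set (Euc n)) (E : Set (Euc n)) (u : Euc n → ℝ) : Prop :=
  LocallyIntegrableOn u E volume ∧
    ∀ φ : Euc n → ℝ, ContDiff ℝ (⊤ : ℕ∞) φ → HasCompactSupport φ → tsupport φ ⊆ E →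
      ∃ vφ : Euc n → Euc n, MemW n d Γ (fun x => φ x * u x) vφ

/-- Degenerate ellipticity and boundedness conditions for the matrix `A`. -/
def EllipticOn (n : ℕ) (d : ℝ) (Γ : Set (Euc n)) (A : Euc n → Euc n →L[ℝ] Euc n)
    (C₁ : ℝ) : Prop :=
  ∀ x, x ∉ Γ →
    (∀ ξ ζ : Euc n, |∑ i, A x ξ i * ζ i| ≤ C₁ * weightW n d Γ x * ‖ξ‖ * ‖ζ‖) ∧
      ∀ ξ : Euc n, C₁⁻¹ * weightW n d Γ x * ‖ξ‖ ^ 2 ≤ ∑ i, A x ξ i * ξ i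

/-- `u`, with gradient `v`, is a weak subsolution of `- div A ∇u = 0` on `U ⊆ Ω = Γᶜ`. -/
def SubsolOn {n : ℕ} (Γ : Set (Euc n)) (A : Euc n → Euc n →L[ℝ] Euc n)
    (v : Euc n → Euc n) (U : Set (Euc n)) : Prop :=
  ∀ φ : Euc n → ℝ, ContDiff ℝ (⊤ : ℕ∞) φ → HasCompactSupport φ → tsupport φ ⊆ U →
    (∀ x, 0 ≤ φ x) → ∫ x in Γᶜ, ∑ i, A x (v x) i * gradient φ x i ≤ 0

/-- `u`, with gradient `v`, is a weak supersolution of `- div A ∇u = 0` on `U ⊆ Ω = Γᶜ`. -/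
def SupersolOn {n : ℕ} (Γ : Set (Euc n)) (A : Euc n → Euc n →L[ℝ] Euc n)
    (v : Euc n → Euc n) (U : Set (Euc n)) : Prop :=
  ∀ φ : Euc n → ℝ, ContDiff ℝ (⊤ : ℕ∞) φ → HasCompactSupport φ → tsupport φ ⊆ U →
    (∀ x, 0 ≤ φ x) → 0 ≤ ∫ x in Γᶜ, ∑ i, A x (v x) i * gradient φ x i

/-- `u`, with gradient `v`, is a weak solution of `- div A ∇u = 0` on `U ⊆ Ω = Γᶜ`. -/
def SolOn {n : ℕ} (Γ : Set (Euc n)) (A : Euc n → Euc n →L[ℝ] Euc n)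
    (v : Euc n → Euc n) (U : Set (Euc n)) : Prop :=
  ∀ φ : Euc n → ℝ, ContDiff ℝ (⊤ : ℕ∞) φ → HasCompactSupport φ → tsupport φ ⊆ U →
    ∫ x in Γᶜ, ∑ i, A x (v x) i * gradient φ x i = 0

/-! Since `d < n - 1`, the inverse distance `δ⁻¹` is locally integrable, so `Γ` is removable: the
gradient `v` of `u` on `Ω` is its distributional gradient on all of `ℝⁿ`. A Hardy inequality along
rays through a point `y ∈ Γ` bounds `∫ |u - Tu(y)|² |x - y|^{-n-1} dx` by
`4 ∫ |v|² |x - y|^{1-n} dx`. On integrating over `y` against `σ`, Ahlfors regularity turns the Riesz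
kernels into powers of `δ` and gives Hardy's inequality `∫ F(u)² δ⁻² dm ≲ ∫ |v|² dm` for every
Lipschitz `F` that vanishes on `[0, ∞)`. For bounded smooth nonincreasing `F ≥ 0`, the supersolution
inequality can be tested with `F(u)` times cutoffs `η_k` supported off `Γ` with `|∇η_k| ≲ δ⁻¹`;
Hardy's inequality lets `k → ∞`, so that `∫ F'(u) A∇u·∇u ≥ 0`, whence `∇(F(u)) = 0`. Thus `F(u)` is
constant, and the nonnegative trace forces the constant to be zero. -/

open scoped Convolution Gradient ContDiff
open ContinuousLinearMap (lsmul)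

/-! ### Gradients -/

section Gradient

variable {F : Type*} [NormedAddCommGroup F] [InnerProductSpace ℝ F] [CompleteSpace F]
  {f g : F → ℝ} {f' g' x : F}

lemma norm_gradient (f : F → ℝ) (x : F) : ‖∇ f x‖ = ‖fderiv ℝ f x‖ :=
  (InnerProductSpace.toDual ℝ F).symm.norm_map _

lemma continuous_gradient {m : WithTop ℕ∞} (hf : ContDiff ℝ m f) (hm : m ≠ 0) :
    Continuous (∇ f) :=
  (InnerProductSpace.toDual ℝ F).symm.continuous.comp (hf.continuous_fderiv hm)

lemma hasCompactSupport_gradient (hf : HasCompactSupport f) : HasCompactSupport (∇ f) :=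
  (hf.fderiv ℝ).comp_left (map_zero (InnerProductSpace.toDual ℝ F).symm)

lemma gradient_eq_zero_of_notMem_tsupport (hx : x ∉ tsupport f) : ∇ f x = 0 := by
  rw [gradient, fderiv_of_notMem_tsupport ℝ hx, map_zero]

lemma hasGradientAt_of_hasFDerivAt_of_inner {L : F →L[ℝ] ℝ} (h : HasFDerivAt f L x)
    (hL : ∀ y, L y = inner ℝ f' y) : HasGradientAt f f' x := by
  have : InnerProductSpace.toDual ℝ F f' = L := ContinuousLinearMap.ext fun y => (hL y).symm
  rwa [hasGradientAt_iff_hasFDerivAt, this]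

lemma hasGradientAt_mul (hf : HasGradientAt f f' x) (hg : HasGradientAt g g' x) :
    HasGradientAt (fun y => f y * g y) (f x • g' + g x • f') x :=
  hasGradientAt_of_hasFDerivAt_of_inner (hf.hasFDerivAt.mul hg.hasFDerivAt) fun y => by
    simp [inner_add_left, real_inner_smul_left]

lemma hasGradientAt_comp {h : ℝ → ℝ} {h' : ℝ} (hh : HasDerivAt h h' (f x))
    (hf : HasGradientAt f f' x) : HasGradientAt (fun y => h (f y)) (h' • f') x :=
  hasGradientAt_of_hasFDerivAt_of_inner (hh.comp_hasFDerivAt x hf.hasFDerivAt) fun y => by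
    simp [real_inner_smul_left]

end Gradient

/-! ### Mollification -/

section Mollification

variable {E : Type*} [NormedAddCommGroup E] [InnerProductSpace ℝ E] [FiniteDimensional ℝ E]
  [MeasurableSpace E] [BorelSpace E]
  {G : Type*} [NormedAddCommGroup G] [NormedSpace ℝ G] {f g : E → G} {x : E}

/-- The bump function supported in the ball of radius `1 / (j + 1)` whose normalization is the
`j`-th mollifier. -/
def mollifierBump (E : Type*) [NormedAddCommGroup E] (j : ℕ) : ContDiffBump (0 : E) where
  rIn := 1 / (2 * ((j : ℝ) + 1))
  rOut := 1 / ((j : ℝ) + 1)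
  rIn_pos := by positivity
  rIn_lt_rOut := by gcongr; linarith [show (0 : ℝ) ≤ j from j.cast_nonneg]

/-- The standard mollifier: a smooth probability density supported in the ball of radius
`1 / (j + 1)` around the origin. -/
def mollifier (j : ℕ) : E → ℝ := (mollifierBump E j).normed volume

/-- The mollification of `f` at scale `1 / (j + 1)`. -/
def mollify (j : ℕ) (f : E → G) : E → G := mollifier j ⋆[lsmul ℝ ℝ, volume] f

lemma mollify_apply (j : ℕ) (f : E → G) (x : E) :
    mollify j f x = ∫ t, mollifier j t • f (x - t) := rfl

lemma mollify_apply_swap (j : ℕ) (f : E → G) (x : E) :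
    mollify j f x = ∫ t, mollifier j (x - t) • f t := convolution_eq_swap _

lemma mollifier_nonneg (j : ℕ) (x : E) : 0 ≤ mollifier j x :=
  (mollifierBump E j).nonneg_normed x

lemma contDiff_mollifier (j : ℕ) : ContDiff ℝ ∞ (mollifier j : E → ℝ) :=
  (mollifierBump E j).contDiff_normed

lemma hasCompactSupport_mollifier (j : ℕ) : HasCompactSupport (mollifier j : E → ℝ) :=
  (mollifierBump E j).hasCompactSupport_normed

lemma support_mollifier (j : ℕ) :
    Function.support (mollifier j : E → ℝ) = ball 0 (1 / ((j : ℝ) + 1)) :=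
  (mollifierBump E j).support_normed_eq

lemma mollifier_eq_zero {j : ℕ} (hx : 1 / ((j : ℝ) + 1) ≤ ‖x‖) : mollifier j x = 0 := by
  rw [← Function.notMem_support, support_mollifier, mem_ball_zero_iff]
  exact hx.not_gt

lemma tsupport_mollifier_sub_subset (j : ℕ) (x : E) :
    tsupport (fun t => mollifier j (x - t)) ⊆ closedBall x (1 / ((j : ℝ) + 1)) := by
  refine closure_minimal (fun t ht => ?_) isClosed_closedBall
  by_contra hfar
  rw [mem_closedBall, not_le, dist_comm, dist_eq_norm] at hfar
  exact ht (mollifier_eq_zero hfar.le)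

lemma lintegral_mollifier (j : ℕ) : ∫⁻ x : E, ENNReal.ofReal (mollifier j x) = 1 := by
  have hint : ∫ x : E, mollifier j x = 1 := (mollifierBump E j).integral_normed
  have hintegrable : Integrable (mollifier j : E → ℝ) := (mollifierBump E j).integrable_normed
  rw [← ofReal_integral_eq_lintegral_ofReal hintegrable
    (Eventually.of_forall (mollifier_nonneg j)), hint, ENNReal.ofReal_one]

lemma ae_tendsto_mollify [CompleteSpace G] (hf : LocallyIntegrable f volume) :
    ∀ᵐ x, Tendsto (fun j => mollify j f x) atTop (𝓝 (f x)) := by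
  refine ContDiffBump.ae_convolution_tendsto_right_of_locallyIntegrable (K := 2)
    tendsto_one_div_add_atTop_nhds_zero_nat (Eventually.of_forall fun j => le_of_eq ?_) hf
  change 1 / ((j : ℝ) + 1) = 2 * (1 / (2 * ((j : ℝ) + 1)))
  field_simp

lemma contDiff_mollify (j : ℕ) (hf : LocallyIntegrable f volume) : ContDiff ℝ ∞ (mollify j f) :=
  (hasCompactSupport_mollifier j).contDiff_convolution_left _ (contDiff_mollifier j) hf

lemma differentiable_mollify (j : ℕ) (hf : LocallyIntegrable f volume) :
    Differentiable ℝ (mollify j f) :=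
  (contDiff_mollify j hf).differentiable (by simp)

lemma fderiv_mollify_apply (j : ℕ) {f : E → ℝ} (hf : LocallyIntegrable f volume) (x y : E) :
    fderiv ℝ (mollify j f) x y = ∫ t, fderiv ℝ (mollifier j) (x - t) y * f t := by
  have hmoll : ContDiff ℝ 1 (mollifier j : E → ℝ) :=
    (contDiff_mollifier j).of_le (by exact_mod_cast le_top)
  have hderiv := (hasCompactSupport_mollifier j).hasFDerivAt_convolution_left (lsmul ℝ ℝ)
    (μ := volume) hmoll hf x
  have hexists := ((hasCompactSupport_mollifier (E := E) j).fderiv ℝ).convolutionExists_left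
    (ContinuousLinearMap.precompL E (lsmul ℝ ℝ)) (μ := volume)
    (hmoll.continuous_fderiv one_ne_zero) hf x
  rw [mollify, hderiv.fderiv, convolution_def, ContinuousLinearMap.integral_apply hexists,
    ← integral_sub_left_eq_self _ volume x]
  simp only [sub_sub_cancel, ContinuousLinearMap.precompL_apply, ContinuousLinearMap.lsmul_apply,
    smul_eq_mul]

lemma integrable_mollifier_smul (j : ℕ) (hf : LocallyIntegrable f volume) (x : E) :
    Integrable fun t => mollifier j t • f (x - t) :=
  (hasCompactSupport_mollifier j).convolutionExists_left (lsmul ℝ ℝ)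
    (contDiff_mollifier j).continuous hf x

lemma mollify_sub (j : ℕ) (hf : LocallyIntegrable f volume) (hg : LocallyIntegrable g volume) :
    mollify j (f - g) = mollify j f - mollify j g := by
  ext x
  simp only [mollify_apply, Pi.sub_apply, smul_sub]
  exact integral_sub (integrable_mollifier_smul j hf x) (integrable_mollifier_smul j hg x)

lemma mollify_congr {j : ℕ} (h : EqOn f g (ball x (1 / ((j : ℝ) + 1)))) :
    mollify j f x = mollify j g x := by
  rw [mollify_apply_swap, mollify_apply_swap]
  congr 1 with t
  rcases lt_or_ge (dist t x) (1 / ((j : ℝ) + 1)) with ht | ht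
  · rw [h (mem_ball.2 ht)]
  · rw [mollifier_eq_zero (by rwa [← dist_eq_norm, dist_comm]), zero_smul, zero_smul]

lemma mollify_eq_of_forall_mem_ball [CompleteSpace G] {j : ℕ} {c : G}
    (h : ∀ y ∈ ball x (1 / ((j : ℝ) + 1)), f y = c) : mollify j f x = c := by
  have hx : f x = c := h x (mem_ball_self (by positivity))
  rw [← hx] at h ⊢
  exact (mollifierBump E j).normed_convolution_eq_right h

lemma dist_mollify_le [CompleteSpace G] {j : ℕ} {ε : ℝ} (hf : AEStronglyMeasurable f volume)
    (h : ∀ y ∈ ball x (1 / ((j : ℝ) + 1)), dist (f y) (f x) ≤ ε) :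
    dist (mollify j f x) (f x) ≤ ε :=
  (mollifierBump E j).dist_normed_convolution_le hf h

lemma lipschitzWith_mollify (j : ℕ) {f : E → ℝ} {K : ℝ≥0} (hf : LipschitzWith K f) :
    LipschitzWith K (mollify j f) := by
  refine LipschitzWith.of_dist_le_mul fun x y => ?_
  have hint := integrable_mollifier_smul j hf.continuous.locallyIntegrable
  have hint_mollifier : Integrable (mollifier j : E → ℝ) := (mollifierBump E j).integrable_normed
  calc dist (mollify j f x) (mollify j f y)
      = ‖∫ t, mollifier j t • (f (x - t) - f (y - t))‖ := by
        simp only [smul_sub]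
        rw [integral_sub (hint x) (hint y), dist_eq_norm]; rfl
    _ ≤ ∫ t, mollifier j t * (K * dist x y) := by
        refine norm_integral_le_of_norm_le (hint_mollifier.mul_const _)
          (Eventually.of_forall fun t => ?_)
        rw [norm_smul, Real.norm_of_nonneg (mollifier_nonneg j t), ← dist_eq_norm]
        gcongr
        · exact mollifier_nonneg j t
        · simpa using hf.dist_le_mul (x - t) (y - t)
    _ = K * dist x y := by
        rw [integral_mul_const, show ∫ t : E, mollifier j t = 1 from
          (mollifierBump E j).integral_normed, one_mul]

/-! ### Convergence of mollifications in `L^p` -/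

lemma rpow_lintegral_le_lintegral_rpow {α : Type*} [MeasurableSpace α] {μ : Measure α}
    [IsProbabilityMeasure μ] {h : α → ℝ≥0∞} (hh : AEMeasurable h μ) {p : ℝ} (hp : 1 ≤ p) :
    (∫⁻ a, h a ∂μ) ^ p ≤ ∫⁻ a, h a ^ p ∂μ := by
  have hle := eLpNorm'_le_eLpNorm'_of_exponent_le one_pos hp μ hh.aestronglyMeasurable
  simp only [eLpNorm', enorm_eq_self, ENNReal.rpow_one, one_div, inv_one] at hle
  rwa [ENNReal.le_rpow_inv_iff (one_pos.trans_le hp)] at hle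

lemma lintegral_mollifier_mul (j : ℕ) {h : E → ℝ≥0∞} (hh : AEMeasurable h volume) :
    ∫⁻ x, ∫⁻ t, ENNReal.ofReal (mollifier j t) * h (x - t) = ∫⁻ x, h x := by
  have hmeas : Measurable fun t : E => ENNReal.ofReal (mollifier j t) :=
    (contDiff_mollifier j).continuous.measurable.ennreal_ofReal
  rw [lintegral_lintegral_swap]
  · simp_rw [lintegral_const_mul' _ _ ENNReal.ofReal_ne_top, lintegral_sub_right_eq_self h]
    rw [lintegral_mul_const _ hmeas, lintegral_mollifier, one_mul]
  · exact (hmeas.comp measurable_snd).aemeasurable.mul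
      (hh.comp_quasiMeasurePreserving
        (quasiMeasurePreserving_sub_of_right_invariant volume volume))

lemma enorm_mollify_rpow_le (j : ℕ) (hf : AEStronglyMeasurable f volume) (x : E) {p : ℝ}
    (hp : 1 ≤ p) :
    ‖mollify j f x‖ₑ ^ p ≤ ∫⁻ t, ENNReal.ofReal (mollifier j t) * ‖f (x - t)‖ₑ ^ p := by
  have hmeas : Measurable fun t : E => ENNReal.ofReal (mollifier j t) :=
    (contDiff_mollifier j).continuous.measurable.ennreal_ofReal
  have hfm : AEMeasurable (fun t => ‖f (x - t)‖ₑ) volume :=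
    (hf.comp_quasiMeasurePreserving
      (quasiMeasurePreserving_sub_left_of_right_invariant volume x)).enorm
  set μ := (volume : Measure E).withDensity fun t => ENNReal.ofReal (mollifier j t) with hμ
  have hprob : IsProbabilityMeasure μ := ⟨by
    rw [hμ, withDensity_apply _ .univ, setLIntegral_univ, lintegral_mollifier]⟩
  have hjensen := rpow_lintegral_le_lintegral_rpow (μ := μ)
    (hfm.mono_ac (withDensity_absolutelyContinuous _ _)) hp
  rw [lintegral_withDensity_eq_lintegral_mul₀ hmeas.aemeasurable hfm,
    lintegral_withDensity_eq_lintegral_mul₀ hmeas.aemeasurable (hfm.pow_const p)] at hjensen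
  refine le_trans (ENNReal.rpow_le_rpow ?_ (zero_le_one.trans hp)) hjensen
  rw [mollify_apply]
  refine (enorm_integral_le_lintegral_enorm _).trans_eq (lintegral_congr fun t => ?_)
  rw [enorm_smul, Real.enorm_of_nonneg (mollifier_nonneg j t), Pi.mul_apply]

lemma eLpNorm_mollify_le (j : ℕ) (hf : AEStronglyMeasurable f volume) {p : ℝ≥0∞} (hp : 1 ≤ p)
    (hp_top : p ≠ ⊤) : eLpNorm (mollify j f) p volume ≤ eLpNorm f p volume := by
  have hp_zero : p ≠ 0 := (one_pos.trans_le hp).ne'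
  have hp_real : 1 ≤ p.toReal := by
    rwa [← ENNReal.ofReal_le_iff_le_toReal hp_top, ENNReal.ofReal_one]
  rw [eLpNorm_eq_lintegral_rpow_enorm_toReal hp_zero hp_top,
    eLpNorm_eq_lintegral_rpow_enorm_toReal hp_zero hp_top]
  gcongr ?_ ^ _
  calc ∫⁻ x, ‖mollify j f x‖ₑ ^ p.toReal
      ≤ ∫⁻ x, ∫⁻ t, ENNReal.ofReal (mollifier j t) * ‖f (x - t)‖ₑ ^ p.toReal :=
        lintegral_mono fun x => enorm_mollify_rpow_le j hf x hp_real
    _ = ∫⁻ x, ‖f x‖ₑ ^ p.toReal := lintegral_mollifier_mul j (hf.enorm.pow_const _)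

variable [CompleteSpace G]

lemma support_mollify_subset (j : ℕ) (f : E → G) :
    Function.support (mollify j f) ⊆ cthickening 1 (tsupport f) := by
  intro x hx
  by_contra hfar
  refine hx (mollify_eq_of_forall_mem_ball fun y hy => ?_)
  by_contra hy_supp
  refine hfar (mem_cthickening_of_dist_le x y 1 _ (subset_tsupport f hy_supp) ?_)
  rw [dist_comm]
  exact hy.le.trans (div_le_one_of_le₀ (by simp) (by positivity))

lemma tendsto_eLpNorm_mollify_sub_of_hasCompactSupport (hf : Continuous f)
    (hfc : HasCompactSupport f) {p : ℝ≥0∞} (hp_top : p ≠ ⊤) :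
    Tendsto (fun j => eLpNorm (mollify j f - f) p volume) atTop (𝓝 0) := by
  set K := cthickening 1 (tsupport f)
  have hK : IsCompact K := hfc.isCompact.cthickening
  have hK_lt : volume K ^ (1 / p.toReal) ≠ ⊤ :=
    ENNReal.rpow_ne_top_of_nonneg (by positivity) hK.measure_lt_top.ne
  have hbound : ∀ ε > 0, ∀ᶠ j in atTop,
      eLpNorm (mollify j f - f) p volume ≤ ENNReal.ofReal ε * volume K ^ (1 / p.toReal) := by
    intro ε hε
    obtain ⟨δ, hδ, hfδ⟩ :=
      Metric.uniformContinuous_iff.1 (hfc.uniformContinuous_of_continuous hf) ε hε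
    filter_upwards [(tendsto_one_div_add_atTop_nhds_zero_nat (𝕜 := ℝ)).eventually_lt_const hδ]
      with j hj
    refine eLpNorm_sub_le_of_dist_bdd volume hp_top hK.measurableSet hε.le (fun x => ?_)
      (support_mollify_subset j f) ((subset_tsupport f).trans (self_subset_cthickening _))
    exact dist_mollify_le hf.aestronglyMeasurable fun y hy => (hfδ ((mem_ball.1 hy).trans hj)).le
  rw [ENNReal.tendsto_nhds_zero]
  intro ε hε
  obtain ⟨η, hη, hηε⟩ : ∃ η > 0, ENNReal.ofReal η * volume K ^ (1 / p.toReal) < ε := by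
    have hlim : Tendsto (fun η => ENNReal.ofReal η * volume K ^ (1 / p.toReal)) (𝓝[>] 0) (𝓝 0) := by
      have h := ENNReal.Tendsto.mul_const (ENNReal.tendsto_ofReal (tendsto_id (x := 𝓝 (0 : ℝ))))
        (b := volume K ^ (1 / p.toReal)) (Or.inr hK_lt)
      simp only [id, ENNReal.ofReal_zero, zero_mul] at h
      exact h.mono_left nhdsWithin_le_nhds
    obtain ⟨η, hlt, hpos⟩ := ((hlim.eventually_lt_const hε).and self_mem_nhdsWithin).exists
    exact ⟨η, hpos, hlt⟩
  exact (hbound η hη).mono fun j hj => hj.trans hηε.le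

lemma tendsto_eLpNorm_mollify_sub {p : ℝ≥0∞} (hp : 1 ≤ p) (hp_top : p ≠ ⊤)
    (hf : MemLp f p volume) :
    Tendsto (fun j => eLpNorm (mollify j f - f) p volume) atTop (𝓝 0) := by
  rw [ENNReal.tendsto_nhds_zero]
  intro ε hε
  have hε3 : ε / 3 ≠ 0 := (ENNReal.div_pos hε.ne' (by simp)).ne'
  obtain ⟨g, hgc, hfg, hg, hg_mem⟩ := hf.exists_hasCompactSupport_eLpNorm_sub_le hp_top hε3
  have hloc_f := hf.locallyIntegrable hp
  have hloc_g := hg_mem.locallyIntegrable hp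
  filter_upwards [ENNReal.tendsto_nhds_zero.1
    (tendsto_eLpNorm_mollify_sub_of_hasCompactSupport hg hgc hp_top) _ (pos_iff_ne_zero.2 hε3)]
    with j hj
  have hmeas_f := (contDiff_mollify j hloc_f).continuous.aestronglyMeasurable (μ := volume)
  have hmeas_g := (contDiff_mollify j hloc_g).continuous.aestronglyMeasurable (μ := volume)
  have hfg_meas := hf.1.sub hg_mem.1
  calc eLpNorm (mollify j f - f) p volume
      = eLpNorm (mollify j (f - g) + (mollify j g - g) - (f - g)) p volume := by
        rw [mollify_sub j hloc_f hloc_g]; congr 1; abel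
    _ ≤ eLpNorm (mollify j (f - g)) p volume + eLpNorm (mollify j g - g) p volume
          + eLpNorm (f - g) p volume := by
        rw [mollify_sub j hloc_f hloc_g]
        refine (eLpNorm_sub_le ((hmeas_f.sub hmeas_g).add (hmeas_g.sub hg_mem.1)) hfg_meas
          hp).trans ?_
        gcongr
        exact eLpNorm_add_le (hmeas_f.sub hmeas_g) (hmeas_g.sub hg_mem.1) hp
    _ ≤ ε / 3 + ε / 3 + ε / 3 := by
        gcongr
        exact (eLpNorm_mollify_le j hfg_meas hp hp_top).trans hfg
    _ = ε := ENNReal.add_thirds ε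

end Mollification

/-! ### Local `L^p` spaces -/

section LocallyMemLp

lemma tendsto_eLpNorm_zero_of_dominated {α G : Type*} [MeasurableSpace α] [NormedAddCommGroup G]
    {μ : Measure α} {f : ℕ → α → G} {bound : α → ℝ} {p : ℝ≥0∞} (hp_zero : p ≠ 0) (hp_top : p ≠ ⊤)
    (hf : ∀ j, AEStronglyMeasurable (f j) μ) (hbound : MemLp bound p μ)
    (hle : ∀ j, ∀ᵐ x ∂μ, ‖f j x‖ ≤ bound x)
    (hlim : ∀ᵐ x ∂μ, Tendsto (fun j => f j x) atTop (𝓝 0)) :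
    Tendsto (fun j => eLpNorm (f j) p μ) atTop (𝓝 0) := by
  have hp_pos : 0 < p.toReal := ENNReal.toReal_pos hp_zero hp_top
  have hlintegral : Tendsto (fun j => ∫⁻ x, ‖f j x‖ₑ ^ p.toReal ∂μ) atTop (𝓝 0) := by
    rw [← lintegral_zero (μ := μ)]
    refine tendsto_lintegral_of_dominated_convergence' (fun x => ‖bound x‖ₑ ^ p.toReal)
      (fun j => (hf j).enorm.pow_const _) (fun j => ?_)
      ((eLpNorm_lt_top_iff_lintegral_rpow_enorm_lt_top hp_zero hp_top).1 hbound.2).ne ?_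
    · filter_upwards [hle j] with x hx
      gcongr
      exact enorm_le_iff_norm_le.2 (hx.trans (Real.le_norm_self _))
    · filter_upwards [hlim] with x hx
      simpa [hp_pos] using (hx.enorm.ennrpow_const p.toReal)
  simp_rw [eLpNorm_eq_lintegral_rpow_enorm_toReal hp_zero hp_top]
  simpa [hp_pos] using hlintegral.ennrpow_const (1 / p.toReal)

variable {E : Type*} [NormedAddCommGroup E] [MeasureSpace E]
  {G : Type*} [NormedAddCommGroup G] {f : E → G} {p : ℝ≥0∞}

/-- `f` belongs to `L^p` on every ball centred at the origin. -/
def LocallyMemLp (f : E → G) (p : ℝ≥0∞) : Prop :=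
  ∀ R : ℝ, MemLp f p (volume.restrict (ball 0 R))

namespace LocallyMemLp

lemma aestronglyMeasurable (hf : LocallyMemLp f p) : AEStronglyMeasurable f volume := by
  rw [← Measure.restrict_univ (μ := volume), ← iUnion_ball_nat 0]
  exact aestronglyMeasurable_iUnion_iff.2 fun R => (hf R).1

variable [BorelSpace E]

lemma memLp_smul_of_hasCompactSupport [NormedSpace ℝ G] (hf : LocallyMemLp f p) {g : E → ℝ}
    (hg : Continuous g) (hgc : HasCompactSupport g) : MemLp (fun x => g x • f x) p volume := by
  obtain ⟨R, hR⟩ := hgc.isCompact.isBounded.subset_ball 0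
  obtain ⟨B, hB⟩ := hgc.exists_bound_of_continuous hg
  refine ((memLp_indicator_iff_restrict measurableSet_ball).2 (hf R)).of_le_mul (c := B)
    (hg.aestronglyMeasurable.smul hf.aestronglyMeasurable) (Eventually.of_forall fun x => ?_)
  by_cases hx : x ∈ ball (0 : E) R
  · rw [indicator_of_mem hx, norm_smul]
    gcongr
    exact hB x
  · rw [image_eq_zero_of_notMem_tsupport fun h => hx (hR h), indicator_of_notMem hx]
    simp

variable [IsLocallyFiniteMeasure (volume : Measure E)] [ProperSpace E]

lemma mono_exponent {q : ℝ≥0∞} (hf : LocallyMemLp f q) (hpq : p ≤ q) : LocallyMemLp f p := by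
  intro R
  have : IsFiniteMeasure (volume.restrict (ball (0 : E) R)) := ⟨by simpa using measure_ball_lt_top⟩
  exact (hf R).mono_exponent hpq

lemma locallyIntegrable (hf : LocallyMemLp f p) (hp : 1 ≤ p) : LocallyIntegrable f volume := by
  intro x
  refine ⟨ball 0 (‖x‖ + 1), isOpen_ball.mem_nhds (by simp), ?_⟩
  have : IsFiniteMeasure (volume.restrict (ball (0 : E) (‖x‖ + 1))) :=
    ⟨by simpa using measure_ball_lt_top⟩
  exact (hf _).integrable hp

end LocallyMemLp

lemma tendsto_eLpNorm_restrict_mollify_sub {E : Type*} [NormedAddCommGroup E]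
    [InnerProductSpace ℝ E] [FiniteDimensional ℝ E] [MeasurableSpace E] [BorelSpace E]
    [NormedSpace ℝ G] [CompleteSpace G] {f : E → G} (hf : LocallyMemLp f p) (hp : 1 ≤ p)
    (hp_top : p ≠ ⊤) (R : ℝ) :
    Tendsto (fun j => eLpNorm (mollify j f - f) p (volume.restrict (ball 0 R))) atTop (𝓝 0) := by
  set g := (ball (0 : E) (R + 1)).indicator f
  have hg_mem : MemLp g p volume := (memLp_indicator_iff_restrict measurableSet_ball).2 (hf _)
  refine tendsto_of_tendsto_of_tendsto_of_le_of_le tendsto_const_nhds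
    (tendsto_eLpNorm_mollify_sub hp hp_top hg_mem) (fun _ => zero_le) fun j => ?_
  have heq : EqOn (mollify j f - f) (mollify j g - g) (ball 0 R) := by
    intro x hx
    rw [mem_ball_zero_iff] at hx
    have hx_eq : f x = g x := (indicator_of_mem (by rw [mem_ball_zero_iff]; linarith) f).symm
    have hmollify_eq : mollify j f x = mollify j g x := by
      refine mollify_congr fun y hy => (indicator_of_mem ?_ f).symm
      have hj : 1 / ((j : ℝ) + 1) ≤ 1 := div_le_one_of_le₀ (by simp) (by positivity)
      rw [mem_ball, dist_eq_norm] at hy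
      rw [mem_ball_zero_iff]
      linarith [norm_le_norm_sub_add y x]
    rw [Pi.sub_apply, Pi.sub_apply, hx_eq, hmollify_eq]
  rw [eLpNorm_congr_ae ((ae_restrict_mem measurableSet_ball).mono heq)]
  exact eLpNorm_mono_measure _ Measure.restrict_le_self

end LocallyMemLp

/-! ### Weak gradients -/

section WeakGradient

variable {n : ℕ} {u : Euc n → ℝ} {v : Euc n → Euc n} {U : Set (Euc n)}

lemma isDistribGradOn_iff_integral :
    IsDistribGradOn u v U ↔ ∀ φ : Euc n → ℝ, ContDiff ℝ ∞ φ → HasCompactSupport φ →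
      tsupport φ ⊆ U → ∫ x, u x • ∇ φ x = -∫ x, φ x • v x := by
  refine forall₄_congr fun φ _ _ hφU => ?_
  have hnotMem : ∀ x, x ∉ U → x ∉ tsupport φ := fun x hx h => hx (hφU h)
  rw [setIntegral_eq_integral_of_forall_compl_eq_zero fun x hx => by
      rw [gradient_eq_zero_of_notMem_tsupport (hnotMem x hx), smul_zero],
    setIntegral_eq_integral_of_forall_compl_eq_zero fun x hx => by
      rw [image_eq_zero_of_notMem_tsupport (hnotMem x hx), zero_smul]]

lemma hasGradientAt_mollify (j : ℕ) (hu : LocallyIntegrable u volume) (h : IsDistribGradOn u v U)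
    {x : Euc n} (hx : closedBall x (1 / ((j : ℝ) + 1)) ⊆ U) :
    HasGradientAt (mollify j u) (mollify j v x) x := by
  have hmoll := contDiff_mollifier (E := Euc n) j
  set φ : Euc n → ℝ := fun t => mollifier j (x - t)
  have hφ : ContDiff ℝ ∞ φ := hmoll.comp (contDiff_const.sub contDiff_id)
  have hφ_supp := tsupport_mollifier_sub_subset j x
  have hφ_cpt : HasCompactSupport φ :=
    (isCompact_closedBall x _).of_isClosed_subset (isClosed_tsupport _) hφ_supp
  have hφ_grad : ∀ y t, fderiv ℝ (mollifier j) (x - t) y = -inner ℝ (∇ φ t) y := fun y t => by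
    have hcomp : HasFDerivAt φ (-fderiv ℝ (mollifier j) (x - t)) t :=
      ((hmoll.differentiable (by simp) (x - t)).hasFDerivAt.comp t
        ((hasFDerivAt_id t).const_sub x)).congr_fderiv (by ext; simp)
    rw [inner_gradient_left, hcomp.fderiv, neg_apply, neg_neg]
  have hint : Integrable fun t => u t • ∇ φ t :=
    hu.integrable_smul_right_of_hasCompactSupport (continuous_gradient hφ (by simp))
      (hasCompactSupport_gradient hφ_cpt)
  refine hasGradientAt_of_hasFDerivAt_of_inner (differentiable_mollify j hu x).hasFDerivAt
    fun y => ?_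
  calc fderiv ℝ (mollify j u) x y = inner ℝ (-∫ t, u t • ∇ φ t) y := by
        rw [fderiv_mollify_apply j hu, inner_neg_left, real_inner_comm, ← integral_inner hint,
          ← integral_neg]
        congr 1 with t
        rw [hφ_grad, real_inner_smul_right, real_inner_comm]
        ring
    _ = inner ℝ (mollify j v x) y := by
        rw [isDistribGradOn_iff_integral.1 h φ hφ hφ_cpt (hφ_supp.trans hx), neg_neg,
          mollify_apply_swap]

lemma exists_ae_eq_const_of_isDistribGradOn_zero (hu : LocallyIntegrable u volume)
    (h : IsDistribGradOn u (fun _ => 0) univ) : ∃ c, ∀ᵐ x, u x = c := by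
  have hconst : ∀ j x, mollify j u x = mollify j u 0 := by
    intro j x
    refine is_const_of_fderiv_eq_zero (𝕜 := ℝ) (differentiable_mollify j hu) (fun y => ?_) x 0
    rw [← norm_eq_zero, ← norm_gradient,
      (hasGradientAt_mollify j hu h (x := y) (subset_univ _)).gradient, mollify_apply]
    simp
  have hae := ae_tendsto_mollify hu
  obtain ⟨x₀, hx₀⟩ := hae.exists
  refine ⟨u x₀, ?_⟩
  filter_upwards [hae] with x hx
  simp_rw [hconst] at hx hx₀
  exact tendsto_nhds_unique hx hx₀

end WeakGradient

/-! ### The chain rule -/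

section ChainRule

lemma integral_gradient_eq_zero {F : Type*} [NormedAddCommGroup F] [InnerProductSpace ℝ F]
    [FiniteDimensional ℝ F] [MeasurableSpace F] [BorelSpace F] {ψ : F → ℝ} (hψ : ContDiff ℝ 1 ψ)
    (hψc : HasCompactSupport ψ) : ∫ x, ∇ ψ x = 0 := by
  have hgrad : Integrable (∇ ψ) :=
    (continuous_gradient hψ one_ne_zero).integrable_of_hasCompactSupport
      (hasCompactSupport_gradient hψc)
  refine ext_inner_left ℝ fun e => ?_
  rw [← integral_inner hgrad, inner_zero_right]
  have hinner : ∀ x, inner ℝ e (∇ ψ x) = fderiv ℝ ψ x e := fun x => by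
    rw [real_inner_comm, inner_gradient_left]
  have hderiv : Integrable fun x => fderiv ℝ ψ x e := by
    simpa only [hinner] using hgrad.const_inner (𝕜 := ℝ) e
  have hparts := integral_mul_fderiv_eq_neg_fderiv_mul_of_integrable (𝕜 := ℝ)
    (μ := (volume : Measure F)) (f := fun _ => (1 : ℝ)) (g := ψ) (v := e) (by simp)
    (by simpa using hderiv) (by simpa using hψ.continuous.integrable_of_hasCompactSupport hψc)
    (fun x _ => differentiableAt_const _) (fun x _ => hψ.differentiable one_ne_zero x)
  simpa [hinner] using hparts

lemma tendsto_integral_inner_of_tendsto_eLpNorm {α G : Type*} [MeasurableSpace α]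
    [NormedAddCommGroup G] [InnerProductSpace ℝ G] {μ : Measure α} {g : α → G} {f : ℕ → α → G}
    {f₀ : α → G} (hg : MemLp g 2 μ) (hf : ∀ j, MemLp (f j) 2 μ) (hf₀ : MemLp f₀ 2 μ)
    (hlim : Tendsto (fun j => eLpNorm (f j - f₀) 2 μ) atTop (𝓝 0)) :
    Tendsto (fun j => ∫ x, inner ℝ (g x) (f j x) ∂μ) atTop (𝓝 (∫ x, inner ℝ (g x) (f₀ x) ∂μ)) := by
  have hinner : ∀ {h : α → G} (hh : MemLp h 2 μ),
      ∫ x, inner ℝ (g x) (h x) ∂μ = inner ℝ (hg.toLp g) (hh.toLp h) := fun hh => by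
    rw [L2.inner_def]
    refine integral_congr_ae ?_
    filter_upwards [hg.coeFn_toLp, hh.coeFn_toLp] with x hgx hhx
    rw [hgx, hhx]
  simp_rw [fun j => hinner (hf j), hinner hf₀]
  exact tendsto_const_nhds.inner
    ((Lp.tendsto_Lp_iff_tendsto_eLpNorm'' f hf f₀ hf₀).2 hlim)

variable {n : ℕ} {u : Euc n → ℝ} {v : Euc n → Euc n} {U : Set (Euc n)} {F F' : ℝ → ℝ} {M : ℝ}
  {χ : Euc n → ℝ} {p : ℝ≥0∞}

lemma eventually_gradient_comp_mollify_mul (hU : IsOpen U) (hu : LocallyIntegrable u volume)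
    (h : IsDistribGradOn u v U) (hF' : ∀ t, HasDerivAt F (F' t) t) (hχ : ContDiff ℝ ∞ χ)
    (hχc : HasCompactSupport χ) (hχU : tsupport χ ⊆ U) :
    ∀ᶠ j in atTop, ∀ x, ∇ (fun y => F (mollify j u y) * χ y) x =
      F (mollify j u x) • ∇ χ x + (χ x * F' (mollify j u x)) • mollify j v x := by
  obtain ⟨ε, hε, hεU⟩ := hχc.isCompact.exists_cthickening_subset_open hU hχU
  filter_upwards [(tendsto_one_div_add_atTop_nhds_zero_nat (𝕜 := ℝ)).eventually_le_const hε]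
    with j hj x
  have hgrad_χ : HasGradientAt χ (∇ χ x) x := (hχ.differentiable (by simp) x).hasGradientAt
  have hgrad_mollify := (differentiable_mollify j hu x).hasGradientAt
  rw [(hasGradientAt_mul (hasGradientAt_comp (hF' _) hgrad_mollify) hgrad_χ).gradient, smul_smul]
  by_cases hx : x ∈ tsupport χ
  · have hball : closedBall x (1 / ((j : ℝ) + 1)) ⊆ U :=
      ((closedBall_subset_closedBall hj).trans (closedBall_subset_cthickening hx ε)).trans hεU
    rw [(hasGradientAt_mollify j hu h hball).gradient]
  · simp [image_eq_zero_of_notMem_tsupport hx]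

lemma tendsto_eLpNorm_smul_mollify_sub {v : Euc n → Euc n} (hp : 1 ≤ p) (hp_top : p ≠ ⊤)
    (hv : LocallyMemLp v p) (hχ : Continuous χ) (hχc : HasCompactSupport χ) {g : ℕ → Euc n → ℝ}
    (hg : ∀ j x, |g j x| ≤ M) :
    Tendsto (fun j => eLpNorm (fun x => (χ x * g j x) • (mollify j v x - v x)) p volume) atTop
      (𝓝 0) := by
  obtain ⟨R, hR⟩ := hχc.isCompact.isBounded.subset_ball 0
  obtain ⟨B, hB⟩ := hχc.exists_bound_of_continuous hχ
  have hB_nonneg : 0 ≤ B := (norm_nonneg _).trans (hB 0)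
  have hlim := ENNReal.Tendsto.const_mul (a := ENNReal.ofReal (B * M))
    (tendsto_eLpNorm_restrict_mollify_sub hv hp hp_top R) (Or.inr ENNReal.ofReal_ne_top)
  rw [mul_zero] at hlim
  refine tendsto_of_tendsto_of_tendsto_of_le_of_le tendsto_const_nhds hlim (fun _ => zero_le)
    fun j => ?_
  rw [← eLpNorm_indicator_eq_eLpNorm_restrict measurableSet_ball]
  refine eLpNorm_le_mul_eLpNorm_of_ae_le_mul (Eventually.of_forall fun x => ?_) p
  by_cases hx : x ∈ ball (0 : Euc n) R
  · rw [indicator_of_mem hx, norm_smul, norm_mul]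
    exact mul_le_mul_of_nonneg_right
      (mul_le_mul (hB x) (hg j x) (norm_nonneg _) hB_nonneg) (norm_nonneg _)
  · rw [image_eq_zero_of_notMem_tsupport fun h => hx (hR h), indicator_of_notMem hx]
    simp

lemma aestronglyMeasurable_comp_mollify_sub_smul (j : ℕ) (hu : LocallyIntegrable u volume)
    {Ψ : ℝ → ℝ} (hΨ : Continuous Ψ) {g : Euc n → Euc n} (hg : AEStronglyMeasurable g volume) :
    AEStronglyMeasurable (fun x => (Ψ (mollify j u x) - Ψ (u x)) • g x) volume :=
  ((hΨ.comp (contDiff_mollify j hu).continuous).aestronglyMeasurable.sub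
    (hΨ.comp_aestronglyMeasurable hu.aestronglyMeasurable)).smul hg

lemma tendsto_eLpNorm_comp_mollify_sub (hp_zero : p ≠ 0) (hp_top : p ≠ ⊤)
    (hu : LocallyIntegrable u volume) {Ψ : ℝ → ℝ} (hΨ : Continuous Ψ) (hΨM : ∀ t, |Ψ t| ≤ M)
    {g : Euc n → Euc n} (hg : MemLp g p volume) :
    Tendsto (fun j => eLpNorm (fun x => (Ψ (mollify j u x) - Ψ (u x)) • g x) p volume) atTop
      (𝓝 0) := by
  refine tendsto_eLpNorm_zero_of_dominated hp_zero hp_top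
    (fun j => aestronglyMeasurable_comp_mollify_sub_smul j hu hΨ hg.1)
    (hg.norm.const_mul (M + M)) (fun j => Eventually.of_forall fun x => ?_) ?_
  · rw [norm_smul]
    gcongr
    exact (norm_sub_le _ _).trans (add_le_add (hΨM _) (hΨM _))
  · filter_upwards [ae_tendsto_mollify hu] with x hx
    simpa using (((hΨ.tendsto _).comp hx).sub_const (Ψ (u x))).smul_const (g x)

lemma tendsto_eLpNorm_gradient_comp_mollify_mul_sub (hU : IsOpen U)
    (hu : LocallyIntegrable u volume) (hp : 1 ≤ p) (hp_top : p ≠ ⊤) (hv : LocallyMemLp v p)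
    (h : IsDistribGradOn u v U) (hF' : ∀ t, HasDerivAt F (F' t) t) (hF'_cont : Continuous F')
    (hFM : ∀ t, |F t| ≤ M) (hF'M : ∀ t, |F' t| ≤ M) (hχ : ContDiff ℝ ∞ χ)
    (hχc : HasCompactSupport χ) (hχU : tsupport χ ⊆ U) :
    Tendsto (fun j => eLpNorm (∇ (fun y => F (mollify j u y) * χ y) -
      fun x => F (u x) • ∇ χ x + (χ x * F' (u x)) • v x) p volume) atTop (𝓝 0) := by
  have hp_zero : p ≠ 0 := (one_pos.trans_le hp).ne'
  have hF_cont : Continuous F := continuous_iff_continuousAt.2 fun t => (hF' t).continuousAt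
  have hgradχ_cont := continuous_gradient hχ (by simp)
  have hgradχ : MemLp (∇ χ) p volume :=
    hgradχ_cont.memLp_of_hasCompactSupport (hasCompactSupport_gradient hχc)
  have hχv := hv.memLp_smul_of_hasCompactSupport hχ.continuous hχc
  have hlim := ((tendsto_eLpNorm_comp_mollify_sub hp_zero hp_top hu hF_cont hFM hgradχ).add
    (tendsto_eLpNorm_comp_mollify_sub hp_zero hp_top hu hF'_cont hF'M hχv)).add
    (tendsto_eLpNorm_smul_mollify_sub hp hp_top hv hχ.continuous hχc
      (g := fun j x => F' (mollify j u x)) fun j x => hF'M _)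
  simp only [add_zero] at hlim
  refine tendsto_of_tendsto_of_tendsto_of_le_of_le' tendsto_const_nhds hlim
    (Eventually.of_forall fun _ => zero_le) ?_
  filter_upwards [eventually_gradient_comp_mollify_mul hU hu h hF' hχ hχc hχU] with j hj
  have hmeas₁ := aestronglyMeasurable_comp_mollify_sub_smul j hu hF_cont hgradχ.1
  have hmeas₂ := aestronglyMeasurable_comp_mollify_sub_smul j hu hF'_cont hχv.1
  have hmeas₃ : AEStronglyMeasurable
      (fun x => (χ x * F' (mollify j u x)) • (mollify j v x - v x)) volume :=
    (hχ.continuous.mul (hF'_cont.comp (contDiff_mollify j hu).continuous)).aestronglyMeasurable.smul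
      ((contDiff_mollify j (hv.locallyIntegrable hp)).continuous.aestronglyMeasurable.sub
        hv.aestronglyMeasurable)
  refine le_trans (le_of_eq ?_) ((eLpNorm_add_le (hmeas₁.add hmeas₂) hmeas₃ hp).trans
    (by gcongr; exact eLpNorm_add_le hmeas₁ hmeas₂ hp))
  congr 1
  funext x
  simp only [Pi.sub_apply, Pi.add_apply, hj]
  module

lemma isDistribGradOn_comp (hU : IsOpen U) (hu : LocallyIntegrable u volume)
    (hv : LocallyMemLp v 1) (h : IsDistribGradOn u v U) (hF : ContDiff ℝ ∞ F)
    (hF' : ∀ t, HasDerivAt F (F' t) t) (hFM : ∀ t, |F t| ≤ M) (hF'M : ∀ t, |F' t| ≤ M) :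
    IsDistribGradOn (fun x => F (u x)) (fun x => F' (u x) • v x) U := by
  have hF'_cont : Continuous F' :=
    (funext fun t => (hF' t).deriv : deriv F = F') ▸ hF.continuous_deriv (by simp)
  refine isDistribGradOn_iff_integral.2 fun χ hχ hχc hχU => ?_
  have hψ : ∀ j, ContDiff ℝ ∞ fun y => F (mollify j u y) * χ y := fun j =>
    (hF.comp (contDiff_mollify j hu)).mul hχ
  have hψc : ∀ j, HasCompactSupport fun y => F (mollify j u y) * χ y := fun j => hχc.mul_left
  have hlim := tendsto_eLpNorm_gradient_comp_mollify_mul_sub hU hu le_rfl ENNReal.one_ne_top hv h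
    hF' hF'_cont hFM hF'M hχ hχc hχU
  have hint_u : Integrable fun x => F (u x) • ∇ χ x :=
    ((continuous_gradient hχ (by simp)).integrable_of_hasCompactSupport
      (hasCompactSupport_gradient hχc)).bdd_smul M
      (hF.continuous.comp_aestronglyMeasurable hu.aestronglyMeasurable)
      (Eventually.of_forall fun x => hFM _)
  have hint_v : Integrable fun x => χ x • F' (u x) • v x := by
    simp_rw [smul_comm (χ _)]
    exact (memLp_one_iff_integrable.1
      (hv.memLp_smul_of_hasCompactSupport hχ.continuous hχc)).bdd_smul M
      (hF'_cont.comp_aestronglyMeasurable hu.aestronglyMeasurable)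
      (Eventually.of_forall fun x => hF'M _)
  simp_rw [mul_smul] at hlim
  have hintegral := tendsto_integral_of_L1 (fun x => F (u x) • ∇ χ x + χ x • F' (u x) • v x)
    (hint_u.add hint_v).1 (Eventually.of_forall fun j =>
      (continuous_gradient (hψ j) (by simp)).integrable_of_hasCompactSupport
        (hasCompactSupport_gradient (hψc j)))
    (by simpa only [eLpNorm_one_eq_lintegral_enorm, Pi.sub_apply] using hlim)
  simp_rw [integral_gradient_eq_zero ((hψ _).of_le (by exact_mod_cast le_top)) (hψc _)] at hintegral
  rw [eq_neg_iff_add_eq_zero, ← integral_add hint_u hint_v]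
  exact (tendsto_nhds_unique tendsto_const_nhds hintegral).symm

end ChainRule

/-! ### Difference estimates for Sobolev functions -/

section DifferenceEstimates

lemma eLpNorm_two_pow_two {α G : Type*} [MeasurableSpace α] [NormedAddCommGroup G]
    (f : α → G) (μ : Measure α) : eLpNorm f 2 μ ^ 2 = ∫⁻ x, ‖f x‖ₑ ^ 2 ∂μ := by
  simpa using eLpNorm_nnreal_pow_eq_lintegral (f := f) (μ := μ) (two_ne_zero (α := ℝ≥0))

lemma lintegral_enorm_sq_le_iff {α β G H : Type*} [MeasurableSpace α] [MeasurableSpace β]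
    [NormedAddCommGroup G] [NormedAddCommGroup H] {f : α → G} {g : β → H} {μ : Measure α}
    {ν : Measure β} {C : ℝ≥0∞} :
    ∫⁻ x, ‖f x‖ₑ ^ 2 ∂μ ≤ C ^ 2 * ∫⁻ x, ‖g x‖ₑ ^ 2 ∂ν ↔ eLpNorm f 2 μ ≤ C * eLpNorm g 2 ν := by
  rw [← eLpNorm_two_pow_two, ← eLpNorm_two_pow_two, ← mul_pow,
    ENNReal.pow_le_pow_left_iff two_ne_zero]

lemma enorm_sub_sq_le_setLIntegral_deriv {G : Type*} [NormedAddCommGroup G] [NormedSpace ℝ G]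
    [CompleteSpace G] {f f' : ℝ → G} {a b : ℝ} (hab : a ≤ b) (hf : ∀ t, HasDerivAt f (f' t) t)
    (hf' : Continuous f') :
    ‖f b - f a‖ₑ ^ 2 ≤ ENNReal.ofReal (b - a) * ∫⁻ t in Ioc a b, ‖f' t‖ₑ ^ 2 := by
  have hftc : f b - f a = ∫ t in Ioc a b, f' t := by
    rw [← intervalIntegral.integral_of_le hab,
      intervalIntegral.integral_eq_sub_of_hasDerivAt (fun t _ => hf t) (hf'.intervalIntegrable _ _)]
  have hCS := eLpNorm_le_eLpNorm_mul_rpow_measure_univ (μ := volume.restrict (Ioc a b))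
    one_le_two hf'.aestronglyMeasurable
  calc ‖f b - f a‖ₑ ^ 2 ≤ eLpNorm f' 1 (volume.restrict (Ioc a b)) ^ 2 := by
        rw [hftc, eLpNorm_one_eq_lintegral_enorm]
        gcongr
        exact enorm_integral_le_lintegral_enorm _
    _ ≤ (eLpNorm f' 2 (volume.restrict (Ioc a b)) * ENNReal.ofReal (b - a) ^ (2⁻¹ : ℝ)) ^ 2 := by
        gcongr
        convert hCS using 2
        norm_num
    _ = ENNReal.ofReal (b - a) * ∫⁻ t in Ioc a b, ‖f' t‖ₑ ^ 2 := by
        rw [mul_pow, eLpNorm_two_pow_two, ← ENNReal.rpow_natCast, ← ENNReal.rpow_mul]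
        norm_num [mul_comm]

variable {n : ℕ} {u : Euc n → ℝ} {v : Euc n → Euc n}

lemma tendsto_eLpNorm_mollify_sub_of_le_smul {p : ℝ≥0∞} (hp : 1 ≤ p) (hp_top : p ≠ ⊤)
    (hv : LocallyMemLp v p) {κ : Measure (Euc n)} {M : ℝ≥0∞} {R : ℝ} (hM : M ≠ ⊤)
    (hκ : κ ≤ M • volume.restrict (ball 0 R)) :
    Tendsto (fun j => eLpNorm (mollify j v - v) p κ) atTop (𝓝 0) := by
  have hlim := ENNReal.Tendsto.const_mul (a := M ^ (1 / p).toReal)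
    (tendsto_eLpNorm_restrict_mollify_sub hv hp hp_top R) (Or.inr (by finiteness))
  rw [mul_zero] at hlim
  exact tendsto_of_tendsto_of_tendsto_of_le_of_le tendsto_const_nhds hlim (fun _ => zero_le)
    fun j => eLpNorm_le_of_measure_le_smul hκ

lemma eLpNorm_comp_sub_comp_le_of_contDiff (hu : LocallyIntegrable u volume)
    (hv : LocallyMemLp v 2) (huv : IsDistribGradOn u v univ) {α : Type*} [MeasurableSpace α]
    {μ : Measure α} {a b : α → Euc n} (ha : Measure.QuasiMeasurePreserving a μ volume)
    (hb : Measure.QuasiMeasurePreserving b μ volume) {κ : Measure (Euc n)} {M C : ℝ≥0∞} {R : ℝ}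
    (hM : M ≠ ⊤) (hC : C ≠ ⊤) (hκ : κ ≤ M • volume.restrict (ball 0 R))
    (h : ∀ f : Euc n → ℝ, ContDiff ℝ ∞ f → eLpNorm (f ∘ a - f ∘ b) 2 μ ≤ C * eLpNorm (∇ f) 2 κ) :
    eLpNorm (u ∘ a - u ∘ b) 2 μ ≤ C * eLpNorm v 2 κ := by
  have hgrad : ∀ j, ∇ (mollify j u) = mollify j v := fun j =>
    funext fun x => (hasGradientAt_mollify j hu huv (subset_univ _)).gradient
  have hcont : ∀ j, Continuous (mollify j v) := fun j =>
    (contDiff_mollify j (hv.locallyIntegrable one_le_two)).continuous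
  have hmollify := ae_tendsto_mollify hu
  have hfatou : eLpNorm (u ∘ a - u ∘ b) 2 μ ≤
      liminf (fun j => eLpNorm (mollify j u ∘ a - mollify j u ∘ b) 2 μ) atTop := by
    refine Lp.eLpNorm_lim_le_liminf_eLpNorm (fun j => ?_) _ ?_
    · have hmeas := (contDiff_mollify j hu).continuous.measurable
      exact ((hmeas.comp ha.measurable).sub (hmeas.comp hb.measurable)).aestronglyMeasurable
    · filter_upwards [ha.ae hmollify, hb.ae hmollify] with z hza hzb using hza.sub hzb
  have herror := tendsto_eLpNorm_mollify_sub_of_le_smul one_le_two ENNReal.ofNat_ne_top hv hM hκ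
  have hbound : ∀ j, eLpNorm (mollify j u ∘ a - mollify j u ∘ b) 2 μ ≤
      C * (eLpNorm v 2 κ + eLpNorm (mollify j v - v) 2 κ) := fun j => by
    have hκ_ac : κ ≪ volume := (Measure.absolutelyContinuous_of_le_smul hκ).trans
      Measure.absolutelyContinuous_restrict
    have htriangle := eLpNorm_add_le (hv.aestronglyMeasurable.mono_ac hκ_ac)
      ((hcont j).aestronglyMeasurable.sub (hv.aestronglyMeasurable.mono_ac hκ_ac)) one_le_two
    rw [add_sub_cancel] at htriangle
    refine (h _ (contDiff_mollify j hu)).trans ?_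
    rw [hgrad]
    gcongr
  have hlim := ENNReal.Tendsto.const_mul (a := C) (herror.const_add (eLpNorm v 2 κ)) (Or.inr hC)
  rw [add_zero] at hlim
  exact hfatou.trans ((liminf_le_liminf (Eventually.of_forall hbound)).trans hlim.liminf_eq.le)

lemma enorm_comp_sub_comp_sq_le {f : Euc n → ℝ} (hf : ContDiff ℝ ∞ f) {γ γ' : ℝ → Euc n}
    (hγ : ∀ t, HasDerivAt γ (γ' t) t) (hγ' : Continuous γ') {a b : ℝ} (hab : a ≤ b) :
    ‖f (γ b) - f (γ a)‖ₑ ^ 2 ≤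
      ENNReal.ofReal (b - a) * ∫⁻ t in Ioc a b, (‖∇ f (γ t)‖ₑ * ‖γ' t‖ₑ) ^ 2 := by
  have hγ_cont : Continuous γ := continuous_iff_continuousAt.2 fun t => (hγ t).continuousAt
  have hderiv : ∀ t, HasDerivAt (fun t => f (γ t)) (inner ℝ (∇ f (γ t)) (γ' t)) t := fun t => by
    rw [inner_gradient_left]
    exact (hf.differentiable (by simp) _).hasFDerivAt.comp_hasDerivAt t (hγ t)
  refine (enorm_sub_sq_le_setLIntegral_deriv hab hderiv
    (((continuous_gradient hf (by simp)).comp hγ_cont).inner hγ')).trans ?_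
  gcongr with t
  rw [← enorm_norm (∇ f _), ← enorm_norm (γ' t), ← enorm_mul]
  exact enorm_le_iff_norm_le.2 ((norm_inner_le_norm _ _).trans (Real.le_norm_self _))

lemma setLIntegral_ball_enorm_comp_add_sub_sq_le {f : Euc n → ℝ} (hf : ContDiff ℝ ∞ f)
    (h : Euc n) (r : ℝ) :
    ∫⁻ x in ball 0 r, ‖f (x + h) - f x‖ₑ ^ 2 ≤
      ‖h‖ₑ ^ 2 * ∫⁻ x in ball 0 (r + ‖h‖), ‖∇ f x‖ₑ ^ 2 := by
  have hgrad := (continuous_gradient hf (by simp)).measurable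
  have hpath : ∀ x, ‖f (x + h) - f x‖ₑ ^ 2 ≤
      ∫⁻ t in Ioc (0 : ℝ) 1, ‖h‖ₑ ^ 2 * ‖∇ f (x + t • h)‖ₑ ^ 2 := fun x => by
    have hγ : ∀ t : ℝ, HasDerivAt (fun t => x + t • h) h t := fun t => by
      simpa using ((hasDerivAt_id t).smul_const h).const_add x
    simpa [mul_pow, mul_comm] using enorm_comp_sub_comp_sq_le hf hγ continuous_const zero_le_one
  have hslice : ∀ t ∈ Ioc (0 : ℝ) 1, ∫⁻ x in ball 0 r, ‖∇ f (x + t • h)‖ₑ ^ 2 ≤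
      ∫⁻ x in ball 0 (r + ‖h‖), ‖∇ f x‖ₑ ^ 2 := fun t ht => by
    rw [← lintegral_indicator measurableSet_ball, ← lintegral_indicator measurableSet_ball,
      ← lintegral_add_right_eq_self ((ball 0 (r + ‖h‖)).indicator fun x => ‖∇ f x‖ₑ ^ 2) (t • h)]
    refine lintegral_mono (indicator_le fun x hx => ?_)
    rw [indicator_of_mem]
    rw [mem_ball_zero_iff] at hx ⊢
    have hth : ‖t • h‖ ≤ ‖h‖ := by
      rw [norm_smul, Real.norm_of_nonneg ht.1.le]
      exact mul_le_of_le_one_left (norm_nonneg _) ht.2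
    linarith [norm_add_le x (t • h)]
  calc ∫⁻ x in ball 0 r, ‖f (x + h) - f x‖ₑ ^ 2
      ≤ ∫⁻ x in ball 0 r, ∫⁻ t in Ioc (0 : ℝ) 1, ‖h‖ₑ ^ 2 * ‖∇ f (x + t • h)‖ₑ ^ 2 :=
        lintegral_mono hpath
    _ = ∫⁻ t in Ioc (0 : ℝ) 1, ‖h‖ₑ ^ 2 * ∫⁻ x in ball 0 r, ‖∇ f (x + t • h)‖ₑ ^ 2 := by
        rw [lintegral_lintegral_swap (by fun_prop)]
        simp_rw [lintegral_const_mul' _ _ (ENNReal.pow_ne_top enorm_ne_top)]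
    _ ≤ ∫⁻ t in Ioc (0 : ℝ) 1, ‖h‖ₑ ^ 2 * ∫⁻ x in ball 0 (r + ‖h‖), ‖∇ f x‖ₑ ^ 2 :=
        setLIntegral_mono' measurableSet_Ioc fun t ht => mul_le_mul_right (hslice t ht) _
    _ = ‖h‖ₑ ^ 2 * ∫⁻ x in ball 0 (r + ‖h‖), ‖∇ f x‖ₑ ^ 2 := by simp

lemma eLpNorm_comp_add_sub_le (hu : LocallyIntegrable u volume) (hv : LocallyMemLp v 2)
    (huv : IsDistribGradOn u v univ) (h : Euc n) (r : ℝ) :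
    eLpNorm (fun x => u (x + h) - u x) 2 (volume.restrict (ball 0 r)) ≤
      ‖h‖ₑ * eLpNorm v 2 (volume.restrict (ball 0 (r + ‖h‖))) :=
  eLpNorm_comp_sub_comp_le_of_contDiff hu hv huv (a := fun x => x + h) (b := id)
    ((measurePreserving_add_right volume h).quasiMeasurePreserving.mono_left
      Measure.absolutelyContinuous_restrict)
    ((Measure.QuasiMeasurePreserving.id volume).mono_left Measure.absolutelyContinuous_restrict)
    ENNReal.one_ne_top enorm_ne_top (one_smul ℝ≥0∞ _).ge
    fun _ hf => lintegral_enorm_sq_le_iff.1 (setLIntegral_ball_enorm_comp_add_sub_sq_le hf h r)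

end DifferenceEstimates

/-! ### The Poincaré inequality -/

section Poincare

lemma enorm_sub_average_sq_le {α G : Type*} [MeasurableSpace α] [NormedAddCommGroup G]
    [NormedSpace ℝ G] [CompleteSpace G] {μ : Measure α} [IsFiniteMeasure μ] [NeZero μ] {f : α → G}
    (hf : Integrable f μ) (c : G) : ‖c - ⨍ y, f y ∂μ‖ₑ ^ 2 ≤ ⨍⁻ y, ‖c - f y‖ₑ ^ 2 ∂μ := by
  set ν := (μ univ)⁻¹ • μ
  have hfν : Integrable f ν := hf.smul_measure (ENNReal.inv_ne_top.2 (NeZero.ne _))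
  have hconst : c - ⨍ y, f y ∂μ = ∫ y, (c - f y) ∂ν := by
    rw [integral_sub (integrable_const c) hfν, average, integral_const, probReal_univ, one_smul]
  have hjensen := rpow_lintegral_le_lintegral_rpow (μ := ν) (h := fun y => ‖c - f y‖ₑ)
    (aestronglyMeasurable_const.sub hfν.1).enorm one_le_two
  calc ‖c - ⨍ y, f y ∂μ‖ₑ ^ 2 ≤ (∫⁻ y, ‖c - f y‖ₑ ∂ν) ^ 2 := by
        rw [hconst]
        gcongr
        exact enorm_integral_le_lintegral_enorm _
    _ ≤ ⨍⁻ y, ‖c - f y‖ₑ ^ 2 ∂μ := by exact_mod_cast hjensen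

variable {n : ℕ} {u : Euc n → ℝ} {v : Euc n → Euc n} {r : ℝ}

lemma lintegral_ball_lintegral_ball_enorm_sub_sq_le (hu : LocallyIntegrable u volume)
    (hv : LocallyMemLp v 2) (huv : IsDistribGradOn u v univ) (r : ℝ) :
    ∫⁻ x in ball 0 r, ∫⁻ y in ball 0 r, ‖u x - u y‖ₑ ^ 2 ≤
      volume (ball (0 : Euc n) (2 * r)) * (ENNReal.ofReal (2 * r) ^ 2 *
        ∫⁻ x in ball 0 (3 * r), ‖v x‖ₑ ^ 2) := by
  have hmeas : AEMeasurable (fun z : Euc n × Euc n => ‖u (z.1 + z.2) - u z.1‖ₑ ^ 2)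
      ((volume.restrict (ball 0 r)).prod (volume.restrict (ball 0 (2 * r)))) := by
    rw [Measure.prod_restrict]
    have hadd : Measure.QuasiMeasurePreserving (fun z : Euc n × Euc n => z.1 + z.2) volume volume :=
      Measure.quasiMeasurePreserving_snd.comp
        (measurePreserving_prod_add volume volume).quasiMeasurePreserving
    exact (((hu.aestronglyMeasurable.comp_quasiMeasurePreserving hadd).sub
      (hu.aestronglyMeasurable.comp_quasiMeasurePreserving
        Measure.quasiMeasurePreserving_fst)).enorm.pow_const 2).restrict
  have hshift : ∀ x ∈ ball (0 : Euc n) r, ∫⁻ y in ball 0 r, ‖u x - u y‖ₑ ^ 2 ≤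
      ∫⁻ h in ball 0 (2 * r), ‖u (x + h) - u x‖ₑ ^ 2 := fun x hx => by
    rw [← lintegral_indicator measurableSet_ball, ← lintegral_indicator measurableSet_ball,
      ← lintegral_add_left_eq_self ((ball 0 r).indicator fun y => ‖u x - u y‖ₑ ^ 2) x]
    refine lintegral_mono fun h => ?_
    by_cases hh : x + h ∈ ball (0 : Euc n) r
    · have hh' : h ∈ ball (0 : Euc n) (2 * r) := by
        rw [mem_ball_zero_iff] at hx hh ⊢
        linarith [norm_sub_le (x + h) x, congrArg norm (add_sub_cancel_left x h)]
      rw [indicator_of_mem hh, indicator_of_mem hh', enorm_sub_rev]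
    · rw [indicator_of_notMem hh]
      exact zero_le
  have hdiff : ∀ h ∈ ball (0 : Euc n) (2 * r), ∫⁻ x in ball 0 r, ‖u (x + h) - u x‖ₑ ^ 2 ≤
      ENNReal.ofReal (2 * r) ^ 2 * ∫⁻ x in ball 0 (3 * r), ‖v x‖ₑ ^ 2 := fun h hh => by
    rw [mem_ball_zero_iff] at hh
    refine (lintegral_enorm_sq_le_iff.2 (eLpNorm_comp_add_sub_le hu hv huv h r)).trans ?_
    rw [← ofReal_norm]
    gcongr
    linarith
  calc ∫⁻ x in ball 0 r, ∫⁻ y in ball 0 r, ‖u x - u y‖ₑ ^ 2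
      ≤ ∫⁻ x in ball 0 r, ∫⁻ h in ball 0 (2 * r), ‖u (x + h) - u x‖ₑ ^ 2 :=
        setLIntegral_mono' measurableSet_ball hshift
    _ = ∫⁻ h in ball 0 (2 * r), ∫⁻ x in ball 0 r, ‖u (x + h) - u x‖ₑ ^ 2 :=
        lintegral_lintegral_swap hmeas
    _ ≤ _ := setLIntegral_mono' measurableSet_ball hdiff
    _ = _ := by rw [setLIntegral_const, mul_comm]

lemma lintegral_ball_enorm_sub_average_sq_le (hu : LocallyIntegrable u volume)
    (hv : LocallyMemLp v 2) (huv : IsDistribGradOn u v univ) (hr : 0 < r) :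
    ∫⁻ x in ball 0 r, ‖u x - ⨍ y in ball 0 r, u y‖ₑ ^ 2 ≤
      2 ^ n * (ENNReal.ofReal (2 * r) ^ 2 * ∫⁻ x in ball 0 (3 * r), ‖v x‖ₑ ^ 2) := by
  have hvol_pos : volume (ball (0 : Euc n) r) ≠ 0 := (measure_ball_pos _ _ hr).ne'
  have hvol_top : volume (ball (0 : Euc n) r) ≠ ⊤ := measure_ball_lt_top.ne
  have : NeZero (volume.restrict (ball (0 : Euc n) r)) := ⟨by simpa using hvol_pos⟩
  have : IsFiniteMeasure (volume.restrict (ball (0 : Euc n) r)) :=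
    ⟨by simpa using hvol_top.lt_top⟩
  have hu_int : IntegrableOn u (ball 0 r) volume :=
    (hu.integrableOn_isCompact (isCompact_closedBall 0 r)).mono_set ball_subset_closedBall
  have hdouble : volume (ball (0 : Euc n) (2 * r)) = 2 ^ n * volume (ball (0 : Euc n) r) := by
    simp [Measure.addHaar_ball_mul_of_pos _ _ two_pos]
  calc ∫⁻ x in ball 0 r, ‖u x - ⨍ y in ball 0 r, u y‖ₑ ^ 2
      ≤ ∫⁻ x in ball 0 r, (volume (ball (0 : Euc n) r))⁻¹ * ∫⁻ y in ball 0 r, ‖u x - u y‖ₑ ^ 2 :=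
        lintegral_mono fun x => (enorm_sub_average_sq_le hu_int (u x)).trans_eq
          (by rw [setLAverage_eq, ENNReal.div_eq_inv_mul])
    _ ≤ (volume (ball (0 : Euc n) r))⁻¹ * (volume (ball (0 : Euc n) (2 * r)) * _) := by
        rw [lintegral_const_mul' _ _ (ENNReal.inv_ne_top.2 hvol_pos)]
        gcongr
        exact lintegral_ball_lintegral_ball_enorm_sub_sq_le hu hv huv r
    _ = _ := by
        rw [hdouble, mul_comm (2 ^ n), mul_assoc, ← mul_assoc,
          ENNReal.inv_mul_cancel hvol_pos hvol_top, one_mul]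

end Poincare

/-! ### Riesz kernels and dilations -/

section RieszKernel

/-- The Riesz kernel `|z|^{-p}`. At `z = 0` it is the junk value `0`, not `⊤`, when `p > 0`. -/
def rieszKernel {E : Type*} [Norm E] (p : ℝ) (z : E) : ℝ≥0∞ := ENNReal.ofReal (‖z‖ ^ (-p))

variable {E : Type*} [NormedAddCommGroup E] {p r : ℝ} {z : E}

lemma measurable_rieszKernel [MeasurableSpace E] [OpensMeasurableSpace E] (p : ℝ) :
    Measurable (rieszKernel p : E → ℝ≥0∞) := by
  unfold rieszKernel
  fun_prop

lemma rieszKernel_ne_top : rieszKernel p z ≠ ⊤ := ENNReal.ofReal_ne_top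

lemma rieszKernel_smul [NormedSpace ℝ E] (hr : 0 < r) (p : ℝ) (z : E) :
    rieszKernel p (r • z) = ENNReal.ofReal (r ^ (-p)) * rieszKernel p z := by
  rw [rieszKernel, rieszKernel, norm_smul_of_nonneg hr.le, Real.mul_rpow hr.le (norm_nonneg _),
    ENNReal.ofReal_mul (by positivity)]

lemma rieszKernel_le (hr : 0 < r) (hp : 0 ≤ p) (hz : r ≤ ‖z‖) :
    rieszKernel p z ≤ ENNReal.ofReal (r ^ (-p)) :=
  ENNReal.ofReal_le_ofReal (Real.rpow_le_rpow_of_nonpos hr hz (neg_nonpos.2 hp))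

lemma le_rieszKernel (hp : 0 ≤ p) (hz₀ : z ≠ 0) (hz : ‖z‖ ≤ r) :
    ENNReal.ofReal (r ^ (-p)) ≤ rieszKernel p z :=
  ENNReal.ofReal_le_ofReal (Real.rpow_le_rpow_of_nonpos (norm_pos_iff.2 hz₀) hz (neg_nonpos.2 hp))

lemma enorm_sq_mul_rieszKernel (p : ℝ) (hz : z ≠ 0) :
    ‖z‖ₑ ^ 2 * rieszKernel (p + 1) z = rieszKernel (p - 1) z := by
  rw [rieszKernel, rieszKernel, ← ofReal_norm, ← ENNReal.ofReal_pow (norm_nonneg _),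
    ← ENNReal.ofReal_mul (by positivity), ← Real.rpow_natCast,
    ← Real.rpow_add (norm_pos_iff.2 hz)]
  congr 2
  push_cast
  ring

lemma ofReal_rpow_mul_ofReal_rpow_neg (hr : 0 < r) (p : ℝ) :
    ENNReal.ofReal (r ^ p) * ENNReal.ofReal (r ^ (-p)) = 1 := by
  rw [← ENNReal.ofReal_mul (by positivity), ← Real.rpow_add hr, add_neg_cancel, Real.rpow_zero,
    ENNReal.ofReal_one]

lemma lintegral_comp_smul [NormedSpace ℝ E] [FiniteDimensional ℝ E] [MeasurableSpace E]
    [BorelSpace E] (μ : Measure E) [μ.IsAddHaarMeasure] (hr : 0 < r) (g : E → ℝ≥0∞) :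
    ENNReal.ofReal (r ^ Module.finrank ℝ E) * ∫⁻ z, g (r • z) ∂μ = ∫⁻ z, g z ∂μ := by
  have hmap : ∫⁻ z, g (r • z) ∂μ = ∫⁻ z, g z ∂(μ.map (r • ·)) :=
    (lintegral_map_equiv g (Homeomorph.smulOfNeZero r hr.ne').toMeasurableEquiv).symm
  rw [hmap, Measure.map_addHaar_smul μ hr.ne', lintegral_smul_measure, smul_eq_mul, ← mul_assoc,
    abs_of_pos (by positivity), ← ENNReal.ofReal_mul (by positivity),
    mul_inv_cancel₀ (by positivity), ENNReal.ofReal_one, one_mul]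

lemma setLIntegral_ball_comp_smul [NormedSpace ℝ E] [FiniteDimensional ℝ E] [MeasurableSpace E]
    [BorelSpace E] (μ : Measure E) [μ.IsAddHaarMeasure] (hr : 0 < r) (b : ℝ) (g : E → ℝ≥0∞) :
    ENNReal.ofReal (r ^ Module.finrank ℝ E) * ∫⁻ z in ball 0 b, g (r • z) ∂μ =
      ∫⁻ z in ball 0 (r * b), g z ∂μ := by
  rw [← lintegral_indicator measurableSet_ball, ← lintegral_indicator measurableSet_ball,
    ← lintegral_comp_smul μ hr ((ball 0 (r * b)).indicator g)]
  refine congrArg _ (lintegral_congr fun z => ?_)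
  have hiff : r • z ∈ ball 0 (r * b) ↔ z ∈ ball 0 b := by
    simp [norm_smul_of_nonneg hr.le, hr]
  by_cases hz : z ∈ ball 0 b
  · rw [indicator_of_mem hz, indicator_of_mem (hiff.2 hz)]
  · rw [indicator_of_notMem hz, indicator_of_notMem (hiff.not.2 hz)]

/-- The measure `|z|^{-p} dz`. -/
def rieszMeasure (n : ℕ) (p : ℝ) : Measure (Euc n) := volume.withDensity (rieszKernel p)

variable {n : ℕ}

lemma setLIntegral_rieszMeasure (p : ℝ) {s : Set (Euc n)} (hs : MeasurableSet s)
    (g : Euc n → ℝ≥0∞) :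
    ∫⁻ z in s, g z ∂(rieszMeasure n p) = ∫⁻ z in s, rieszKernel p z * g z :=
  setLIntegral_withDensity_eq_setLIntegral_mul_non_measurable _ (measurable_rieszKernel p) _ hs
    (Eventually.of_forall fun _ => ENNReal.ofReal_lt_top)

lemma rieszMeasure_absolutelyContinuous (n : ℕ) (p : ℝ) : rieszMeasure n p ≪ volume :=
  withDensity_absolutelyContinuous _ _

lemma rieszMeasure_restrict_le {a : ℝ} (ha : 0 < a) (hp : 0 ≤ p) (b : ℝ) :
    (rieszMeasure n p).restrict (ball 0 b \ closedBall 0 a) ≤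
      ENNReal.ofReal (a ^ (-p)) • volume.restrict (ball 0 b) := by
  have hmeas : MeasurableSet (ball (0 : Euc n) b \ closedBall 0 a) :=
    measurableSet_ball.diff measurableSet_closedBall
  calc (rieszMeasure n p).restrict (ball 0 b \ closedBall 0 a)
      ≤ (volume.restrict (ball 0 b \ closedBall 0 a)).withDensity
          fun _ => ENNReal.ofReal (a ^ (-p)) := by
        rw [rieszMeasure, restrict_withDensity hmeas]
        refine withDensity_mono ?_
        filter_upwards [ae_restrict_mem hmeas] with z hz
        exact rieszKernel_le ha hp (by simpa using hz.2 : a < ‖z‖).le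
    _ ≤ _ := by
        rw [withDensity_const]
        gcongr
        exact sdiff_subset

end RieszKernel

/-! ### Hardy's inequality at a point where the trace exists -/

section PointwiseHardy

variable {n : ℕ} {u : Euc n → ℝ} {v : Euc n → Euc n} {a b s t : ℝ}

lemma smul_mem_ball_diff_closedBall {E : Type*} [NormedAddCommGroup E] [NormedSpace ℝ E] {z : E}
    {c r : ℝ} (hc : 0 < c) (hcr : c ≤ r) (hr : r ≤ 1) (hz : z ∈ ball 0 b \ closedBall 0 a)
    (ha : 0 ≤ a) : r • z ∈ ball 0 b \ closedBall 0 (c * a) := by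
  simp only [Set.mem_sdiff, mem_ball_zero_iff, mem_closedBall_zero_iff, not_le,
    norm_smul_of_nonneg (hc.le.trans hcr)] at hz ⊢
  exact ⟨(mul_le_of_le_one_left (norm_nonneg z) hr).trans_lt hz.1,
    mul_lt_mul' hcr hz.2 ha (hc.trans_le hcr)⟩

lemma mul_enorm_sq_mul_rieszKernel (p : ℝ) {σ : ℝ} (hσ : 0 < σ) {z : Euc n} (hz : z ≠ 0) :
    (ENNReal.ofReal (2 * σ) * ‖z‖ₑ) ^ 2 * rieszKernel (p + 1) z =
      4 * (ENNReal.ofReal ((σ ^ 2) ^ p) * rieszKernel (p - 1) (σ ^ 2 • z)) := by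
  have hscale : ENNReal.ofReal (2 * σ) ^ 2 =
      4 * (ENNReal.ofReal ((σ ^ 2) ^ p) * ENNReal.ofReal ((σ ^ 2) ^ (-(p - 1)))) := by
    rw [← ENNReal.ofReal_mul (by positivity), ← Real.rpow_add (by positivity),
      ← ENNReal.ofReal_pow (by positivity), show p + -(p - 1) = 1 by ring, Real.rpow_one, mul_pow,
      ENNReal.ofReal_mul (by positivity)]
    norm_num
  rw [mul_pow, mul_assoc, enorm_sq_mul_rieszKernel p hz, rieszKernel_smul (by positivity), hscale]
  ring

lemma rieszKernel_mul_enorm_sub_comp_smul_sq_le {f : Euc n → ℝ} (hf : ContDiff ℝ ∞ f)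
    (hs : 0 < s) (hs₁ : s ≤ 1) {z : Euc n} (hz : z ≠ 0) :
    rieszKernel (n + 1) z * ‖f z - f (s ^ 2 • z)‖ₑ ^ 2 ≤
      ∫⁻ σ in Ioc s 1, 4 * (ENNReal.ofReal ((σ ^ 2) ^ n) *
        (rieszKernel (n - 1) (σ ^ 2 • z) * ‖∇ f (σ ^ 2 • z)‖ₑ ^ 2)) := by
  have hγ : ∀ σ : ℝ, HasDerivAt (fun σ : ℝ => σ ^ 2 • z) ((2 * σ) • z) σ := fun σ => by
    simpa using (hasDerivAt_pow 2 σ).smul_const z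
  have hpath := enorm_comp_sub_comp_sq_le hf hγ (by fun_prop) hs₁
  rw [one_pow, one_smul] at hpath
  calc rieszKernel (n + 1) z * ‖f z - f (s ^ 2 • z)‖ₑ ^ 2
      ≤ rieszKernel (n + 1) z *
          (1 * ∫⁻ σ in Ioc s 1, (‖∇ f (σ ^ 2 • z)‖ₑ * ‖(2 * σ) • z‖ₑ) ^ 2) := by
        refine mul_le_mul_right (hpath.trans ?_) _
        gcongr
        exact ENNReal.ofReal_le_one.2 (by linarith)
    _ = ∫⁻ σ in Ioc s 1, rieszKernel (n + 1) z * (‖∇ f (σ ^ 2 • z)‖ₑ * ‖(2 * σ) • z‖ₑ) ^ 2 := by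
        rw [one_mul, lintegral_const_mul' _ _ rieszKernel_ne_top]
    _ = _ := by
        refine setLIntegral_congr_fun measurableSet_Ioc fun σ hσ => ?_
        have hσ₀ : 0 < σ := hs.trans hσ.1
        have hkernel := mul_enorm_sq_mul_rieszKernel n hσ₀ hz
        rw [Real.rpow_natCast] at hkernel
        rw [enorm_smul, Real.enorm_of_nonneg (by positivity), ← mul_assoc (ENNReal.ofReal _),
          ← mul_assoc 4, ← hkernel]
        ring

/-- Moving `z` to `s² z` along `σ ↦ σ² z` makes the bound independent of `s`: the Jacobian
`σ^{2n}` of the dilation is exactly compensated by the homogeneity of the two kernels. -/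
lemma setLIntegral_rieszKernel_mul_enorm_sub_comp_smul_sq_le {f : Euc n → ℝ}
    (hf : ContDiff ℝ ∞ f) (hs : 0 < s) (hs₁ : s ≤ 1) (ha : 0 ≤ a) (b : ℝ) :
    ∫⁻ z in ball 0 b \ closedBall 0 a, rieszKernel (n + 1) z * ‖f z - f (s ^ 2 • z)‖ₑ ^ 2 ≤
      4 * ∫⁻ z in ball 0 b \ closedBall 0 (s ^ 2 * a), rieszKernel (n - 1) z * ‖∇ f z‖ₑ ^ 2 := by
  have hmeas : ∀ a : ℝ, MeasurableSet (ball (0 : Euc n) b \ closedBall 0 a) := fun a =>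
    measurableSet_ball.diff measurableSet_closedBall
  set G : Euc n → ℝ≥0∞ := (ball 0 b \ closedBall 0 (s ^ 2 * a)).indicator fun z =>
    rieszKernel (n - 1) z * ‖∇ f z‖ₑ ^ 2 with hG_def
  have hG : Measurable G := ((measurable_rieszKernel _).mul
    ((continuous_gradient hf (by simp)).measurable.enorm.pow_const 2)).indicator (hmeas _)
  have hpoint : ∀ z ∈ ball (0 : Euc n) b \ closedBall 0 a,
      rieszKernel (n + 1) z * ‖f z - f (s ^ 2 • z)‖ₑ ^ 2 ≤
        ∫⁻ σ in Ioc s 1, 4 * (ENNReal.ofReal ((σ ^ 2) ^ n) * G (σ ^ 2 • z)) := fun z hz => by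
    have hz₀ : z ≠ 0 := fun h => hz.2 (by simpa [h] using ha)
    refine (rieszKernel_mul_enorm_sub_comp_smul_sq_le hf hs hs₁ hz₀).trans_eq
      (setLIntegral_congr_fun measurableSet_Ioc fun σ hσ => ?_)
    have hmem := smul_mem_ball_diff_closedBall (by positivity : 0 < s ^ 2)
      (pow_le_pow_left₀ hs.le hσ.1.le 2) (pow_le_one₀ (hs.trans hσ.1).le hσ.2) hz ha
    rw [hG_def, indicator_of_mem hmem]
  have hscale : ∀ σ ∈ Ioc s 1,
      ∫⁻ z, 4 * (ENNReal.ofReal ((σ ^ 2) ^ n) * G (σ ^ 2 • z)) = 4 * ∫⁻ z, G z := fun σ hσ => by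
    have hσ₀ : 0 < σ := hs.trans hσ.1
    rw [lintegral_const_mul' _ _ (by simp), lintegral_const_mul' _ _ ENNReal.ofReal_ne_top,
      ← lintegral_comp_smul volume (by positivity : 0 < σ ^ 2) G, finrank_euclideanSpace_fin]
  calc _ ≤ ∫⁻ z, ∫⁻ σ in Ioc s 1, 4 * (ENNReal.ofReal ((σ ^ 2) ^ n) * G (σ ^ 2 • z)) :=
        (setLIntegral_mono' (hmeas a) hpoint).trans (setLIntegral_le_lintegral _ _)
    _ = ∫⁻ σ in Ioc s 1, ∫⁻ z, 4 * (ENNReal.ofReal ((σ ^ 2) ^ n) * G (σ ^ 2 • z)) :=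
        lintegral_lintegral_swap (by fun_prop)
    _ = ∫⁻ σ in Ioc s 1, 4 * ∫⁻ z, G z := setLIntegral_congr_fun measurableSet_Ioc hscale
    _ ≤ 4 * ∫⁻ z, G z := by
        rw [setLIntegral_const, Real.volume_Ioc]
        exact mul_le_of_le_one_right zero_le (ENNReal.ofReal_le_one.2 (by linarith))
    _ = _ := by rw [lintegral_indicator (hmeas _)]

lemma eLpNorm_sub_comp_smul_le (hn : 1 ≤ n) (hu : LocallyIntegrable u volume)
    (hv : LocallyMemLp v 2) (huv : IsDistribGradOn u v univ) (hs : 0 < s) (hs₁ : s ≤ 1)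
    (ha : 0 < a) (b : ℝ) :
    eLpNorm (fun z => u z - u (s ^ 2 • z)) 2
        ((rieszMeasure n (n + 1)).restrict (ball 0 b \ closedBall 0 a)) ≤
      2 * eLpNorm v 2 (rieszMeasure n (n - 1)) := by
  have hn' : (0 : ℝ) ≤ n - 1 := sub_nonneg.2 (by exact_mod_cast hn)
  have hac : (rieszMeasure n (n + 1)).restrict (ball 0 b \ closedBall 0 a) ≪ volume :=
    Measure.absolutelyContinuous_restrict.trans (rieszMeasure_absolutelyContinuous n _)
  refine (eLpNorm_comp_sub_comp_le_of_contDiff hu hv huv (a := id) (b := fun z => s ^ 2 • z)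
    ((Measure.QuasiMeasurePreserving.id volume).mono_left hac)
    ((Measure.quasiMeasurePreserving_smul volume (by positivity)).mono_left hac)
    ENNReal.ofReal_ne_top ENNReal.ofNat_ne_top
    (rieszMeasure_restrict_le (by positivity : 0 < s ^ 2 * a) hn' b)
    fun f hf => lintegral_enorm_sq_le_iff.1 ?_).trans
    (mul_le_mul_right (eLpNorm_mono_measure _ Measure.restrict_le_self) _)
  have hmeas : ∀ a : ℝ, MeasurableSet (ball (0 : Euc n) b \ closedBall 0 a) := fun a =>
    measurableSet_ball.diff measurableSet_closedBall
  rw [setLIntegral_rieszMeasure _ (hmeas _), setLIntegral_rieszMeasure _ (hmeas _),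
    show (2 : ℝ≥0∞) ^ 2 = 4 by norm_num]
  exact setLIntegral_rieszKernel_mul_enorm_sub_comp_smul_sq_le hf hs hs₁ ha.le b

end PointwiseHardy

section Translation

variable {n : ℕ} {u : Euc n → ℝ} {v : Euc n → Euc n}

lemma locallyIntegrable_comp_const_add {G : Type*} [NormedAddCommGroup G] {f : Euc n → G}
    (hf : LocallyIntegrable f volume) (c : Euc n) :
    LocallyIntegrable (fun x => f (c + x)) volume := by
  refine (locallyIntegrable_iff).2 fun K hK => ?_
  have himage := hf.integrableOn_isCompact (hK.image (continuous_const_add c))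
  rw [← (measurePreserving_add_left volume c).integrableOn_comp_preimage
    (measurableEmbedding_addLeft c), preimage_image_eq K (add_right_injective c)] at himage
  exact himage

lemma LocallyMemLp.comp_const_add {p : ℝ≥0∞} (hv : LocallyMemLp v p) (c : Euc n) :
    LocallyMemLp (fun x => v (c + x)) p := by
  intro R
  have hsub : ball (0 : Euc n) R ⊆ (c + ·) ⁻¹' ball 0 (‖c‖ + R) := fun x hx => by
    rw [mem_ball_zero_iff] at hx
    exact mem_ball_zero_iff.2 ((norm_add_le c x).trans_lt (by gcongr))
  exact ((hv _).comp_measurePreserving ((measurePreserving_add_left volume c).restrict_preimage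
    measurableSet_ball)).mono_measure (Measure.restrict_mono hsub le_rfl)

lemma isDistribGradOn_univ_comp_const_add (huv : IsDistribGradOn u v univ) (c : Euc n) :
    IsDistribGradOn (fun x => u (c + x)) (fun x => v (c + x)) univ := by
  rw [isDistribGradOn_iff_integral] at huv ⊢
  intro φ hφ hφc _
  set ψ : Euc n → ℝ := fun y => φ (-c + y) with hψ_def
  have hψ_grad : ∀ x, ∇ φ x = ∇ ψ (c + x) := fun x => by
    rw [gradient, gradient, hψ_def, fderiv_comp_add_left, neg_add_cancel_left]
  have hψ_apply : ∀ x, φ x = ψ (c + x) := fun x => by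
    simp only [hψ_def, neg_add_cancel_left]
  have htest := huv ψ (hφ.comp (contDiff_const.add contDiff_id))
    (hφc.comp_homeomorph (Homeomorph.addLeft (-c))) (subset_univ _)
  simp only [hψ_grad, hψ_apply]
  rw [integral_add_left_eq_self (fun y => u y • ∇ ψ y) c,
    integral_add_left_eq_self (fun y => ψ y • v y) c, htest]

lemma hasTraceAt_zero_comp_const_add {c : Euc n} {t : ℝ} (h : HasTraceAt u c t) :
    HasTraceAt (fun x => u (c + x)) 0 t := by
  refine Tendsto.congr (fun ρ => ?_) h
  have hball : (c + ·) ⁻¹' ball c ρ = ball 0 ρ := by simp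
  rw [setAverage_eq, setAverage_eq, ← hball,
    (measurePreserving_add_left volume c).setIntegral_preimage_emb
      (measurableEmbedding_addLeft c) u, measureReal_def, measureReal_def,
    (measurePreserving_add_left volume c).measure_preimage measurableSet_ball.nullMeasurableSet]

end Translation

section PointwiseHardy

variable {n : ℕ} {u : Euc n → ℝ} {v : Euc n → Euc n} {a b r t : ℝ}

lemma setLIntegral_ball_le_mul_lintegral_rieszMeasure (hn : 1 ≤ n) {p : ℝ} (hp : 0 ≤ p)
    (hr : 0 < r) (g : Euc n → ℝ≥0∞) :
    ∫⁻ x in ball 0 r, g x ≤ ENNReal.ofReal (r ^ p) * ∫⁻ x, g x ∂(rieszMeasure n p) := by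
  have : Nonempty (Fin n) := ⟨⟨0, hn⟩⟩
  have hne : ∀ᵐ x : Euc n ∂volume.restrict (ball 0 r), x ≠ 0 := ae_restrict_of_ae (by simp [ae_iff])
  calc ∫⁻ x in ball 0 r, g x
      ≤ ∫⁻ x in ball 0 r, ENNReal.ofReal (r ^ p) * (rieszKernel p x * g x) := by
        refine lintegral_mono_ae ?_
        filter_upwards [hne, ae_restrict_mem measurableSet_ball] with x hx hxr
        rw [← mul_assoc]
        refine le_mul_of_one_le_left zero_le ?_
        rw [← ofReal_rpow_mul_ofReal_rpow_neg hr p]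
        gcongr
        exact le_rieszKernel hp hx (mem_ball_zero_iff.1 hxr).le
    _ = ENNReal.ofReal (r ^ p) * ∫⁻ x in ball 0 r, g x ∂(rieszMeasure n p) := by
        rw [lintegral_const_mul' _ _ ENNReal.ofReal_ne_top,
          setLIntegral_rieszMeasure p measurableSet_ball]
    _ ≤ _ := by gcongr; exact Measure.restrict_le_self

lemma eLpNorm_comp_smul_sub_average_le (hn : 1 ≤ n) (hu : LocallyIntegrable u volume)
    (hv : LocallyMemLp v 2) (huv : IsDistribGradOn u v univ) (hr : 0 < r) (hb : 0 < b) :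
    eLpNorm (fun z => u (r • z) - ⨍ y in ball 0 (r * b), u y) 2 (volume.restrict (ball 0 b)) ≤
      ENNReal.ofReal √(2 ^ n * ((2 * b) ^ 2 * (3 * b) ^ ((n : ℝ) - 1) * r)) *
        eLpNorm v 2 (rieszMeasure n (n - 1)) := by
  have hn' : (0 : ℝ) ≤ n - 1 := sub_nonneg.2 (by exact_mod_cast hn)
  have hpoincare := lintegral_ball_enorm_sub_average_sq_le hu hv huv (by positivity : 0 < r * b)
  have henergy := setLIntegral_ball_le_mul_lintegral_rieszMeasure hn hn'
    (by positivity : 0 < 3 * (r * b)) fun x => ‖v x‖ₑ ^ 2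
  have hpow : (2 * (r * b)) ^ 2 * (3 * (r * b)) ^ ((n : ℝ) - 1) =
      r ^ n * ((2 * b) ^ 2 * (3 * b) ^ ((n : ℝ) - 1) * r) := by
    have hr_pow : r ^ ((n : ℝ) - 1) * r = r ^ n := by
      rw [← Real.rpow_add_one hr.ne', sub_add_cancel, Real.rpow_natCast]
    rw [show 3 * (r * b) = r * (3 * b) by ring, Real.mul_rpow hr.le (by positivity), ← hr_pow]
    ring
  have hcancel : ENNReal.ofReal (r ^ n) ≠ 0 := by simpa using pow_pos hr n
  refine lintegral_enorm_sq_le_iff.1 ?_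
  rw [← ENNReal.ofReal_pow (Real.sqrt_nonneg _), Real.sq_sqrt (by positivity),
    ← ENNReal.mul_le_mul_iff_right hcancel ENNReal.ofReal_ne_top]
  calc _ = ∫⁻ x in ball 0 (r * b), ‖u x - ⨍ y in ball 0 (r * b), u y‖ₑ ^ 2 := by
        rw [← setLIntegral_ball_comp_smul volume hr b, finrank_euclideanSpace_fin]
    _ ≤ 2 ^ n * (ENNReal.ofReal (2 * (r * b)) ^ 2 * (ENNReal.ofReal _ * _)) := by
        grw [hpoincare, henergy]
    _ = 2 ^ n * (ENNReal.ofReal (r ^ n * ((2 * b) ^ 2 * (3 * b) ^ ((n : ℝ) - 1) * r)) * _) := by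
        rw [← hpow, ENNReal.ofReal_mul (p := _ ^ 2) (by positivity),
          ENNReal.ofReal_pow (by positivity), mul_assoc]
    _ = _ := by
        rw [ENNReal.ofReal_mul (p := 2 ^ n) (by positivity), ENNReal.ofReal_pow (p := 2) (by simp),
          ENNReal.ofReal_ofNat, ENNReal.ofReal_mul (p := r ^ n) (by positivity)]
        ring

lemma tendsto_eLpNorm_comp_smul_sub_of_hasTraceAt (hn : 1 ≤ n) (hu : LocallyIntegrable u volume)
    (hv : LocallyMemLp v 2) (huv : IsDistribGradOn u v univ)
    (hE : eLpNorm v 2 (rieszMeasure n (n - 1)) ≠ ⊤) (ht : HasTraceAt u 0 t) (hb : 0 < b) :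
    Tendsto (fun r : ℝ => eLpNorm (fun z => u (r • z) - t) 2 (volume.restrict (ball 0 b)))
      (𝓝[>] 0) (𝓝 0) := by
  set m : ℝ → ℝ := fun r => ⨍ y in ball (0 : Euc n) (r * b), u y
  set K : ℝ → ℝ := fun r => √(2 ^ n * ((2 * b) ^ 2 * (3 * b) ^ ((n : ℝ) - 1) * r))
  set V : ℝ≥0∞ := volume (ball (0 : Euc n) b) ^ (1 / (2 : ℝ))
  have hscale : Tendsto (fun r : ℝ => r * b) (𝓝[>] 0) (𝓝[>] 0) :=
    tendsto_nhdsWithin_iff.2 ⟨((continuous_mul_const b).tendsto' 0 0 (zero_mul b)).mono_left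
      nhdsWithin_le_nhds, eventually_mem_nhdsWithin.mono fun r (hr : 0 < r) => mul_pos hr hb⟩
  have hK : Tendsto (fun r => ENNReal.ofReal (K r)) (𝓝[>] 0) (𝓝 0) := by
    have hcont : Continuous fun r => ENNReal.ofReal (K r) :=
      ENNReal.continuous_ofReal.comp (by fun_prop)
    exact (hcont.tendsto' 0 0 (by simp [K])).mono_left nhdsWithin_le_nhds
  have hlim : Tendsto (fun r => ENNReal.ofReal (K r) * eLpNorm v 2 (rieszMeasure n (n - 1)) +
      ‖m r - t‖ₑ * V) (𝓝[>] 0) (𝓝 0) := by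
    simpa using (ENNReal.Tendsto.mul_const hK (Or.inr hE)).add
      (ENNReal.Tendsto.mul_const (b := V) ((ht.comp hscale).sub_const t).enorm
        (Or.inr (by finiteness)))
  refine tendsto_of_tendsto_of_tendsto_of_le_of_le' tendsto_const_nhds hlim
    (Eventually.of_forall fun _ => zero_le) ?_
  filter_upwards [self_mem_nhdsWithin] with r (hr : 0 < r)
  have hmeas : AEStronglyMeasurable (fun z => u (r • z)) (volume.restrict (ball 0 b)) :=
    (hu.aestronglyMeasurable.comp_quasiMeasurePreserving
      (Measure.quasiMeasurePreserving_smul volume hr.ne')).restrict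
  calc eLpNorm (fun z => u (r • z) - t) 2 (volume.restrict (ball 0 b))
      = eLpNorm ((fun z => u (r • z) - m r) + fun _ => m r - t) 2 (volume.restrict (ball 0 b)) := by
        congr 1 with z
        simp
    _ ≤ eLpNorm (fun z => u (r • z) - m r) 2 (volume.restrict (ball 0 b)) +
          eLpNorm (fun _ => m r - t) 2 (volume.restrict (ball 0 b)) :=
        eLpNorm_add_le (hmeas.sub aestronglyMeasurable_const) aestronglyMeasurable_const one_le_two
    _ ≤ _ := by
        grw [eLpNorm_comp_smul_sub_average_le hn hu hv huv hr hb]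
        rw [eLpNorm_const' _ two_ne_zero ENNReal.ofNat_ne_top, Measure.restrict_apply_univ,
          ENNReal.toReal_ofNat]

lemma eLpNorm_restrict_sub_le_of_hasTraceAt (hn : 1 ≤ n) (hu : LocallyIntegrable u volume)
    (hv : LocallyMemLp v 2) (huv : IsDistribGradOn u v univ)
    (hE : eLpNorm v 2 (rieszMeasure n (n - 1)) ≠ ⊤) (ht : HasTraceAt u 0 t) (ha : 0 < a)
    (hb : 0 < b) :
    eLpNorm (fun z => u z - t) 2
        ((rieszMeasure n (n + 1)).restrict (ball 0 b \ closedBall 0 a)) ≤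
      2 * eLpNorm v 2 (rieszMeasure n (n - 1)) := by
  set ν := (rieszMeasure n (n + 1)).restrict (ball 0 b \ closedBall 0 a)
  have hν := rieszMeasure_restrict_le (n := n) (p := n + 1) ha (by positivity) b
  have hν_ac : ν ≪ volume :=
    Measure.absolutelyContinuous_restrict.trans (rieszMeasure_absolutelyContinuous n _)
  set M : ℝ≥0∞ := ENNReal.ofReal (a ^ (-((n : ℝ) + 1))) ^ (1 / (2 : ℝ≥0∞)).toReal
  have hsq : Tendsto (fun s : ℝ => s ^ 2) (𝓝[>] 0) (𝓝[>] 0) :=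
    tendsto_nhdsWithin_iff.2 ⟨((continuous_pow 2).tendsto' 0 0 (by simp)).mono_left
      nhdsWithin_le_nhds, eventually_mem_nhdsWithin.mono fun s (hs : 0 < s) => pow_pos hs 2⟩
  have hlim := (ENNReal.Tendsto.const_mul (a := M)
    ((tendsto_eLpNorm_comp_smul_sub_of_hasTraceAt hn hu hv huv hE ht hb).comp hsq)
    (Or.inr (by finiteness))).const_add (2 * eLpNorm v 2 (rieszMeasure n (n - 1)))
  rw [mul_zero, add_zero] at hlim
  refine ge_of_tendsto hlim ?_
  filter_upwards [Ioc_mem_nhdsGT (zero_lt_one' ℝ)] with s hs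
  have hmeas : AEStronglyMeasurable (fun z => u (s ^ 2 • z)) ν :=
    (hu.aestronglyMeasurable.comp_quasiMeasurePreserving
      (Measure.quasiMeasurePreserving_smul volume (pow_pos hs.1 2).ne')).mono_ac hν_ac
  calc eLpNorm (fun z => u z - t) 2 ν
      = eLpNorm ((fun z => u z - u (s ^ 2 • z)) + fun z => u (s ^ 2 • z) - t) 2 ν := by
        congr 1 with z
        simp
    _ ≤ eLpNorm (fun z => u z - u (s ^ 2 • z)) 2 ν + eLpNorm (fun z => u (s ^ 2 • z) - t) 2 ν :=
        eLpNorm_add_le ((hu.aestronglyMeasurable.mono_ac hν_ac).sub hmeas)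
          (hmeas.sub aestronglyMeasurable_const) one_le_two
    _ ≤ _ := add_le_add (eLpNorm_sub_comp_smul_le hn hu hv huv hs.1 hs.2 ha b)
        (eLpNorm_le_of_measure_le_smul hν)

lemma iUnion_ball_diff_closedBall_eq_compl_zero {E : Type*} [NormedAddCommGroup E] :
    ⋃ k : ℕ, ball (0 : E) (k + 1) \ closedBall 0 (1 / (k + 1)) = {0}ᶜ := by
  ext z
  simp only [mem_iUnion, Set.mem_sdiff, mem_ball_zero_iff, mem_closedBall_zero_iff, not_le,
    mem_compl_singleton_iff]
  refine ⟨fun ⟨k, _, hk⟩ => norm_pos_iff.1 (hk.trans' (by positivity)), fun hz => ?_⟩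
  have hlarge : ∀ᶠ k : ℕ in atTop, ‖z‖ < k + 1 :=
    (tendsto_natCast_atTop_atTop.atTop_add tendsto_const_nhds).eventually_gt_atTop _
  have hsmall : ∀ᶠ k : ℕ in atTop, 1 / ((k : ℝ) + 1) < ‖z‖ :=
    tendsto_one_div_add_atTop_nhds_zero_nat.eventually_lt_const (norm_pos_iff.2 hz)
  exact (hlarge.and hsmall).exists

lemma lintegral_enorm_sub_sq_le_of_hasTraceAt_zero (hn : 1 ≤ n) (hu : LocallyIntegrable u volume)
    (hv : LocallyMemLp v 2) (huv : IsDistribGradOn u v univ) (ht : HasTraceAt u 0 t) :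
    ∫⁻ z, ‖u z - t‖ₑ ^ 2 ∂(rieszMeasure n (n + 1)) ≤
      4 * ∫⁻ z, ‖v z‖ₑ ^ 2 ∂(rieszMeasure n (n - 1)) := by
  rcases eq_or_ne (eLpNorm v 2 (rieszMeasure n (n - 1))) ⊤ with hE | hE
  · rw [← eLpNorm_two_pow_two v, hE]
    simp
  set S : ℕ → Set (Euc n) := fun k => ball 0 (k + 1) \ closedBall 0 (1 / (k + 1))
  have hS_mono : Monotone S := fun k l hkl =>
    sdiff_subset_sdiff (ball_subset_ball (by gcongr)) (closedBall_subset_closedBall (by gcongr))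
  have : Nonempty (Fin n) := ⟨⟨0, hn⟩⟩
  have hS_univ : ∀ᵐ z ∂(rieszMeasure n (n + 1)), z ∈ ⋃ k, S k := by
    refine (rieszMeasure_absolutelyContinuous n _).ae_le ?_
    rw [iUnion_ball_diff_closedBall_eq_compl_zero]
    exact compl_mem_ae_iff.2 (measure_singleton 0)
  rw [← Measure.restrict_eq_self_of_ae_mem hS_univ,
    setLIntegral_iUnion_of_directed _ hS_mono.directed_le, ← show (2 : ℝ≥0∞) ^ 2 = 4 by norm_num]
  exact iSup_le fun k => lintegral_enorm_sq_le_iff.2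
    (eLpNorm_restrict_sub_le_of_hasTraceAt hn hu hv huv hE ht (by positivity) (by positivity))

lemma lintegral_rieszKernel_mul_enorm_sub_sq_le (hn : 1 ≤ n) (hu : LocallyIntegrable u volume)
    (hv : LocallyMemLp v 2) (huv : IsDistribGradOn u v univ) {y : Euc n} (ht : HasTraceAt u y t) :
    ∫⁻ x, rieszKernel (n + 1) (x - y) * ‖u x - t‖ₑ ^ 2 ≤
      4 * ∫⁻ x, rieszKernel (n - 1) (x - y) * ‖v x‖ₑ ^ 2 := by
  have hhardy := lintegral_enorm_sub_sq_le_of_hasTraceAt_zero hn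
    (locallyIntegrable_comp_const_add hu y) (hv.comp_const_add y)
    (isDistribGradOn_univ_comp_const_add huv y) (hasTraceAt_zero_comp_const_add ht)
  rw [← setLIntegral_univ, setLIntegral_rieszMeasure _ .univ, setLIntegral_univ,
    ← setLIntegral_univ (fun x => ‖v _‖ₑ ^ 2), setLIntegral_rieszMeasure _ .univ,
    setLIntegral_univ] at hhardy
  rw [← lintegral_add_left_eq_self _ y,
    ← lintegral_add_left_eq_self (fun x => rieszKernel (n - 1) (x - y) * _) y]
  simpa only [add_sub_cancel_left] using hhardy

end PointwiseHardy

/-! ### Potentials of Ahlfors regular sets -/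

section Potentials

variable {n : ℕ} {d C₀ p : ℝ} {Γ : Set (Euc n)} {x y z : Euc n}

/-- The measure `σ`, the restriction of the `d`-dimensional Hausdorff measure to `Γ`. -/
abbrev surfaceMeasure (d : ℝ) (Γ : Set (Euc n)) : Measure (Euc n) := μH[d].restrict Γ

namespace AhlforsRegular

lemma le_surfaceMeasure_ball (hAR : AhlforsRegular n d C₀ Γ) (hy : y ∈ Γ) {r : ℝ} (hr : 0 < r) :
    ENNReal.ofReal (C₀⁻¹ * r ^ d) ≤ surfaceMeasure d Γ (ball y r) := by
  rw [Measure.restrict_apply measurableSet_ball, inter_comm]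
  exact (hAR y hy r hr).1

lemma surfaceMeasure_ball_le (hAR : AhlforsRegular n d C₀ Γ) (hy : y ∈ Γ) {r : ℝ} (hr : 0 < r) :
    surfaceMeasure d Γ (ball y r) ≤ ENNReal.ofReal (C₀ * r ^ d) := by
  rw [Measure.restrict_apply measurableSet_ball, inter_comm]
  exact (hAR y hy r hr).2

lemma isLocallyFiniteMeasure (hAR : AhlforsRegular n d C₀ Γ) (hcl : IsClosed Γ) :
    IsLocallyFiniteMeasure (surfaceMeasure d Γ) := by
  refine ⟨fun x => ?_⟩
  by_cases hx : x ∈ Γ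
  · exact ⟨ball x 1, ball_mem_nhds x one_pos,
      (hAR.surfaceMeasure_ball_le hx one_pos).trans_lt ENNReal.ofReal_lt_top⟩
  · refine ⟨Γᶜ, hcl.isOpen_compl.mem_nhds hx, ?_⟩
    simp [Measure.restrict_apply hcl.isOpen_compl.measurableSet]

lemma volume_eq_zero (hAR : AhlforsRegular n d C₀ Γ) (hdn : d < n) : volume Γ = 0 := by
  refine measure_null_of_locally_null Γ fun x hx =>
    ⟨Γ ∩ ball x 1, inter_mem_nhdsWithin Γ (ball_mem_nhds x one_pos), ?_⟩
  have hac : (volume : Measure (Euc n)) ≪ μH[(Module.finrank ℝ (Euc n) : ℝ)] :=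
    Measure.absolutelyContinuous_isAddHaarMeasure _ _
  refine hac ((Measure.hausdorffMeasure_zero_or_top (d₁ := d) ?_ _).resolve_right ?_)
  · simpa using hdn
  · exact ((hAR x hx 1 one_pos).2.trans_lt ENNReal.ofReal_lt_top).ne

lemma le_setLIntegral_rieszKernel (hAR : AhlforsRegular n d C₀ Γ) (hne : Γ.Nonempty)
    (hcl : IsClosed Γ) (hp : 0 ≤ p) (hz : z ∉ Γ) :
    ENNReal.ofReal (C₀⁻¹ * 2 ^ (-p)) * ENNReal.ofReal (infDist z Γ ^ (d - p)) ≤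
      ∫⁻ y in ball z (2 * infDist z Γ), rieszKernel p (z - y) ∂(surfaceMeasure d Γ) := by
  obtain ⟨y, hy, hzy⟩ := hcl.exists_infDist_eq_dist hne z
  set δ := infDist z Γ
  have hδ : 0 < δ := (hcl.notMem_iff_infDist_pos hne).1 hz
  have hsub : ball y δ ⊆ ball z (2 * δ) := by
    refine ball_subset_ball' (le_of_eq ?_)
    rw [dist_comm y z, ← hzy, two_mul]
  have hkernel : ∀ᵐ y' ∂(surfaceMeasure d Γ).restrict (ball y δ),
      ENNReal.ofReal ((2 * δ) ^ (-p)) ≤ rieszKernel p (z - y') := by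
    filter_upwards [ae_restrict_of_ae (ae_restrict_mem hcl.measurableSet),
      ae_restrict_mem measurableSet_ball] with y' hy' hball
    refine le_rieszKernel hp (sub_ne_zero.2 fun h => hz (h ▸ hy')) ?_
    rw [← dist_eq_norm, dist_comm]
    exact (hsub hball).le
  calc ENNReal.ofReal (C₀⁻¹ * 2 ^ (-p)) * ENNReal.ofReal (δ ^ (d - p))
      = ENNReal.ofReal ((2 * δ) ^ (-p)) * ENNReal.ofReal (C₀⁻¹ * δ ^ d) := by
        rw [← ENNReal.ofReal_mul' (by positivity), ← ENNReal.ofReal_mul (by positivity),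
          Real.mul_rpow zero_le_two hδ.le, sub_eq_add_neg, Real.rpow_add hδ]
        ring_nf
    _ ≤ ENNReal.ofReal ((2 * δ) ^ (-p)) * surfaceMeasure d Γ (ball y δ) := by
        grw [hAR.le_surfaceMeasure_ball hy hδ]
    _ = ∫⁻ _ in ball y δ, ENNReal.ofReal ((2 * δ) ^ (-p)) ∂(surfaceMeasure d Γ) :=
        (setLIntegral_const _ _).symm
    _ ≤ ∫⁻ y' in ball y δ, rieszKernel p (z - y') ∂(surfaceMeasure d Γ) :=
        lintegral_mono_ae hkernel
    _ ≤ _ := lintegral_mono_set hsub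

end AhlforsRegular

lemma rieszKernel_sub_le_tsum_indicator_ball {r : ℝ} (hr : 0 < r) (hp : 0 ≤ p) (hxz : dist x z ≤ r)
    (hyz : r ≤ dist z y) :
    rieszKernel p (z - y) ≤ ∑' k : ℕ, (ball x (2 ^ (k + 2) * r)).indicator
      (fun _ => ENNReal.ofReal ((2 ^ k * r) ^ (-p))) y := by
  obtain ⟨k, hk, hk'⟩ := exists_nat_pow_near (x := dist z y / r) ((one_le_div hr).2 hyz)
    (one_lt_two (α := ℝ))
  rw [le_div_iff₀ hr] at hk
  rw [div_lt_iff₀ hr] at hk'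
  have hmem : y ∈ ball x (2 ^ (k + 2) * r) := by
    have hpow : (2 : ℝ) ^ (k + 2) * r = 2 ^ (k + 1) * r + 2 ^ (k + 1) * r := by ring
    calc dist y x ≤ dist z y + dist x z := by
          simpa only [dist_comm y z, dist_comm z x] using dist_triangle y z x
      _ < 2 ^ (k + 1) * r + 2 ^ (k + 1) * r :=
          add_lt_add_of_lt_of_le hk' (hxz.trans (le_mul_of_one_le_left hr.le
            (one_le_pow₀ one_le_two)))
      _ = 2 ^ (k + 2) * r := hpow.symm
  calc rieszKernel p (z - y) ≤ ENNReal.ofReal ((2 ^ k * r) ^ (-p)) :=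
        rieszKernel_le (by positivity) hp (by rwa [← dist_eq_norm])
    _ = (ball x (2 ^ (k + 2) * r)).indicator
          (fun _ => ENNReal.ofReal ((2 ^ k * r) ^ (-p))) y := by rw [indicator_of_mem hmem]
    _ ≤ _ := ENNReal.le_tsum k

lemma dyadic_rpow_neg_mul_rpow {r : ℝ} (hr : 0 < r) (d p : ℝ) (k : ℕ) :
    (2 ^ k * r) ^ (-p) * (2 ^ (k + 2) * r) ^ d = 4 ^ d * r ^ (d - p) * (2 ^ (d - p)) ^ k := by
  have hscale : (2 : ℝ) ^ (k + 2) * r = 4 * (2 ^ k * r) := by ring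
  rw [hscale, Real.mul_rpow (x := 4) (by positivity) (by positivity),
    Real.rpow_pow_comm (by positivity), mul_assoc (4 ^ d), ← Real.mul_rpow hr.le (by positivity),
    mul_comm r, sub_eq_neg_add, Real.rpow_add (by positivity)]
  ring

lemma AhlforsRegular.exists_lintegral_rieszKernel_le (hAR : AhlforsRegular n d C₀ Γ)
    (hne : Γ.Nonempty) (hcl : IsClosed Γ) (hp : 0 ≤ p) (hdp : d < p) :
    ∃ C : ℝ≥0∞, C ≠ ⊤ ∧ ∀ z ∉ Γ, ∫⁻ y, rieszKernel p (z - y) ∂(surfaceMeasure d Γ) ≤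
      C * ENNReal.ofReal (infDist z Γ ^ (d - p)) := by
  set q : ℝ := 2 ^ (d - p)
  have hq : ENNReal.ofReal q < 1 := ENNReal.ofReal_lt_one.2
    (Real.rpow_lt_one_of_one_lt_of_neg one_lt_two (sub_neg.2 hdp))
  refine ⟨ENNReal.ofReal (C₀ * 4 ^ d) * (1 - ENNReal.ofReal q)⁻¹,
    ENNReal.mul_ne_top ENNReal.ofReal_ne_top (ENNReal.inv_ne_top.2 (tsub_pos_of_lt hq).ne'),
    fun z hz => ?_⟩
  obtain ⟨x, hx, hzx⟩ := hcl.exists_infDist_eq_dist hne z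
  set δ := infDist z Γ
  have hδ : 0 < δ := (hcl.notMem_iff_infDist_pos hne).1 hz
  calc ∫⁻ y, rieszKernel p (z - y) ∂(surfaceMeasure d Γ)
      ≤ ∫⁻ y, ∑' k : ℕ, (ball x (2 ^ (k + 2) * δ)).indicator
          (fun _ => ENNReal.ofReal ((2 ^ k * δ) ^ (-p))) y ∂(surfaceMeasure d Γ) := by
        refine lintegral_mono_ae ?_
        filter_upwards [ae_restrict_mem hcl.measurableSet] with y hy
        exact rieszKernel_sub_le_tsum_indicator_ball hδ hp (by rw [dist_comm, hzx])
          (infDist_le_dist_of_mem hy)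
    _ = ∑' k : ℕ, ENNReal.ofReal ((2 ^ k * δ) ^ (-p)) *
          surfaceMeasure d Γ (ball x (2 ^ (k + 2) * δ)) := by
        rw [lintegral_tsum fun k => (measurable_const.indicator measurableSet_ball).aemeasurable]
        simp only [lintegral_indicator measurableSet_ball, setLIntegral_const]
    _ ≤ ∑' k : ℕ, ENNReal.ofReal (C₀ * 4 ^ d) * ENNReal.ofReal (δ ^ (d - p)) *
          ENNReal.ofReal q ^ k := by
        refine ENNReal.tsum_le_tsum fun k => ?_
        grw [hAR.surfaceMeasure_ball_le hx (by positivity)]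
        rw [← ENNReal.ofReal_pow (by positivity), ← ENNReal.ofReal_mul (by positivity),
          ← ENNReal.ofReal_mul' (by positivity), ← ENNReal.ofReal_mul' (by positivity)]
        refine ENNReal.ofReal_le_ofReal (le_of_eq ?_)
        linear_combination C₀ * dyadic_rpow_neg_mul_rpow hδ d p k
    _ = _ := by
        rw [ENNReal.tsum_mul_left, ENNReal.tsum_geometric]
        ring

lemma setLIntegral_rieszKernel_lt_top (hn : 1 ≤ n) (hp : p < n) (R : ℝ) :
    ∫⁻ z in ball (0 : Euc n) R, rieszKernel p z < ⊤ := by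
  have hint : IntegrableOn (fun z : Euc n => ‖z‖ ^ (-p)) (ball 0 R) volume :=
    integrableOn_ball_of_norm_le_rpow (C := 1) (α := p) (by simpa using hn) (by simpa using hp)
      (Eventually.of_forall fun x => by
        rw [one_mul, Real.norm_of_nonneg (Real.rpow_nonneg (norm_nonneg x) _)])
      (Measurable.aestronglyMeasurable (by fun_prop))
  exact (hasFiniteIntegral_iff_ofReal
    (Eventually.of_forall fun x => Real.rpow_nonneg (norm_nonneg x) _)).1 hint.2

lemma setLIntegral_setLIntegral_rieszKernel_lt_top (hn : 1 ≤ n) (hp : p < n)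
    (μ : Measure (Euc n)) [IsLocallyFiniteMeasure μ] (R S : ℝ) :
    ∫⁻ z in ball (0 : Euc n) R, ∫⁻ y in ball 0 S, rieszKernel p (z - y) ∂μ < ⊤ := by
  have hmeas : Measurable fun q : Euc n × Euc n => rieszKernel p (q.1 - q.2) :=
    (measurable_rieszKernel p).comp (measurable_fst.sub measurable_snd)
  rw [lintegral_lintegral_swap hmeas.aemeasurable]
  calc ∫⁻ y in ball 0 S, (∫⁻ z in ball (0 : Euc n) R, rieszKernel p (z - y)) ∂μ
      ≤ ∫⁻ _ in ball 0 S, (∫⁻ z in ball (0 : Euc n) (R + S), rieszKernel p z) ∂μ := by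
        refine setLIntegral_mono' measurableSet_ball fun y hy => ?_
        rw [← (measurePreserving_sub_right volume y).setLIntegral_comp_preimage measurableSet_ball
          (measurable_rieszKernel p)]
        refine lintegral_mono_set fun z hz => ?_
        rw [mem_ball_zero_iff] at hy hz
        exact mem_ball_zero_iff.2 ((norm_sub_le z y).trans_lt (add_lt_add hz hy))
    _ = (∫⁻ z in ball (0 : Euc n) (R + S), rieszKernel p z) * μ (ball 0 S) :=
        setLIntegral_const _ _
    _ < ⊤ := ENNReal.mul_lt_top (setLIntegral_rieszKernel_lt_top hn hp _) measure_ball_lt_top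

lemma infDist_lt_of_mem_ball (hy : y ∈ Γ) {R : ℝ} (hx : x ∈ ball 0 R) :
    infDist x Γ < R + ‖y‖ := by
  rw [mem_ball_zero_iff] at hx
  calc infDist x Γ ≤ dist x y := infDist_le_dist_of_mem hy
    _ ≤ ‖x‖ + ‖y‖ := dist_le_norm_add_norm x y
    _ < R + ‖y‖ := by gcongr

-- The potential of order `d + 1` is comparable to `δ⁻¹`, and its kernel is locally integrable
-- because `d + 1 < n`.
lemma AhlforsRegular.setLIntegral_inv_infDist_lt_top (hAR : AhlforsRegular n d C₀ Γ) (hn : 1 ≤ n)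
    (hd : 0 ≤ d) (hdn : d + 1 < n) (hC₀ : 0 < C₀) (hne : Γ.Nonempty) (hcl : IsClosed Γ) (R : ℝ) :
    ∫⁻ z in ball 0 R, ENNReal.ofReal (infDist z Γ)⁻¹ < ⊤ := by
  have := hAR.isLocallyFiniteMeasure hcl
  obtain ⟨y, hy⟩ := id hne
  set S := 2 * (R + ‖y‖) + R
  set c := ENNReal.ofReal (C₀⁻¹ * 2 ^ (-(d + 1)))
  have hc : c ≠ 0 := (ENNReal.ofReal_pos.2 (by positivity)).ne'
  have hpotential : ∀ᵐ z ∂(volume.restrict (ball (0 : Euc n) R)), ENNReal.ofReal (infDist z Γ)⁻¹ ≤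
      c⁻¹ * ∫⁻ y in ball 0 S, rieszKernel (d + 1) (z - y) ∂(surfaceMeasure d Γ) := by
    have hnotMem : ∀ᵐ z : Euc n, z ∉ Γ :=
      measure_eq_zero_iff_ae_notMem.1 (hAR.volume_eq_zero (by linarith))
    filter_upwards [ae_restrict_of_ae hnotMem, ae_restrict_mem measurableSet_ball] with z hz hball
    have hsub : ball z (2 * infDist z Γ) ⊆ ball 0 S := by
      refine ball_subset_ball' ?_
      rw [dist_zero_right]
      grw [(infDist_lt_of_mem_ball hy hball).le, (mem_ball_zero_iff.1 hball).le]
    rw [← ENNReal.inv_mul_cancel_left (b := ENNReal.ofReal (infDist z Γ)⁻¹) hc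
      ENNReal.ofReal_ne_top, ← Real.rpow_neg_one, show (-1 : ℝ) = d - (d + 1) by ring]
    gcongr
    exact (hAR.le_setLIntegral_rieszKernel hne hcl (by positivity) hz).trans
      (lintegral_mono_set hsub)
  refine (lintegral_mono_ae hpotential).trans_lt ?_
  rw [lintegral_const_mul' _ _ (ENNReal.inv_ne_top.2 hc)]
  exact ENNReal.mul_lt_top (ENNReal.inv_lt_top.2 (pos_iff_ne_zero.2 hc))
    (setLIntegral_setLIntegral_rieszKernel_lt_top hn hdn _ R S)

end Potentials

/-! ### Cutoff functions -/

section DistRamp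

variable {E : Type*} [PseudoMetricSpace E] {Γ : Set E} {x : E}

/-- A Lipschitz function that vanishes where `dist(x, Γ) ≤ 2 / (k + 1)` and equals `1` where
`dist(x, Γ) ≥ 3 / (k + 1)`. -/
def distRamp (Γ : Set E) (k : ℕ) (x : E) : ℝ := max 0 (min 1 ((k + 1) * infDist x Γ - 2))

lemma distRamp_mem_Icc (Γ : Set E) (k : ℕ) (x : E) : distRamp Γ k x ∈ Icc 0 1 :=
  ⟨le_max_left _ _, max_le zero_le_one (min_le_left _ _)⟩

lemma lipschitzWith_distRamp (Γ : Set E) (k : ℕ) : LipschitzWith (k + 1) (distRamp Γ k) := by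
  refine LipschitzWith.const_max (LipschitzWith.const_min (LipschitzWith.of_dist_le_mul
    fun x y => ?_) 1) 0
  have hdist := (lipschitz_infDist_pt Γ).dist_le_mul x y
  simp only [NNReal.coe_one, one_mul] at hdist
  rw [dist_sub_right, Real.dist_eq, ← mul_sub, abs_mul, ← Real.dist_eq,
    abs_of_nonneg (by positivity)]
  push_cast
  gcongr

lemma abs_infDist_sub_lt {y : E} {r : ℝ} (hy : y ∈ ball x r) :
    |infDist y Γ - infDist x Γ| < r := by
  have hdist := (lipschitz_infDist_pt Γ).dist_le_mul y x
  simp only [NNReal.coe_one, one_mul] at hdist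
  exact hdist.trans_lt hy

end DistRamp

section FarCutoff

variable {E : Type*} [NormedAddCommGroup E] [InnerProductSpace ℝ E] [FiniteDimensional ℝ E] {x : E}

/-- A smooth cutoff function on the ball of radius `k + 1` around the origin. -/
def farCutoff (k : ℕ) (x : E) : ℝ :=
  (⟨1, 2, one_pos, one_lt_two⟩ : ContDiffBump (0 : E)) (((k : ℝ) + 1)⁻¹ • x)

lemma contDiff_farCutoff (k : ℕ) : ContDiff ℝ ∞ (farCutoff k : E → ℝ) :=
  (ContDiffBump.contDiff _).comp (contDiff_const_smul _)

lemma farCutoff_mem_Icc (k : ℕ) (x : E) : farCutoff k x ∈ Icc 0 1 :=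
  ⟨ContDiffBump.nonneg _, ContDiffBump.le_one _⟩

lemma farCutoff_eq_zero {k : ℕ} (hx : 2 * ((k : ℝ) + 1) ≤ ‖x‖) : farCutoff k x = 0 := by
  refine ContDiffBump.zero_of_le_dist _ ?_
  rw [dist_zero_right, norm_smul_of_nonneg (by positivity), inv_mul_eq_div]
  exact (le_div_iff₀ (by positivity)).2 hx

lemma hasCompactSupport_farCutoff (k : ℕ) : HasCompactSupport (farCutoff k : E → ℝ) :=
  HasCompactSupport.intro (isCompact_closedBall 0 (2 * ((k : ℝ) + 1))) fun _ hx =>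
    farCutoff_eq_zero (not_le.1 (mem_closedBall_zero_iff.not.1 hx)).le

lemma farCutoff_eventuallyEq_one {k : ℕ} (hx : ‖x‖ < k + 1) : farCutoff k =ᶠ[𝓝 x] fun _ => 1 := by
  filter_upwards [isOpen_ball.mem_nhds (mem_ball_zero_iff.2 hx)] with y hy
  refine ContDiffBump.one_of_mem_closedBall _ ?_
  rw [mem_closedBall_zero_iff, norm_smul_of_nonneg (by positivity), inv_mul_eq_div]
  exact (div_le_one (by positivity)).2 (mem_ball_zero_iff.1 hy).le

lemma exists_norm_gradient_farCutoff_mul_dist_le (y : E) :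
    ∃ C, ∀ (k : ℕ) (x : E), ‖∇ (farCutoff k) x‖ * dist x y ≤ C := by
  set B : ContDiffBump (0 : E) := ⟨1, 2, one_pos, one_lt_two⟩
  have hB : ContDiff ℝ ∞ B := B.contDiff
  obtain ⟨M, hM⟩ := (B.hasCompactSupport.fderiv ℝ).exists_bound_of_continuous
    (hB.continuous_fderiv (by simp))
  have hM₀ : 0 ≤ M := (norm_nonneg _).trans (hM 0)
  refine ⟨M * (2 + ‖y‖), fun k x => ?_⟩
  set r : ℝ := ((k : ℝ) + 1)⁻¹
  have hr : r ≤ 1 := inv_le_one_of_one_le₀ (by simp)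
  by_cases hx : x ∈ tsupport (farCutoff k : E → ℝ)
  · have hderiv : fderiv ℝ (farCutoff k : E → ℝ) x = r • fderiv ℝ B (r • x) :=
      fderiv_comp_smul r
    have hnorm : r * ‖x‖ ≤ 2 := by
      have hball : tsupport (farCutoff k : E → ℝ) ⊆ closedBall 0 (2 * ((k : ℝ) + 1)) :=
        closure_minimal (fun z hz => mem_closedBall_zero_iff.2
          (not_le.1 fun h => hz (farCutoff_eq_zero h)).le) isClosed_closedBall
      rw [inv_mul_le_iff₀ (by positivity), mul_comm]
      exact mem_closedBall_zero_iff.1 (hball hx)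
    calc ‖∇ (farCutoff k) x‖ * dist x y
        = ‖fderiv ℝ B (r • x)‖ * (r * dist x y) := by
          rw [norm_gradient, hderiv, norm_smul, Real.norm_of_nonneg (by positivity)]
          ring
      _ ≤ M * (r * (‖x‖ + ‖y‖)) := by
          gcongr
          · exact hM _
          · exact dist_le_norm_add_norm x y
      _ ≤ M * (2 + 1 * ‖y‖) := by
          rw [mul_add]
          gcongr
      _ = M * (2 + ‖y‖) := by rw [one_mul]
  · rw [gradient_eq_zero_of_notMem_tsupport hx, norm_zero, zero_mul]
    positivity

end FarCutoff

section Cutoff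

variable {E : Type*} [NormedAddCommGroup E] [InnerProductSpace ℝ E] [FiniteDimensional ℝ E]
  [MeasurableSpace E] [BorelSpace E] {Γ : Set E} {x : E}

lemma mollify_mem_Icc {f : E → ℝ} (j : ℕ) (hf : LocallyIntegrable f volume)
    (hf_mem : ∀ x, f x ∈ Icc 0 1) (x : E) : mollify j f x ∈ Icc 0 1 := by
  refine ⟨integral_nonneg fun t => mul_nonneg (mollifier_nonneg j t) (hf_mem _).1, ?_⟩
  calc mollify j f x ≤ ∫ t : E, mollifier j t :=
        integral_mono (integrable_mollifier_smul j hf x) (mollifierBump E j).integrable_normed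
          fun t => mul_le_of_le_one_right (mollifier_nonneg j t) (hf_mem _).2
    _ = 1 := (mollifierBump E j).integral_normed

lemma mollify_distRamp_eq_zero {k : ℕ} (hx : (k + 1) * infDist x Γ < 1) :
    mollify k (distRamp Γ k) x = 0 := by
  refine mollify_eq_of_forall_mem_ball fun y hy => max_eq_left ((min_le_right _ _).trans ?_)
  have hy := (abs_lt.1 (abs_infDist_sub_lt (Γ := Γ) hy)).2
  rw [lt_div_iff₀ (by positivity)] at hy
  linarith

lemma mollify_distRamp_eq_one {k : ℕ} (hx : 4 < (k + 1) * infDist x Γ) :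
    mollify k (distRamp Γ k) x = 1 := by
  refine mollify_eq_of_forall_mem_ball fun y hy => ?_
  have hy := (abs_lt.1 (abs_infDist_sub_lt (Γ := Γ) hy)).1
  rw [neg_lt, lt_div_iff₀ (by positivity)] at hy
  rw [distRamp, min_eq_left (by linarith), max_eq_right zero_le_one]

lemma mollify_distRamp_eventuallyEq_one {k : ℕ} (hx : 4 < (k + 1) * infDist x Γ) :
    mollify k (distRamp Γ k) =ᶠ[𝓝 x] fun _ => 1 := by
  have hopen : IsOpen {y : E | 4 < (k + 1) * infDist y Γ} :=
    isOpen_lt continuous_const (continuous_const.mul (continuous_infDist_pt Γ))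
  filter_upwards [hopen.mem_nhds hx] with y hy using mollify_distRamp_eq_one hy

lemma tsupport_mollify_distRamp_subset (Γ : Set E) (k : ℕ) :
    tsupport (mollify k (distRamp Γ k)) ⊆ Γᶜ := by
  have hclosed : IsClosed {y : E | 1 ≤ (k + 1) * infDist y Γ} :=
    isClosed_le continuous_const (continuous_const.mul (continuous_infDist_pt Γ))
  have hsub : tsupport (mollify k (distRamp Γ k)) ⊆ {y | 1 ≤ (k + 1) * infDist y Γ} :=
    closure_minimal (fun y hy => not_lt.1 fun hlt => hy (mollify_distRamp_eq_zero hlt)) hclosed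
  intro x hx hxΓ
  have := hsub hx
  norm_num [infDist_zero_of_mem hxΓ] at this

lemma norm_gradient_mollify_distRamp_mul_infDist_le (Γ : Set E) (k : ℕ) (x : E) :
    ‖∇ (mollify k (distRamp Γ k)) x‖ * infDist x Γ ≤ 4 := by
  rw [norm_gradient]
  rcases lt_or_ge 4 ((k + 1) * infDist x Γ) with hx | hx
  · rw [(mollify_distRamp_eventuallyEq_one hx).fderiv_eq]
    simp
  · have hlip := norm_fderiv_le_of_lipschitz ℝ (x₀ := x)
      (lipschitzWith_mollify k (lipschitzWith_distRamp Γ k))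
    push_cast at hlip
    grw [hlip, hx]
    exact infDist_nonneg

/-- A smooth cutoff function with compact support in `Γᶜ`, equal to `1` near each given point of
`Γᶜ` once `k` is large, and with gradient `O(1 / dist(x, Γ))` uniformly in `k`. -/
def cutoff (Γ : Set E) (k : ℕ) (x : E) : ℝ := mollify k (distRamp Γ k) x * farCutoff k x

lemma locallyIntegrable_distRamp (Γ : Set E) (k : ℕ) : LocallyIntegrable (distRamp Γ k) volume :=
  (lipschitzWith_distRamp Γ k).continuous.locallyIntegrable

lemma contDiff_cutoff (Γ : Set E) (k : ℕ) : ContDiff ℝ ∞ (cutoff Γ k) :=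
  (contDiff_mollify k (locallyIntegrable_distRamp Γ k)).mul (contDiff_farCutoff k)

lemma hasCompactSupport_cutoff (Γ : Set E) (k : ℕ) : HasCompactSupport (cutoff Γ k) :=
  (hasCompactSupport_farCutoff k).mul_left

lemma tsupport_cutoff_subset (Γ : Set E) (k : ℕ) : tsupport (cutoff Γ k) ⊆ Γᶜ :=
  tsupport_mul_subset_left.trans (tsupport_mollify_distRamp_subset Γ k)

lemma cutoff_mem_Icc (Γ : Set E) (k : ℕ) (x : E) : cutoff Γ k x ∈ Icc 0 1 :=
  unitInterval.mul_mem
    (mollify_mem_Icc k (locallyIntegrable_distRamp Γ k) (distRamp_mem_Icc Γ k) x)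
    (farCutoff_mem_Icc k x)

lemma eventually_cutoff_eventuallyEq_one (hne : Γ.Nonempty) (hcl : IsClosed Γ) (hx : x ∉ Γ) :
    ∀ᶠ k in atTop, cutoff Γ k =ᶠ[𝓝 x] fun _ => 1 := by
  have hδ : 0 < infDist x Γ := (hcl.notMem_iff_infDist_pos hne).1 hx
  have hlim : Tendsto (fun k : ℕ => (k : ℝ) + 1) atTop atTop :=
    tendsto_natCast_atTop_atTop.atTop_add tendsto_const_nhds
  filter_upwards [(hlim.atTop_mul_const hδ).eventually_gt_atTop 4,
    hlim.eventually_gt_atTop ‖x‖] with k hnear hfar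
  filter_upwards [mollify_distRamp_eventuallyEq_one hnear, farCutoff_eventuallyEq_one hfar]
    with y hy_near hy_far
  rw [cutoff, hy_near, hy_far, one_mul]

lemma exists_norm_gradient_cutoff_le (hne : Γ.Nonempty) (hcl : IsClosed Γ) :
    ∃ C : ℝ, ∀ k : ℕ, ∀ x ∉ Γ, ‖∇ (cutoff Γ k) x‖ ≤ C * (infDist x Γ)⁻¹ := by
  obtain ⟨y, hy⟩ := id hne
  obtain ⟨C, hC⟩ := exists_norm_gradient_farCutoff_mul_dist_le y
  refine ⟨C + 4, fun k x hx => ?_⟩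
  have hδ : 0 < infDist x Γ := (hcl.notMem_iff_infDist_pos hne).1 hx
  set ψ := mollify k (distRamp Γ k)
  have hψ : HasGradientAt ψ (∇ ψ x) x :=
    (differentiable_mollify k (locallyIntegrable_distRamp Γ k) x).hasGradientAt
  have hφ : HasGradientAt (farCutoff k) (∇ (farCutoff k) x) x :=
    ((contDiff_farCutoff k).differentiable (by simp) x).hasGradientAt
  have hψ_mem := mollify_mem_Icc k (locallyIntegrable_distRamp Γ k) (distRamp_mem_Icc Γ k) x
  have hφ_mem : farCutoff k x ∈ Icc 0 1 := farCutoff_mem_Icc k x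
  rw [← div_eq_mul_inv, le_div_iff₀ hδ]
  calc ‖∇ (cutoff Γ k) x‖ * infDist x Γ
      = ‖ψ x • ∇ (farCutoff k) x + farCutoff k x • ∇ ψ x‖ * infDist x Γ := by
        rw [show ∇ (cutoff Γ k) x = _ from (hasGradientAt_mul hψ hφ).gradient]
    _ ≤ (1 * ‖∇ (farCutoff k) x‖ + 1 * ‖∇ ψ x‖) * infDist x Γ := by
        gcongr
        refine (norm_add_le _ _).trans ?_
        rw [norm_smul_of_nonneg hψ_mem.1, norm_smul_of_nonneg hφ_mem.1]
        gcongr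
        · exact hψ_mem.2
        · exact hφ_mem.2
    _ = ‖∇ (farCutoff k) x‖ * infDist x Γ + ‖∇ ψ x‖ * infDist x Γ := by ring
    _ ≤ ‖∇ (farCutoff k) x‖ * dist x y + 4 := by
        gcongr
        · exact infDist_le_dist_of_mem hy
        · exact norm_gradient_mollify_distRamp_mul_infDist_le Γ k x
    _ ≤ C + 4 := by grw [hC k x]

end Cutoff

/-! ### Removability of `Γ` -/

section Removability

variable {n : ℕ} {Γ : Set (Euc n)} {u : Euc n → ℝ} {v : Euc n → Euc n} {φ : Euc n → ℝ}

lemma tendsto_cutoff_nhds_one (hne : Γ.Nonempty) (hcl : IsClosed Γ) {x : Euc n} (hx : x ∉ Γ) :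
    Tendsto (fun k => cutoff Γ k x) atTop (𝓝 1) :=
  tendsto_const_nhds.congr' <| by
    filter_upwards [eventually_cutoff_eventuallyEq_one hne hcl hx] with k hk
    exact hk.eq_of_nhds.symm

lemma tendsto_gradient_cutoff_nhds_zero (hne : Γ.Nonempty) (hcl : IsClosed Γ) {x : Euc n}
    (hx : x ∉ Γ) : Tendsto (fun k => ∇ (cutoff Γ k) x) atTop (𝓝 0) :=
  tendsto_const_nhds.congr' <| by
    filter_upwards [eventually_cutoff_eventuallyEq_one hne hcl hx] with k hk
    rw [hk.gradient_eq, gradient_fun_const]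

lemma gradient_cutoff_mul (k : ℕ) (hφ : Differentiable ℝ φ) (x : Euc n) :
    ∇ (fun y => cutoff Γ k y * φ y) x = cutoff Γ k x • ∇ φ x + φ x • ∇ (cutoff Γ k) x :=
  (hasGradientAt_mul ((contDiff_cutoff Γ k).differentiable (by simp) x).hasGradientAt
    (hφ x).hasGradientAt).gradient

lemma norm_cutoff_le_one (Γ : Set (Euc n)) (k : ℕ) (x : Euc n) : ‖cutoff Γ k x‖ ≤ 1 := by
  rw [Real.norm_of_nonneg (cutoff_mem_Icc Γ k x).1]
  exact (cutoff_mem_Icc Γ k x).2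

lemma tendsto_integral_smul_gradient_cutoff_mul (hne : Γ.Nonempty) (hcl : IsClosed Γ)
    (hvol : volume Γ = 0) (hδ : LocallyMemLp (fun x => (infDist x Γ)⁻¹) 1)
    (hum : AEStronglyMeasurable u volume) {M : ℝ} (huM : ∀ x, |u x| ≤ M) (hφ : ContDiff ℝ ∞ φ)
    (hφc : HasCompactSupport φ) :
    Tendsto (fun k => ∫ x, u x • ∇ (fun y => cutoff Γ k y * φ y) x) atTop
      (𝓝 (∫ x, u x • ∇ φ x)) := by
  obtain ⟨C, hC⟩ := exists_norm_gradient_cutoff_le hne hcl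
  have hM : 0 ≤ M := (abs_nonneg _).trans (huM 0)
  have hgrad_int : Integrable (∇ φ) :=
    (continuous_gradient hφ (by simp)).integrable_of_hasCompactSupport
      (hasCompactSupport_gradient hφc)
  have hδ_int : Integrable fun x => φ x • (infDist x Γ)⁻¹ :=
    memLp_one_iff_integrable.1 (hδ.memLp_smul_of_hasCompactSupport hφ.continuous hφc)
  have hnotMem : ∀ᵐ x ∂(volume : Measure (Euc n)), x ∉ Γ := measure_eq_zero_iff_ae_notMem.1 hvol
  refine tendsto_integral_of_dominated_convergence
    (fun x => M * (‖∇ φ x‖ + C * ‖φ x • (infDist x Γ)⁻¹‖)) (fun k => hum.smul ?_)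
    ((hgrad_int.norm.add (hδ_int.norm.const_mul C)).const_mul M) (fun k => ?_) ?_
  · exact (continuous_gradient ((contDiff_cutoff Γ k).mul hφ) (by simp)).aestronglyMeasurable
  · filter_upwards [hnotMem] with x hx
    rw [norm_smul, gradient_cutoff_mul k (hφ.differentiable (by simp))]
    refine mul_le_mul (huM x) ((norm_add_le _ _).trans (add_le_add ?_ ?_)) (norm_nonneg _) hM
    · rw [norm_smul]
      exact mul_le_of_le_one_left (norm_nonneg _) (norm_cutoff_le_one Γ k x)
    · calc ‖φ x • ∇ (cutoff Γ k) x‖ ≤ ‖φ x‖ * (C * (infDist x Γ)⁻¹) := by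
            rw [norm_smul]
            gcongr
            exact hC k x hx
        _ = C * ‖φ x • (infDist x Γ)⁻¹‖ := by
            rw [norm_smul, Real.norm_of_nonneg (inv_nonneg.2 infDist_nonneg), mul_left_comm]
  · filter_upwards [hnotMem] with x hx
    simp_rw [gradient_cutoff_mul _ (hφ.differentiable (by simp))]
    simpa using (((tendsto_cutoff_nhds_one hne hcl hx).smul_const (∇ φ x)).add
      ((tendsto_gradient_cutoff_nhds_zero hne hcl hx).const_smul (φ x))).const_smul (u x)

lemma tendsto_integral_cutoff_mul_smul (hne : Γ.Nonempty) (hcl : IsClosed Γ) (hvol : volume Γ = 0)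
    (hφv : Integrable fun x => φ x • v x) :
    Tendsto (fun k => ∫ x, (cutoff Γ k x * φ x) • v x) atTop (𝓝 (∫ x, φ x • v x)) := by
  simp_rw [mul_smul]
  refine tendsto_integral_of_dominated_convergence (fun x => ‖φ x • v x‖) (fun k =>
    (contDiff_cutoff Γ k).continuous.aestronglyMeasurable.smul hφv.1) hφv.norm
    (fun k => Eventually.of_forall fun x => ?_) ?_
  · rw [norm_smul]
    exact mul_le_of_le_one_left (norm_nonneg _) (norm_cutoff_le_one Γ k x)
  · filter_upwards [measure_eq_zero_iff_ae_notMem.1 hvol] with x hx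
    simpa using (tendsto_cutoff_nhds_one hne hcl hx).smul_const (φ x • v x)

lemma isDistribGradOn_univ_of_compl_of_bounded (hne : Γ.Nonempty) (hcl : IsClosed Γ)
    (hvol : volume Γ = 0) (hδ : LocallyMemLp (fun x => (infDist x Γ)⁻¹) 1)
    (hum : AEStronglyMeasurable u volume) {M : ℝ} (huM : ∀ x, |u x| ≤ M) (hv : LocallyMemLp v 1)
    (h : IsDistribGradOn u v Γᶜ) : IsDistribGradOn u v univ := by
  refine isDistribGradOn_iff_integral.2 fun φ hφ hφc _ => ?_
  have hφv := memLp_one_iff_integrable.1 (hv.memLp_smul_of_hasCompactSupport hφ.continuous hφc)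
  have hparts : ∀ k, ∫ x, u x • ∇ (fun y => cutoff Γ k y * φ y) x =
      -∫ x, (cutoff Γ k x * φ x) • v x := fun k =>
    isDistribGradOn_iff_integral.1 h _ ((contDiff_cutoff Γ k).mul hφ) hφc.mul_left
      (tsupport_mul_subset_left.trans (tsupport_cutoff_subset Γ k))
  have hlim := tendsto_integral_smul_gradient_cutoff_mul hne hcl hvol hδ hum huM hφ hφc
  simp_rw [hparts] at hlim
  exact tendsto_nhds_unique hlim (tendsto_integral_cutoff_mul_smul hne hcl hvol hφv).neg

/-- A smooth bounded truncation of the identity at height `k + 1`. -/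
def sinTrunc (k : ℕ) (t : ℝ) : ℝ := (k + 1) * Real.sin (t / (k + 1))

lemma contDiff_sinTrunc (k : ℕ) : ContDiff ℝ ∞ (sinTrunc k) :=
  contDiff_const.mul (Real.contDiff_sin.comp (contDiff_id.div_const _))

lemma hasDerivAt_sinTrunc (k : ℕ) (t : ℝ) :
    HasDerivAt (sinTrunc k) (Real.cos (t / (k + 1))) t := by
  have hsin := (((hasDerivAt_id t).div_const ((k : ℝ) + 1)).sin).const_mul ((k : ℝ) + 1)
  exact hsin.congr_deriv (by simp only [id]; field_simp)

lemma abs_sinTrunc_le (k : ℕ) (t : ℝ) : |sinTrunc k t| ≤ k + 1 := by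
  rw [sinTrunc, abs_mul, abs_of_pos (by positivity)]
  exact mul_le_of_le_one_right (by positivity) (Real.abs_sin_le_one _)

lemma abs_sinTrunc_le_abs (k : ℕ) (t : ℝ) : |sinTrunc k t| ≤ |t| := by
  have hk : (0 : ℝ) < k + 1 := by positivity
  rw [sinTrunc, abs_mul, abs_of_pos hk, ← le_div_iff₀' hk]
  exact Real.abs_sin_le_abs.trans_eq (by rw [abs_div, abs_of_pos hk])

lemma sinTrunc_eq_mul_sinc (k : ℕ) (t : ℝ) : sinTrunc k t = t * Real.sinc (t / (k + 1)) := by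
  rcases eq_or_ne t 0 with rfl | ht
  · simp [sinTrunc]
  · rw [Real.sinc_of_ne_zero (by positivity), sinTrunc]
    field_simp

lemma tendsto_div_add_one_nhds_zero (t : ℝ) :
    Tendsto (fun k : ℕ => t / ((k : ℝ) + 1)) atTop (𝓝 0) := by
  simpa [div_eq_mul_inv] using (tendsto_one_div_add_atTop_nhds_zero_nat (𝕜 := ℝ)).const_mul t

lemma tendsto_sinTrunc (t : ℝ) : Tendsto (fun k => sinTrunc k t) atTop (𝓝 t) := by
  simp_rw [sinTrunc_eq_mul_sinc]
  simpa using ((Real.continuous_sinc.tendsto 0).comp (tendsto_div_add_one_nhds_zero t)).const_mul t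

lemma continuous_cos_div (k : ℕ) : Continuous fun t : ℝ => Real.cos (t / (k + 1)) := by
  fun_prop

lemma tendsto_cos_div (t : ℝ) :
    Tendsto (fun k : ℕ => Real.cos (t / ((k : ℝ) + 1))) atTop (𝓝 1) := by
  simpa [Function.comp_def] using
    (Real.continuous_cos.tendsto 0).comp (tendsto_div_add_one_nhds_zero t)

lemma isDistribGradOn_univ_of_forall_sinTrunc (hu : LocallyIntegrable u volume)
    (hv : LocallyMemLp v 1)
    (h : ∀ k : ℕ, IsDistribGradOn (fun x => sinTrunc k (u x))
      (fun x => Real.cos (u x / (k + 1)) • v x) univ) : IsDistribGradOn u v univ := by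
  refine isDistribGradOn_iff_integral.2 fun φ hφ hφc hφU => ?_
  have hgrad := continuous_gradient hφ (by simp)
  have hum := hu.aestronglyMeasurable
  have hφv := memLp_one_iff_integrable.1 (hv.memLp_smul_of_hasCompactSupport hφ.continuous hφc)
  have hlim_u : Tendsto (fun k => ∫ x, sinTrunc k (u x) • ∇ φ x) atTop
      (𝓝 (∫ x, u x • ∇ φ x)) := by
    refine tendsto_integral_of_dominated_convergence (fun x => ‖u x • ∇ φ x‖) (fun k =>
      ((contDiff_sinTrunc k).continuous.comp_aestronglyMeasurable hum).smul
        hgrad.aestronglyMeasurable)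
      (hu.integrable_smul_right_of_hasCompactSupport hgrad (hasCompactSupport_gradient hφc)).norm
      (fun k => Eventually.of_forall fun x => ?_)
      (Eventually.of_forall fun x => (tendsto_sinTrunc (u x)).smul_const _)
    rw [norm_smul, norm_smul]
    exact mul_le_mul_of_nonneg_right (abs_sinTrunc_le_abs k _) (norm_nonneg _)
  have hlim_v : Tendsto (fun k : ℕ => ∫ x, φ x • Real.cos (u x / (k + 1)) • v x) atTop
      (𝓝 (∫ x, φ x • v x)) := by
    simp_rw [smul_comm (φ _)]
    refine tendsto_integral_of_dominated_convergence (fun x => ‖φ x • v x‖) (fun k =>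
      ((continuous_cos_div k).comp_aestronglyMeasurable hum).smul hφv.1) hφv.norm
      (fun k => Eventually.of_forall fun x => ?_)
      (Eventually.of_forall fun x => by simpa using (tendsto_cos_div (u x)).smul_const (φ x • v x))
    rw [norm_smul]
    exact mul_le_of_le_one_left (norm_nonneg _) (Real.abs_cos_le_one _)
  exact tendsto_nhds_unique
    (hlim_u.congr fun k => isDistribGradOn_iff_integral.1 (h k) φ hφ hφc hφU) hlim_v.neg

lemma isDistribGradOn_univ_of_compl (hne : Γ.Nonempty) (hcl : IsClosed Γ) (hvol : volume Γ = 0)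
    (hδ : LocallyMemLp (fun x => (infDist x Γ)⁻¹) 1) (hu : LocallyIntegrable u volume)
    (hv : LocallyMemLp v 1) (h : IsDistribGradOn u v Γᶜ) : IsDistribGradOn u v univ := by
  have hum := hu.aestronglyMeasurable
  refine isDistribGradOn_univ_of_forall_sinTrunc hu hv fun k =>
    isDistribGradOn_univ_of_compl_of_bounded hne hcl hvol hδ
      ((contDiff_sinTrunc k).continuous.comp_aestronglyMeasurable hum)
      (fun x => abs_sinTrunc_le k (u x)) (fun R => ?_)
      (isDistribGradOn_comp hcl.isOpen_compl hu hv h (contDiff_sinTrunc k) (hasDerivAt_sinTrunc k)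
        (abs_sinTrunc_le k) fun t => (Real.abs_cos_le_one _).trans (by simp))
  exact (hv R).of_le
    (((continuous_cos_div k).comp_aestronglyMeasurable hum).restrict.smul (hv R).1)
    (Eventually.of_forall fun x => (norm_smul_le _ _).trans
      (mul_le_of_le_one_left (norm_nonneg _) (Real.abs_cos_le_one _)))

end Removability

/-! ### The energy space and Hardy's inequality -/

section Hardy

variable {n : ℕ} {d C₀ p : ℝ} {Γ : Set (Euc n)} {u : Euc n → ℝ} {v : Euc n → Euc n}

lemma restrict_compl_eq_self (hvol : volume Γ = 0) : volume.restrict Γᶜ = volume :=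
  Measure.restrict_eq_self_of_ae_mem (measure_eq_zero_iff_ae_notMem.1 hvol)

lemma infDist_pos_of_notMem (hne : Γ.Nonempty) (hcl : IsClosed Γ) {x : Euc n} (hx : x ∉ Γ) :
    0 < infDist x Γ :=
  (hcl.notMem_iff_infDist_pos hne).1 hx

lemma weightW_nonneg (d : ℝ) (Γ : Set (Euc n)) (x : Euc n) : 0 ≤ weightW n d Γ x :=
  Real.rpow_nonneg infDist_nonneg _

lemma measurable_weightW (d : ℝ) (Γ : Set (Euc n)) : Measurable (weightW n d Γ) :=
  measurable_infDist.pow_const _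

namespace MemW

lemma aestronglyMeasurable_gradient (hW : MemW n d Γ u v) (hvol : volume Γ = 0) :
    AEStronglyMeasurable v volume :=
  restrict_compl_eq_self hvol ▸ hW.gradLocInt.aestronglyMeasurable

lemma lintegral_weightW_mul_enorm_sq_lt_top (hW : MemW n d Γ u v) (hcl : IsClosed Γ)
    (hvol : volume Γ = 0) : ∫⁻ x, ENNReal.ofReal (weightW n d Γ x) * ‖v x‖ₑ ^ 2 < ⊤ := by
  have hl2 := hW.l2
  rw [measW, setLIntegral_withDensity_eq_setLIntegral_mul_non_measurable _
    (measurable_weightW d Γ).ennreal_ofReal _ hcl.isOpen_compl.measurableSet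
    (Eventually.of_forall fun _ => ENNReal.ofReal_lt_top), restrict_compl_eq_self hvol] at hl2
  simpa only [Pi.mul_apply, ENNReal.ofReal_pow (norm_nonneg _), ofReal_norm] using hl2

lemma integrable_weightW_mul_sq (hW : MemW n d Γ u v) (hcl : IsClosed Γ) (hvol : volume Γ = 0) :
    Integrable fun x => weightW n d Γ x * ‖v x‖ ^ 2 := by
  refine ⟨(measurable_weightW d Γ).aestronglyMeasurable.mul
    ((hW.aestronglyMeasurable_gradient hvol).norm.pow 2), ?_⟩
  simpa only [HasFiniteIntegral, enorm_mul, Real.enorm_of_nonneg (weightW_nonneg d Γ _), enorm_pow,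
    enorm_norm] using hW.lintegral_weightW_mul_enorm_sq_lt_top hcl hvol

lemma locallyMemLp_gradient (hW : MemW n d Γ u v) (hdn : d + 1 ≤ n) (hne : Γ.Nonempty)
    (hcl : IsClosed Γ) (hvol : volume Γ = 0) : LocallyMemLp v 2 := by
  intro R
  refine ⟨(hW.aestronglyMeasurable_gradient hvol).restrict, ?_⟩
  obtain ⟨y, hy⟩ := id hne
  set c := (R + ‖y‖) ^ (d + 1 - (n : ℝ))
  have hweight : ∀ᵐ x ∂(volume.restrict (ball (0 : Euc n) R)),
      ENNReal.ofReal c * ‖v x‖ₑ ^ 2 ≤ ENNReal.ofReal (weightW n d Γ x) * ‖v x‖ₑ ^ 2 := by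
    filter_upwards [ae_restrict_of_ae (measure_eq_zero_iff_ae_notMem.1 hvol),
      ae_restrict_mem measurableSet_ball] with x hx hball
    gcongr
    exact Real.rpow_le_rpow_of_nonpos (infDist_pos_of_notMem hne hcl hx)
      (infDist_lt_of_mem_ball hy hball).le (by linarith)
  rcases le_or_gt R 0 with hR | hR
  · simp [ball_eq_empty.2 hR]
  have hc : ENNReal.ofReal c ≠ 0 := (ENNReal.ofReal_pos.2 (by positivity)).ne'
  have hfinite := ((lintegral_mono_ae hweight).trans (setLIntegral_le_lintegral _ _)).trans_lt
    (hW.lintegral_weightW_mul_enorm_sq_lt_top hcl hvol)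
  rw [lintegral_const_mul' _ _ ENNReal.ofReal_ne_top, ← eLpNorm_two_pow_two] at hfinite
  exact ENNReal.pow_lt_top_iff.1 (ENNReal.lt_top_of_mul_ne_top_right hfinite.ne hc) |>.resolve_right
    two_ne_zero

end MemW

lemma lintegral_lintegral_rieszKernel_mul (σ : Measure (Euc n)) [SFinite σ] (p : ℝ)
    {g : Euc n → ℝ≥0∞} (hg : AEMeasurable g) :
    ∫⁻ y, ∫⁻ x, rieszKernel p (x - y) * g x ∂volume ∂σ =
      ∫⁻ x, (∫⁻ y, rieszKernel p (x - y) ∂σ) * g x := by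
  have hkernel : Measurable fun q : Euc n × Euc n => rieszKernel p (q.2 - q.1) :=
    (measurable_rieszKernel p).comp (measurable_snd.sub measurable_fst)
  have hmeas : AEMeasurable (fun q : Euc n × Euc n => rieszKernel p (q.2 - q.1) * g q.2)
      (σ.prod volume) :=
    hkernel.aemeasurable.mul (hg.comp_quasiMeasurePreserving Measure.quasiMeasurePreserving_snd)
  rw [lintegral_lintegral_swap hmeas]
  exact lintegral_congr fun x => lintegral_mul_const _
    ((measurable_rieszKernel p).comp (measurable_const.sub measurable_id))

namespace AhlforsRegular

lemma locallyMemLp_inv_infDist (hAR : AhlforsRegular n d C₀ Γ) (hn : 1 ≤ n) (hd : 0 ≤ d)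
    (hdn : d + 1 < n) (hC₀ : 0 < C₀) (hne : Γ.Nonempty) (hcl : IsClosed Γ) :
    LocallyMemLp (fun x => (infDist x Γ)⁻¹) 1 := fun R => by
  refine memLp_one_iff_integrable.2 ⟨measurable_infDist.inv.aestronglyMeasurable, ?_⟩
  simpa only [HasFiniteIntegral, Real.enorm_of_nonneg (inv_nonneg.2 infDist_nonneg)] using
    hAR.setLIntegral_inv_infDist_lt_top hn hd hdn hC₀ hne hcl R

lemma le_lintegral_lintegral_rieszKernel_mul (hAR : AhlforsRegular n d C₀ Γ) (hne : Γ.Nonempty)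
    (hcl : IsClosed Γ) (hvol : volume Γ = 0) (hp : 0 ≤ p) {g : Euc n → ℝ≥0∞} (hg : AEMeasurable g) :
    ENNReal.ofReal (C₀⁻¹ * 2 ^ (-p)) * ∫⁻ x, ENNReal.ofReal (infDist x Γ ^ (d - p)) * g x ≤
      ∫⁻ y, ∫⁻ x, rieszKernel p (x - y) * g x ∂volume ∂(surfaceMeasure d Γ) := by
  have := hAR.isLocallyFiniteMeasure hcl
  rw [lintegral_lintegral_rieszKernel_mul _ p hg,
    ← lintegral_const_mul' _ _ ENNReal.ofReal_ne_top]
  refine lintegral_mono_ae ?_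
  filter_upwards [measure_eq_zero_iff_ae_notMem.1 hvol] with x hx
  rw [← mul_assoc]
  gcongr
  exact (hAR.le_setLIntegral_rieszKernel hne hcl hp hx).trans (setLIntegral_le_lintegral _ _)

lemma lintegral_lintegral_rieszKernel_mul_lt_top (hAR : AhlforsRegular n d C₀ Γ)
    (hne : Γ.Nonempty) (hcl : IsClosed Γ) (hvol : volume Γ = 0) (hp : 0 ≤ p) (hdp : d < p)
    {g : Euc n → ℝ≥0∞} (hg : AEMeasurable g)
    (hfinite : ∫⁻ x, ENNReal.ofReal (infDist x Γ ^ (d - p)) * g x < ⊤) :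
    ∫⁻ y, ∫⁻ x, rieszKernel p (x - y) * g x ∂volume ∂(surfaceMeasure d Γ) < ⊤ := by
  obtain ⟨C, hC_top, hC⟩ := hAR.exists_lintegral_rieszKernel_le hne hcl hp hdp
  have := hAR.isLocallyFiniteMeasure hcl
  rw [lintegral_lintegral_rieszKernel_mul _ p hg]
  calc ∫⁻ x, (∫⁻ y, rieszKernel p (x - y) ∂(surfaceMeasure d Γ)) * g x
      ≤ ∫⁻ x, C * (ENNReal.ofReal (infDist x Γ ^ (d - p)) * g x) := by
        refine lintegral_mono_ae ?_
        filter_upwards [measure_eq_zero_iff_ae_notMem.1 hvol] with x hx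
        rw [← mul_assoc]
        gcongr
        exact hC x hx
    _ = C * ∫⁻ x, ENNReal.ofReal (infDist x Γ ^ (d - p)) * g x := lintegral_const_mul' _ _ hC_top
    _ < ⊤ := ENNReal.mul_lt_top hC_top.lt_top hfinite

end AhlforsRegular

lemma lintegral_rieszKernel_mul_enorm_sq_le_of_hasTraceAt (hn : 1 ≤ n)
    (hu : LocallyIntegrable u volume) (hv : LocallyMemLp v 2) (huv : IsDistribGradOn u v univ)
    {y : Euc n} {t : ℝ} (ht : HasTraceAt u y t) {f : Euc n → ℝ} {M : ℝ} (hM : 0 ≤ M)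
    (hf : ∀ x, |f x| ≤ M * |u x - t|) :
    ∫⁻ x, rieszKernel (n + 1) (x - y) * ‖f x‖ₑ ^ 2 ≤
      ENNReal.ofReal M ^ 2 * (4 * ∫⁻ x, rieszKernel (n - 1) (x - y) * ‖v x‖ₑ ^ 2) := by
  grw [← lintegral_rieszKernel_mul_enorm_sub_sq_le hn hu hv huv ht,
    ← lintegral_const_mul' _ _ (by simp)]
  refine lintegral_mono fun x => ?_
  have hfx : ‖f x‖ₑ ≤ ENNReal.ofReal M * ‖u x - t‖ₑ := by
    rw [← ofReal_norm, ← ofReal_norm, ← ENNReal.ofReal_mul hM]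
    exact ENNReal.ofReal_le_ofReal (hf x)
  grw [hfx, mul_pow, mul_left_comm]

lemma rpow_infDist_eq_weightW_mul (d : ℝ) {x : Euc n} (hx : 0 < infDist x Γ) :
    infDist x Γ ^ (d - (n + 1)) = weightW n d Γ x * (infDist x Γ)⁻¹ ^ 2 := by
  rw [weightW, inv_pow, ← Real.rpow_natCast, ← Real.rpow_neg hx.le, ← Real.rpow_add hx]
  congr 1
  push_cast
  ring

namespace AhlforsRegular

lemma lintegral_rpow_infDist_mul_enorm_sq_lt_top (hAR : AhlforsRegular n d C₀ Γ) (hn : 1 ≤ n)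
    (hdn : d + 1 < n) (hC₀ : 0 < C₀) (hne : Γ.Nonempty) (hcl : IsClosed Γ)
    (hu : LocallyIntegrable u volume) (hW : MemW n d Γ u v) (huv : IsDistribGradOn u v univ)
    {f : Euc n → ℝ} (hfm : AEStronglyMeasurable f volume) {M : ℝ} (hM : 0 ≤ M)
    (hf : ∀ᵐ y ∂(surfaceMeasure d Γ), ∃ t, HasTraceAt u y t ∧ ∀ x, |f x| ≤ M * |u x - t|) :
    ∫⁻ x, ENNReal.ofReal (infDist x Γ ^ (d - (n + 1))) * ‖f x‖ₑ ^ 2 < ⊤ := by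
  have hvol := hAR.volume_eq_zero (by linarith)
  have hv := hW.locallyMemLp_gradient hdn.le hne hcl hvol
  have hn_one : (1 : ℝ) ≤ n := by exact_mod_cast hn
  have henergy := hW.lintegral_weightW_mul_enorm_sq_lt_top hcl hvol
  simp only [weightW, show d + 1 - (n : ℝ) = d - (n - 1) by ring] at henergy
  have hright := hAR.lintegral_lintegral_rieszKernel_mul_lt_top hne hcl hvol (by linarith)
    (by linarith) (hv.aestronglyMeasurable.enorm.pow_const 2) henergy
  have hpointwise : ∀ᵐ y ∂(surfaceMeasure d Γ), ∫⁻ x, rieszKernel (n + 1) (x - y) * ‖f x‖ₑ ^ 2 ≤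
      ENNReal.ofReal M ^ 2 * (4 * ∫⁻ x, rieszKernel (n - 1) (x - y) * ‖v x‖ₑ ^ 2) := by
    filter_upwards [hf] with y ⟨t, ht, hft⟩
    exact lintegral_rieszKernel_mul_enorm_sq_le_of_hasTraceAt hn hu hv huv ht hM hft
  have hleft := (lintegral_mono_ae hpointwise).trans_lt (by
    rw [lintegral_const_mul' _ _ (by simp), lintegral_const_mul' _ _ (by simp)]
    exact ENNReal.mul_lt_top (by simp) (ENNReal.mul_lt_top (by simp) hright))
  have hlower := (hAR.le_lintegral_lintegral_rieszKernel_mul hne hcl hvol (by positivity)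
    (hfm.enorm.pow_const 2)).trans_lt hleft
  exact ENNReal.lt_top_of_mul_ne_top_right hlower.ne
    (ENNReal.ofReal_pos.2 (by positivity)).ne'

lemma integrable_weightW_mul_sq_of_trace (hAR : AhlforsRegular n d C₀ Γ)
    (hn : 1 ≤ n) (hdn : d + 1 < n) (hC₀ : 0 < C₀) (hne : Γ.Nonempty) (hcl : IsClosed Γ)
    (hu : LocallyIntegrable u volume) (hW : MemW n d Γ u v) (huv : IsDistribGradOn u v univ)
    {f : Euc n → ℝ} (hfm : AEStronglyMeasurable f volume) {M : ℝ} (hM : 0 ≤ M)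
    (hf : ∀ᵐ y ∂(surfaceMeasure d Γ), ∃ t, HasTraceAt u y t ∧ ∀ x, |f x| ≤ M * |u x - t|) :
    Integrable fun x => weightW n d Γ x * (f x * (infDist x Γ)⁻¹) ^ 2 := by
  refine ⟨(measurable_weightW d Γ).aestronglyMeasurable.mul
    ((hfm.mul measurable_infDist.inv.aestronglyMeasurable).pow 2), ?_⟩
  refine lt_of_eq_of_lt (lintegral_congr_ae ?_)
    (hAR.lintegral_rpow_infDist_mul_enorm_sq_lt_top hn hdn hC₀ hne hcl hu hW huv hfm hM hf)
  have hvol := hAR.volume_eq_zero (by linarith)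
  filter_upwards [measure_eq_zero_iff_ae_notMem.1 hvol] with x hx
  rw [rpow_infDist_eq_weightW_mul d (infDist_pos_of_notMem hne hcl hx), ← enorm_pow,
    ← Real.enorm_of_nonneg (mul_nonneg (weightW_nonneg d Γ x) (sq_nonneg _)), ← enorm_mul, mul_pow,
    mul_assoc, mul_comm (f x ^ 2)]

end AhlforsRegular

end Hardy

/-! ### Testing the supersolution inequality -/

section Energy

variable {n : ℕ} {d C₁ M : ℝ} {Γ : Set (Euc n)} {A : Euc n → Euc n →L[ℝ] Euc n} {u : Euc n → ℝ}
  {v : Euc n → Euc n} {F F' : ℝ → ℝ} {χ : Euc n → ℝ}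

lemma sum_mul_eq_inner (a b : Euc n) : ∑ i, a i * b i = inner ℝ a b := by
  simp [PiLp.inner_apply, mul_comm]

lemma continuousOn_weightW (d : ℝ) (hne : Γ.Nonempty) (hcl : IsClosed Γ) :
    ContinuousOn (weightW n d Γ) Γᶜ :=
  (continuous_infDist_pt Γ).continuousOn.rpow_const fun _ hx =>
    Or.inl (infDist_pos_of_notMem hne hcl hx).ne'

namespace EllipticOn

lemma abs_inner_apply_le (hell : EllipticOn n d Γ A C₁) {x : Euc n} (hx : x ∉ Γ) (ξ ζ : Euc n) :
    |inner ℝ (A x ξ) ζ| ≤ C₁ * weightW n d Γ x * ‖ξ‖ * ‖ζ‖ := by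
  simpa only [sum_mul_eq_inner] using (hell x hx).1 ξ ζ

lemma le_inner_apply_self (hell : EllipticOn n d Γ A C₁) {x : Euc n} (hx : x ∉ Γ) (ξ : Euc n) :
    C₁⁻¹ * weightW n d Γ x * ‖ξ‖ ^ 2 ≤ inner ℝ (A x ξ) ξ := by
  simpa only [sum_mul_eq_inner] using (hell x hx).2 ξ

lemma norm_apply_le (hell : EllipticOn n d Γ A C₁) (hC₁ : 0 ≤ C₁) {x : Euc n} (hx : x ∉ Γ)
    (ξ : Euc n) : ‖A x ξ‖ ≤ C₁ * weightW n d Γ x * ‖ξ‖ := by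
  have hw := weightW_nonneg d Γ x
  rcases (norm_nonneg (A x ξ)).eq_or_lt with hzero | hpos
  · rw [← hzero]
    positivity
  · refine le_of_mul_le_mul_right ?_ hpos
    rw [← real_inner_self_eq_norm_mul_norm]
    exact (le_abs_self _).trans (hell.abs_inner_apply_le hx ξ (A x ξ))

lemma inner_apply_self_nonneg (hell : EllipticOn n d Γ A C₁) (hC₁ : 0 ≤ C₁) {x : Euc n}
    (hx : x ∉ Γ) (ξ : Euc n) : 0 ≤ inner ℝ (A x ξ) ξ :=
  (mul_nonneg (mul_nonneg (inv_nonneg.2 hC₁) (weightW_nonneg d Γ x)) (sq_nonneg _)).trans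
    (hell.le_inner_apply_self hx ξ)

lemma eq_zero_of_inner_apply_self_eq_zero (hell : EllipticOn n d Γ A C₁) (hC₁ : 0 < C₁)
    (hne : Γ.Nonempty) (hcl : IsClosed Γ) {x : Euc n} (hx : x ∉ Γ) {ξ : Euc n}
    (h : inner ℝ (A x ξ) ξ = 0) : ξ = 0 := by
  have hw : 0 < weightW n d Γ x := Real.rpow_pos_of_pos (infDist_pos_of_notMem hne hcl hx) _
  have hle := hell.le_inner_apply_self hx ξ
  rw [h] at hle
  by_contra hξ
  have := norm_pos_iff.2 hξ
  exact hle.not_gt (by positivity)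

lemma abs_inner_apply_smul_add_smul_le (hell : EllipticOn n d Γ A C₁) (hC₁ : 0 ≤ C₁)
    {x : Euc n} (hx : x ∉ Γ) {ξ g : Euc n} {a b r C : ℝ} (hr : 0 < r) (hg : ‖g‖ ≤ C * r)
    (hb : |b| ≤ M) :
    |inner ℝ (A x ξ) (a • g + b • ξ)| ≤
      C₁ * C * (weightW n d Γ x * ‖ξ‖ ^ 2 + weightW n d Γ x * (a * r) ^ 2) +
        C₁ * M * (weightW n d Γ x * ‖ξ‖ ^ 2) := by
  have hw := weightW_nonneg d Γ x
  have hC : 0 ≤ C := nonneg_of_mul_nonneg_left ((norm_nonneg g).trans hg) hr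
  have hnorm : ‖a • g + b • ξ‖ ≤ C * |a * r| + M * ‖ξ‖ := by
    refine (norm_add_le _ _).trans (add_le_add ?_ ?_)
    · rw [norm_smul, Real.norm_eq_abs, abs_mul, abs_of_pos hr]
      exact (mul_le_mul_of_nonneg_left hg (abs_nonneg a)).trans_eq (by ring)
    · rw [norm_smul]
      gcongr
      exact hb
  have hyoung : ‖ξ‖ * |a * r| ≤ ‖ξ‖ ^ 2 + (a * r) ^ 2 := by
    rw [← sq_abs (a * r)]
    nlinarith [two_mul_le_add_sq ‖ξ‖ |a * r|, norm_nonneg ξ, abs_nonneg (a * r)]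
  calc |inner ℝ (A x ξ) (a • g + b • ξ)|
      ≤ C₁ * weightW n d Γ x * ‖ξ‖ * (C * |a * r| + M * ‖ξ‖) :=
        (hell.abs_inner_apply_le hx _ _).trans (by gcongr)
    _ = C₁ * C * (weightW n d Γ x * (‖ξ‖ * |a * r|)) + C₁ * M * (weightW n d Γ x * ‖ξ‖ ^ 2) := by
        ring
    _ ≤ C₁ * C * (weightW n d Γ x * (‖ξ‖ ^ 2 + (a * r) ^ 2)) +
          C₁ * M * (weightW n d Γ x * ‖ξ‖ ^ 2) := by gcongr
    _ = _ := by rw [mul_add (weightW n d Γ x)]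

end EllipticOn

lemma aestronglyMeasurable_clm_apply_comp {α G H : Type*} [MeasurableSpace α] {μ : Measure α}
    [NormedAddCommGroup G] [NormedSpace ℝ G] [NormedAddCommGroup H] [NormedSpace ℝ H]
    {B : α → G →L[ℝ] H} {f : α → G} (hB : AEStronglyMeasurable B μ)
    (hf : AEStronglyMeasurable f μ) : AEStronglyMeasurable (fun x => B x (f x)) μ :=
  (ContinuousLinearMap.apply ℝ H : G →L[ℝ] (G →L[ℝ] H) →L[ℝ] H).aestronglyMeasurable_comp₂ hf hB

lemma EllipticOn.memLp_indicator_apply (hell : EllipticOn n d Γ A C₁) (hC₁ : 0 ≤ C₁)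
    (hne : Γ.Nonempty) (hcl : IsClosed Γ) (hA : AEStronglyMeasurable A volume) {p : ℝ≥0∞}
    (hv : LocallyMemLp v p) {K : Set (Euc n)} (hK : IsCompact K) (hKΓ : K ⊆ Γᶜ) :
    MemLp (K.indicator fun x => A x (v x)) p volume := by
  obtain ⟨B, hB⟩ := hK.exists_bound_of_continuousOn ((continuousOn_weightW d hne hcl).mono hKΓ)
  obtain ⟨R, hR⟩ := hK.isBounded.subset_ball 0
  refine ((memLp_indicator_iff_restrict measurableSet_ball).2 (hv R)).of_le_mul (c := C₁ * |B|)
    ((aestronglyMeasurable_clm_apply_comp hA hv.aestronglyMeasurable).indicator hK.measurableSet)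
    (Eventually.of_forall fun x => ?_)
  by_cases hx : x ∈ K
  · rw [indicator_of_mem hx, indicator_of_mem (hR hx)]
    refine (hell.norm_apply_le hC₁ (hKΓ hx) (v x)).trans ?_
    gcongr
    exact (Real.le_norm_self _).trans ((hB x hx).trans (le_abs_self B))
  · rw [indicator_of_notMem hx, norm_zero]
    positivity

lemma memLp_comp_smul {p : ℝ≥0∞} {g : Euc n → Euc n} (hu : AEStronglyMeasurable u volume)
    (hF : Continuous F) (hFM : ∀ t, |F t| ≤ M) (hg : MemLp g p volume) :
    MemLp (fun x => F (u x) • g x) p volume :=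
  hg.of_le_mul (c := M) ((hF.comp_aestronglyMeasurable hu).smul hg.1) <|
    Eventually.of_forall fun x => by
      rw [norm_smul]
      gcongr
      exact hFM _

lemma memLp_comp_smul_gradient_add {p : ℝ≥0∞} (hu : AEStronglyMeasurable u volume)
    (hv : LocallyMemLp v p) (hF : Continuous F) (hF' : Continuous F') (hFM : ∀ t, |F t| ≤ M)
    (hF'M : ∀ t, |F' t| ≤ M) (hχ : ContDiff ℝ ∞ χ) (hχc : HasCompactSupport χ) :
    MemLp (fun x => F (u x) • ∇ χ x + (χ x * F' (u x)) • v x) p volume := by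
  simp_rw [mul_comm (χ _), mul_smul]
  exact (memLp_comp_smul hu hF hFM ((continuous_gradient hχ (by simp)).memLp_of_hasCompactSupport
    (hasCompactSupport_gradient hχc))).add
    (memLp_comp_smul hu hF' hF'M (hv.memLp_smul_of_hasCompactSupport hχ.continuous hχc))

lemma inner_indicator_left_of_eq_zero {α G : Type*} [NormedAddCommGroup G] [InnerProductSpace ℝ G]
    {K : Set α} {f g : α → G} (hg : ∀ x ∉ K, g x = 0) (x : α) :
    inner ℝ (K.indicator f x) (g x) = inner ℝ (f x) (g x) := by
  by_cases hx : x ∈ K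
  · rw [indicator_of_mem hx]
  · rw [hg x hx, inner_zero_right, inner_zero_right]

lemma SupersolOn.integral_inner_gradient_nonneg (hsuper : SupersolOn Γ A v Γᶜ)
    (hvol : volume Γ = 0) (hχ : ContDiff ℝ ∞ χ) (hχc : HasCompactSupport χ)
    (hχΓ : tsupport χ ⊆ Γᶜ) (hχ0 : ∀ x, 0 ≤ χ x) :
    0 ≤ ∫ x, inner ℝ (A x (v x)) (∇ χ x) := by
  simpa only [sum_mul_eq_inner, restrict_compl_eq_self hvol] using hsuper χ hχ hχc hχΓ hχ0

lemma SupersolOn.integral_inner_comp_smul_gradient_add_nonneg (hsuper : SupersolOn Γ A v Γᶜ)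
    (hell : EllipticOn n d Γ A C₁) (hC₁ : 0 ≤ C₁) (hne : Γ.Nonempty) (hcl : IsClosed Γ)
    (hvol : volume Γ = 0) (hA : AEStronglyMeasurable A volume) (hu : LocallyIntegrable u volume)
    (hv : LocallyMemLp v 2) (huv : IsDistribGradOn u v Γᶜ) (hF : ContDiff ℝ ∞ F)
    (hF' : ∀ t, HasDerivAt F (F' t) t) (hF'_cont : Continuous F') (hF0 : ∀ t, 0 ≤ F t)
    (hFM : ∀ t, |F t| ≤ M) (hF'M : ∀ t, |F' t| ≤ M) (hχ : ContDiff ℝ ∞ χ)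
    (hχc : HasCompactSupport χ) (hχΓ : tsupport χ ⊆ Γᶜ) (hχ0 : ∀ x, 0 ≤ χ x) :
    0 ≤ ∫ x, inner ℝ (A x (v x)) (F (u x) • ∇ χ x + (χ x * F' (u x)) • v x) := by
  -- `F (u) χ` is only a Sobolev function, so the smooth `F (u_j) χ` are tested instead.
  set ψ : ℕ → Euc n → ℝ := fun j y => F (mollify j u y) * χ y
  have hψ : ∀ j, ContDiff ℝ ∞ (ψ j) := fun j => (hF.comp (contDiff_mollify j hu)).mul hχ
  have hψc : ∀ j, HasCompactSupport (ψ j) := fun j => hχc.mul_left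
  have hψχ : ∀ j, tsupport (ψ j) ⊆ tsupport χ := fun j => tsupport_mul_subset_right
  have hlim := tendsto_integral_inner_of_tendsto_eLpNorm
    (hell.memLp_indicator_apply hC₁ hne hcl hA hv hχc hχΓ)
    (fun j => (continuous_gradient (hψ j) (by simp)).memLp_of_hasCompactSupport
      (hasCompactSupport_gradient (hψc j)))
    (memLp_comp_smul_gradient_add hu.aestronglyMeasurable hv hF.continuous hF'_cont hFM hF'M hχ hχc)
    (tendsto_eLpNorm_gradient_comp_mollify_mul_sub hcl.isOpen_compl hu one_le_two
      ENNReal.ofNat_ne_top hv huv hF' hF'_cont hFM hF'M hχ hχc hχΓ)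
  have hgradψ : ∀ j, ∀ x ∉ tsupport χ, ∇ (ψ j) x = 0 := fun j x hx =>
    gradient_eq_zero_of_notMem_tsupport fun h => hx (hψχ j h)
  have hgrad : ∀ x ∉ tsupport χ, F (u x) • ∇ χ x + (χ x * F' (u x)) • v x = 0 := fun x hx => by
    simp [gradient_eq_zero_of_notMem_tsupport hx, image_eq_zero_of_notMem_tsupport hx]
  simp_rw [inner_indicator_left_of_eq_zero hgrad, inner_indicator_left_of_eq_zero (hgradψ _)]
    at hlim
  exact ge_of_tendsto' hlim fun j => hsuper.integral_inner_gradient_nonneg hvol (hψ j) (hψc j)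
    ((hψχ j).trans hχΓ) fun x => mul_nonneg (hF0 _) (hχ0 x)

lemma EllipticOn.tendsto_integral_inner_cutoff (hell : EllipticOn n d Γ A C₁) (hC₁ : 0 ≤ C₁)
    (hne : Γ.Nonempty) (hcl : IsClosed Γ) (hvol : volume Γ = 0)
    (hA : AEStronglyMeasurable A volume) (hW : MemW n d Γ u v)
    {f f' : Euc n → ℝ} (hf : AEStronglyMeasurable f volume) (hf' : AEStronglyMeasurable f' volume)
    (hf'M : ∀ x, |f' x| ≤ M)
    (hHardy : Integrable fun x => weightW n d Γ x * (f x * (infDist x Γ)⁻¹) ^ 2) :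
    Tendsto (fun k => ∫ x, inner ℝ (A x (v x)) (f x • ∇ (cutoff Γ k) x +
      (cutoff Γ k x * f' x) • v x)) atTop (𝓝 (∫ x, inner ℝ (A x (v x)) (f' x • v x))) := by
  obtain ⟨C, hC⟩ := exists_norm_gradient_cutoff_le hne hcl
  have hv := hW.aestronglyMeasurable_gradient hvol
  have henergy := hW.integrable_weightW_mul_sq hcl hvol
  have hnotMem : ∀ᵐ x ∂(volume : Measure (Euc n)), x ∉ Γ := measure_eq_zero_iff_ae_notMem.1 hvol
  refine tendsto_integral_of_dominated_convergence
    (fun x => C₁ * C * (weightW n d Γ x * ‖v x‖ ^ 2 +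
      weightW n d Γ x * (f x * (infDist x Γ)⁻¹) ^ 2) + C₁ * M * (weightW n d Γ x * ‖v x‖ ^ 2))
    (fun k => (aestronglyMeasurable_clm_apply_comp hA hv).inner ?_)
    (((henergy.add hHardy).const_mul _).add (henergy.const_mul _)) (fun k => ?_) ?_
  · have hχ := contDiff_cutoff Γ k
    exact (hf.smul (continuous_gradient hχ (by simp)).aestronglyMeasurable).add
      ((hχ.continuous.aestronglyMeasurable.mul hf').smul hv)
  · filter_upwards [hnotMem] with x hx
    refine hell.abs_inner_apply_smul_add_smul_le hC₁ hx
      (inv_pos.2 (infDist_pos_of_notMem hne hcl hx)) (hC k x hx) ?_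
    rw [abs_mul]
    exact (mul_le_of_le_one_left (abs_nonneg _) (norm_cutoff_le_one Γ k x)).trans (hf'M x)
  · filter_upwards [hnotMem] with x hx
    have hlim := ((tendsto_gradient_cutoff_nhds_zero hne hcl hx).const_smul (f x)).add
      (((tendsto_cutoff_nhds_one hne hcl hx).mul_const (f' x)).smul_const (v x))
    simp only [smul_zero, zero_add, one_mul] at hlim
    exact tendsto_const_nhds.inner hlim

lemma EllipticOn.ae_smul_eq_zero_of_integral_nonneg (hell : EllipticOn n d Γ A C₁) (hC₁ : 0 < C₁)
    (hne : Γ.Nonempty) (hcl : IsClosed Γ) (hvol : volume Γ = 0)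
    (hA : AEStronglyMeasurable A volume) (hW : MemW n d Γ u v) {f : Euc n → ℝ}
    (hf : AEStronglyMeasurable f volume) (hfM : ∀ x, |f x| ≤ M) (hf0 : ∀ x, f x ≤ 0)
    (h : 0 ≤ ∫ x, inner ℝ (A x (v x)) (f x • v x)) : ∀ᵐ x, f x • v x = 0 := by
  have hnotMem : ∀ᵐ x ∂(volume : Measure (Euc n)), x ∉ Γ := measure_eq_zero_iff_ae_notMem.1 hvol
  have hv := hW.aestronglyMeasurable_gradient hvol
  have hint : Integrable fun x => -inner ℝ (A x (v x)) (f x • v x) := by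
    refine ((hW.integrable_weightW_mul_sq hcl hvol).const_mul (C₁ * M)).mono'
      ((aestronglyMeasurable_clm_apply_comp hA hv).inner (hf.smul hv)).neg ?_
    filter_upwards [hnotMem] with x hx
    have hw := weightW_nonneg d Γ x
    calc ‖-inner ℝ (A x (v x)) (f x • v x)‖
        ≤ C₁ * weightW n d Γ x * ‖v x‖ * (|f x| * ‖v x‖) := by
          rw [norm_neg, ← Real.norm_eq_abs (f x), ← norm_smul]
          exact hell.abs_inner_apply_le hx _ _
      _ ≤ C₁ * weightW n d Γ x * ‖v x‖ * (M * ‖v x‖) := by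
          gcongr
          exact hfM x
      _ = C₁ * M * (weightW n d Γ x * ‖v x‖ ^ 2) := by ring
  have hnonneg : 0 ≤ᵐ[volume] fun x => -inner ℝ (A x (v x)) (f x • v x) := by
    filter_upwards [hnotMem] with x hx
    rw [inner_smul_right, Pi.zero_apply, ← neg_mul]
    exact mul_nonneg (neg_nonneg.2 (hf0 x)) (hell.inner_apply_self_nonneg hC₁.le hx (v x))
  have hzero : ∫ x, -inner ℝ (A x (v x)) (f x • v x) = 0 :=
    le_antisymm (by rwa [integral_neg, neg_nonpos]) (integral_nonneg_of_ae hnonneg)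
  rw [integral_eq_zero_iff_of_nonneg_ae hnonneg hint] at hzero
  filter_upwards [hzero, hnotMem] with x hx hxΓ
  rw [Pi.zero_apply, neg_eq_zero, inner_smul_right, mul_eq_zero] at hx
  rcases hx with hfx | hvx
  · rw [hfx, zero_smul]
  · rw [hell.eq_zero_of_inner_apply_self_eq_zero hC₁ hne hcl hxΓ hvx, smul_zero]

lemma SupersolOn.ae_deriv_comp_smul_eq_zero (hsuper : SupersolOn Γ A v Γᶜ)
    (hell : EllipticOn n d Γ A C₁) (hC₁ : 0 < C₁) (hdn : d + 1 ≤ n) (hne : Γ.Nonempty)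
    (hcl : IsClosed Γ) (hvol : volume Γ = 0) (hA : AEStronglyMeasurable A volume)
    (hu : LocallyIntegrable u volume) (hW : MemW n d Γ u v) (hF : ContDiff ℝ ∞ F)
    (hF' : ∀ t, HasDerivAt F (F' t) t) (hF0 : ∀ t, 0 ≤ F t) (hF'0 : ∀ t, F' t ≤ 0)
    (hFM : ∀ t, |F t| ≤ M) (hF'M : ∀ t, |F' t| ≤ M)
    (hHardy : Integrable fun x => weightW n d Γ x * (F (u x) * (infDist x Γ)⁻¹) ^ 2) :
    ∀ᵐ x, F' (u x) • v x = 0 := by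
  have hF'_cont : Continuous F' :=
    (funext fun t => (hF' t).deriv : deriv F = F') ▸ hF.continuous_deriv (by simp)
  have hFu := hF.continuous.comp_aestronglyMeasurable hu.aestronglyMeasurable
  have hF'u := hF'_cont.comp_aestronglyMeasurable hu.aestronglyMeasurable
  refine hell.ae_smul_eq_zero_of_integral_nonneg hC₁ hne hcl hvol hA hW hF'u (fun x => hF'M _)
    (fun x => hF'0 _) ?_
  exact ge_of_tendsto' (hell.tendsto_integral_inner_cutoff hC₁.le hne hcl hvol hA hW hFu hF'u
    (fun x => hF'M _) hHardy) fun k =>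
      hsuper.integral_inner_comp_smul_gradient_add_nonneg hell hC₁.le hne hcl hvol hA hu
        (hW.locallyMemLp_gradient hdn hne hcl hvol) hW.isGrad hF hF' hF'_cont hF0 hFM hF'M
        (contDiff_cutoff Γ k) (hasCompactSupport_cutoff Γ k) (tsupport_cutoff_subset Γ k)
        fun x => (cutoff_mem_Icc Γ k x).1

end Energy

/-! ### The maximum principle -/

section NegTransition

/-- A smooth nonincreasing function that is positive on `(-∞, 0)` and vanishes on `[0, ∞)`; it is
bounded with bounded derivative, and replaces the negative part in the test function. -/
def negTransition (t : ℝ) : ℝ := Real.smoothTransition (-t)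

lemma contDiff_negTransition : ContDiff ℝ ∞ negTransition :=
  Real.smoothTransition.contDiff.comp contDiff_neg

lemma hasDerivAt_negTransition (t : ℝ) : HasDerivAt negTransition (deriv negTransition t) t :=
  (contDiff_negTransition.differentiable (by simp) t).hasDerivAt

lemma negTransition_nonneg (t : ℝ) : 0 ≤ negTransition t := Real.smoothTransition.nonneg _

lemma abs_negTransition_le_one (t : ℝ) : |negTransition t| ≤ 1 := by
  rw [abs_of_nonneg (negTransition_nonneg t)]
  exact Real.smoothTransition.le_one _

lemma negTransition_eq_zero {t : ℝ} (ht : 0 ≤ t) : negTransition t = 0 :=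
  Real.smoothTransition.zero_of_nonpos (neg_nonpos.2 ht)

lemma negTransition_pos {t : ℝ} (ht : t < 0) : 0 < negTransition t :=
  Real.smoothTransition.pos_of_pos (neg_pos.2 ht)

lemma antitone_negTransition : Antitone negTransition := fun _ _ h =>
  Real.smoothTransition.monotone (neg_le_neg h)

lemma hasCompactSupport_deriv_negTransition : HasCompactSupport (deriv negTransition) := by
  refine HasCompactSupport.intro (isCompact_Icc (a := (-1 : ℝ)) (b := 0)) fun t ht => ?_
  rw [mem_Icc, not_and_or, not_le, not_le] at ht
  rcases ht with ht | ht
  · have hone : negTransition =ᶠ[𝓝 t] fun _ => 1 := by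
      filter_upwards [Iio_mem_nhds ht] with s hs
      exact Real.smoothTransition.one_of_one_le (le_neg.2 (le_of_lt hs))
    rw [hone.deriv_eq, deriv_const]
  · have hzero : negTransition =ᶠ[𝓝 t] fun _ => 0 := by
      filter_upwards [Ioi_mem_nhds ht] with s hs
      exact negTransition_eq_zero (le_of_lt hs)
    rw [hzero.deriv_eq, deriv_const]

lemma exists_abs_deriv_negTransition_le : ∃ M, 1 ≤ M ∧ ∀ t, |deriv negTransition t| ≤ M := by
  obtain ⟨B, hB⟩ := hasCompactSupport_deriv_negTransition.exists_bound_of_continuous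
    (contDiff_negTransition.continuous_deriv (by simp))
  exact ⟨max 1 B, le_max_left _ _, fun t => (hB t).trans (le_max_right _ _)⟩

lemma abs_negTransition_le_mul_abs_sub {M : ℝ} (hM : ∀ t, |deriv negTransition t| ≤ M) {s t : ℝ}
    (ht : 0 ≤ t) : |negTransition s| ≤ M * |s - t| := by
  simpa [negTransition_eq_zero ht] using convex_univ.norm_image_sub_le_of_norm_hasDerivWithin_le
    (fun x _ => (hasDerivAt_negTransition x).hasDerivWithinAt) (fun x _ => hM x) (mem_univ t)
    (mem_univ s)

end NegTransition

section MaximumPrinciple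

variable {n : ℕ} {d C₀ : ℝ} {Γ : Set (Euc n)} {u : Euc n → ℝ} {v w : Euc n → Euc n}

lemma AhlforsRegular.surfaceMeasure_ne_zero (hAR : AhlforsRegular n d C₀ Γ) (hC₀ : 0 < C₀)
    (hne : Γ.Nonempty) : surfaceMeasure d Γ ≠ 0 := by
  obtain ⟨y, hy⟩ := hne
  intro hzero
  have hle := hAR.le_surfaceMeasure_ball hy one_pos
  rw [hzero, Measure.coe_zero, Pi.zero_apply, nonpos_iff_eq_zero, ENNReal.ofReal_eq_zero] at hle
  exact hle.not_gt (by positivity)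

lemma HasTraceAt.le_of_ae_le (hu : LocallyIntegrable u volume) {y : Euc n} {s t : ℝ}
    (ht : HasTraceAt u y t) (h : ∀ᵐ x, u x ≤ s) : t ≤ s := by
  refine le_of_tendsto ht ?_
  filter_upwards [self_mem_nhdsWithin] with ρ hρ
  exact (convex_Iic s).set_average_mem isClosed_Iic (measure_ball_pos volume y hρ).ne'
    measure_ball_lt_top.ne (ae_restrict_of_ae h)
    ((hu.integrableOn_isCompact (isCompact_closedBall y ρ)).mono_set ball_subset_closedBall)

lemma IsDistribGradOn.congr_ae {U : Set (Euc n)} (h : IsDistribGradOn u v U)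
    (hvw : v =ᵐ[volume] w) : IsDistribGradOn u w U := fun φ hφ hφc hφU => by
  rw [h φ hφ hφc hφU, neg_inj]
  exact integral_congr_ae (ae_restrict_of_ae (hvw.mono fun x hx => by simp only [hx]))

lemma exists_ae_negTransition_eq_const (hu : LocallyIntegrable u volume) (hv : LocallyMemLp v 1)
    (huv : IsDistribGradOn u v univ) (hzero : ∀ᵐ x, deriv negTransition (u x) • v x = 0) :
    ∃ c, ∀ᵐ x, negTransition (u x) = c := by
  obtain ⟨M, hM, hderiv⟩ := exists_abs_deriv_negTransition_le
  have hloc : LocallyIntegrable (fun x => negTransition (u x)) volume :=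
    (locallyIntegrable_const (1 : ℝ)).mono
      (contDiff_negTransition.continuous.comp_aestronglyMeasurable hu.aestronglyMeasurable)
      (Eventually.of_forall fun x => by simpa using abs_negTransition_le_one (u x))
  exact exists_ae_eq_const_of_isDistribGradOn_zero hloc <|
    (isDistribGradOn_comp isOpen_univ hu hv huv contDiff_negTransition hasDerivAt_negTransition
      (fun t => (abs_negTransition_le_one t).trans hM) hderiv).congr_ae hzero

lemma ae_nonneg_of_negTransition_eq_const (hu : LocallyIntegrable u volume) {c : ℝ}
    (hc : ∀ᵐ x, negTransition (u x) = c) {y : Euc n} {t : ℝ} (ht : HasTraceAt u y t)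
    (ht_nonneg : 0 ≤ t) : ∀ᵐ x, 0 ≤ u x := by
  rcases le_or_gt c 0 with hc_nonpos | hc_pos
  · filter_upwards [hc] with x hx
    by_contra! hneg
    exact (negTransition_pos hneg).not_ge (hx ▸ hc_nonpos)
  · have hlim : Tendsto negTransition (𝓝[<] 0) (𝓝 0) := by
      simpa [negTransition_eq_zero le_rfl] using
        (contDiff_negTransition.continuous.tendsto 0).mono_left nhdsWithin_le_nhds
    obtain ⟨s, hs_lt, hs_neg⟩ := ((hlim.eventually_lt_const hc_pos).and self_mem_nhdsWithin).exists
    have hle : ∀ᵐ x, u x ≤ s := by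
      filter_upwards [hc] with x hx
      by_contra! hlt
      exact (hx ▸ antitone_negTransition hlt.le).not_gt hs_lt
    exact absurd (ht.le_of_ae_le hu hle) (not_le.2 (lt_of_lt_of_le hs_neg ht_nonneg))

end MaximumPrinciple

/-- the maximum principle for supersolutions with nonnegative trace. -/
theorem statement11 (n : ℕ) (hn : 2 ≤ n) (d C₀ C₁ : ℝ) (hd0 : 0 < d)
    (hdn : d < (n : ℝ) - 1) (hC₀ : 1 ≤ C₀) (hC₁ : 1 ≤ C₁)
    (Γ : Set (Euc n)) (hne : Γ.Nonempty) (hcl : IsClosed Γ)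
    (hAR : AhlforsRegular n d C₀ Γ)
    (A : Euc n → Euc n →L[ℝ] Euc n) (hAm : AEStronglyMeasurable A volume)
    (hell : EllipticOn n d Γ A C₁)
    (u : Euc n → ℝ) (v : Euc n → Euc n) (hW : MemW n d Γ u v)
    (hloc : LocallyIntegrable u volume)
    (hsuper : SupersolOn Γ A v Γᶜ)
    (htrace : ∀ᵐ x ∂(μH[d].restrict Γ), ∃ t : ℝ, 0 ≤ t ∧ HasTraceAt u x t) :
    ∀ᵐ x ∂(volume.restrict Γᶜ), 0 ≤ u x := by
  have hd : d + 1 < n := by linarith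
  have hC₀_pos : 0 < C₀ := one_pos.trans_le hC₀
  have hvol := hAR.volume_eq_zero (by linarith)
  have hv := (hW.locallyMemLp_gradient hd.le hne hcl hvol).mono_exponent one_le_two
  have huv : IsDistribGradOn u v univ := isDistribGradOn_univ_of_compl hne hcl hvol
    (hAR.locallyMemLp_inv_infDist (by lia) hd0.le hd hC₀_pos hne hcl) hloc hv hW.isGrad
  obtain ⟨M, hM, hderiv⟩ := exists_abs_deriv_negTransition_le
  have hHardy := hAR.integrable_weightW_mul_sq_of_trace (by lia) hd hC₀_pos hne hcl hloc hW huv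
    (contDiff_negTransition.continuous.comp_aestronglyMeasurable hloc.aestronglyMeasurable)
    (zero_le_one.trans hM)
    (htrace.mono fun y ⟨t, ht_nonneg, ht⟩ =>
      ⟨t, ht, fun x => abs_negTransition_le_mul_abs_sub hderiv ht_nonneg⟩)
  have hzero := hsuper.ae_deriv_comp_smul_eq_zero hell (one_pos.trans_le hC₁) hd.le hne hcl hvol
    hAm hloc hW contDiff_negTransition hasDerivAt_negTransition negTransition_nonneg
    (fun _ => antitone_negTransition.deriv_nonpos)
    (fun t => (abs_negTransition_le_one t).trans hM) hderiv hHardy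
  obtain ⟨c, hc⟩ := exists_ae_negTransition_eq_const hloc hv huv hzero
  have := ae_neBot.2 (hAR.surfaceMeasure_ne_zero hC₀_pos hne)
  obtain ⟨y, t, ht_nonneg, ht⟩ := htrace.exists
  exact ae_restrict_of_ae (ae_nonneg_of_negTransition_eq_const hloc hc ht ht_nonneg)
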